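/- Let a ∈ X, let f, g : 𝔹 → ℂ be holomorphic, F(x) = a + f(x)·x and G(x) = a + g(x)·x for x ∈ 𝔹. Assume F is biholomorphic on 𝔹 and G is subordinate to F, and let P_s(x) = (1/s!)·DˢG(0)(x,…,x) for s ≥ 1. Then for every x with ‖x‖ = r ≤ 3 − 2√2, Σ_{s≥1} ‖P_s(x)‖ ≤ dist(F(0), ∂F(𝔹)), where dist(F(0), ∂F(𝔹)) is the distance from F(0) to the boundary of the image F(𝔹). -/

import Mathlib

open Metric Set

noncomputable section

/-- A holomorphic map is biholomorphic on an open set `s` if it is holomorphic and injective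
on `s` and admits a holomorphic inverse on the image `f '' s`. -/
def IsBiholoOn {E₁ E₂ : Type*} [NormedAddCommGroup E₁] [NormedSpace ℂ E₁]
    [NormedAddCommGroup E₂] [NormedSpace ℂ E₂] (f : E₁ → E₂) (s : Set E₁) : Prop :=
  DifferentiableOn ℂ f s ∧ Set.InjOn f s ∧
    ∃ g : E₂ → E₁, DifferentiableOn ℂ g (f '' s) ∧ ∀ x ∈ s, g (f x) = x

/-- `G` is subordinate to `F` on the unit ball if `G = F ∘ W` for some Schwarz mapping `W`,
i.e. a holomorphic self-map of the ball fixing the origin. -/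
def Subordinate {X : Type*} [NormedAddCommGroup X] [NormedSpace ℂ X]
    (G F : X → X) : Prop :=
  ∃ W : X → X, DifferentiableOn ℂ W (ball (0 : X) 1) ∧
    Set.MapsTo W (ball (0 : X) 1) (ball (0 : X) 1) ∧ W 0 = 0 ∧
    ∀ x ∈ ball (0 : X) 1, G x = F (W x)

section BohrHelpers
open MeasureTheory ComplexConjugate

lemma rect_green (V : ℝ × ℝ → ℂ) (a b : ℝ × ℝ) (hab : a ≤ b)
    (hV : ∀ p ∈ Icc a b, ContDiffAt ℝ 2 V p) :
    (∫ p in Icc a b, 2 * (conj (fderiv ℝ V p (1,0)) * fderiv ℝ V p (0,1)).im) =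
      (((∫ x in a.1..b.1, -(conj (V (x, b.2)) * fderiv ℝ V (x, b.2) (1,0)).im)
        - ∫ x in a.1..b.1, -(conj (V (x, a.2)) * fderiv ℝ V (x, a.2) (1,0)).im) +
        ∫ y in a.2..b.2, (conj (V (b.1, y)) * fderiv ℝ V (b.1, y) (0,1)).im) -
        ∫ y in a.2..b.2, (conj (V (a.1, y)) * fderiv ℝ V (a.1, y) (0,1)).im := by
  set f : ℝ × ℝ → ℝ := fun p => (conj (V p) * fderiv ℝ V p (0,1)).im with hf
  set g : ℝ × ℝ → ℝ := fun p => -(conj (V p) * fderiv ℝ V p (1,0)).im with hg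
  have hfd : ∀ p ∈ Icc a b, ∀ v : ℝ × ℝ, HasFDerivAt (fun q => (conj (V q) * fderiv ℝ V q v).im)
      (Complex.imCLM.comp ((conj (V p)) • ((ContinuousLinearMap.apply ℝ ℂ v).comp (fderiv ℝ (fderiv ℝ V) p))
        + (fderiv ℝ V p v) • ((Complex.conjCLE : ℂ →L[ℝ] ℂ).comp (fderiv ℝ V p)))) p := by
    intro p hp v
    have h2 := hV p hp
    have hd : HasFDerivAt V (fderiv ℝ V p) p := (h2.differentiableAt (by norm_num)).hasFDerivAt
    have h1 : ContDiffAt ℝ 1 (fderiv ℝ V) p := h2.fderiv_right (by norm_num)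
    have hd1 : HasFDerivAt (fderiv ℝ V) (fderiv ℝ (fderiv ℝ V) p) p :=
      (h1.differentiableAt (by norm_num)).hasFDerivAt
    have hc : HasFDerivAt (fun q => conj (V q)) ((Complex.conjCLE : ℂ →L[ℝ] ℂ).comp (fderiv ℝ V p)) p :=
      (Complex.conjCLE : ℂ →L[ℝ] ℂ).hasFDerivAt.comp p hd
    have he : HasFDerivAt (fun q => fderiv ℝ V q v)
       ((ContinuousLinearMap.apply ℝ ℂ v).comp (fderiv ℝ (fderiv ℝ V) p)) p :=
      (ContinuousLinearMap.apply ℝ ℂ v).hasFDerivAt.comp p hd1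
    exact Complex.imCLM.hasFDerivAt.comp p (hc.mul he)
  have key := integral_divergence_prod_Icc_of_hasFDerivAt_of_le f g
    (fun p => fderiv ℝ f p) (fun p => fderiv ℝ g p) a b hab
    (fun p hp => (hfd p hp (0,1)).continuousAt.continuousWithinAt)
    (fun p hp => (hfd p hp (1,0)).neg.continuousAt.continuousWithinAt)
    (fun p hp => by
      have hp' : p ∈ Icc a b := ⟨⟨hp.1.1.le, hp.2.1.le⟩, ⟨hp.1.2.le, hp.2.2.le⟩⟩
      exact (hfd p hp' (0,1)).differentiableAt.hasFDerivAt)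
    (fun p hp => by
      have hp' : p ∈ Icc a b := ⟨⟨hp.1.1.le, hp.2.1.le⟩, ⟨hp.1.2.le, hp.2.2.le⟩⟩
      exact (hfd p hp' (1,0)).neg.differentiableAt.hasFDerivAt)
  have hval : ∀ p ∈ Icc a b, fderiv ℝ f p (1,0) + fderiv ℝ g p (0,1) =
      2 * (conj (fderiv ℝ V p (1,0)) * fderiv ℝ V p (0,1)).im := by
    intro p hp
    have hsym : fderiv ℝ (fderiv ℝ V) p (1,0) (0,1) = fderiv ℝ (fderiv ℝ V) p (0,1) (1,0) :=
      ((hV p hp).isSymmSndFDerivAt (by simp)) (1,0) (0,1)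
    have hg' : HasFDerivAt g _ p := (hfd p hp (1,0)).neg
    rw [(hfd p hp (0,1)).fderiv, hg'.fderiv]
    simp [hsym]
    ring
  have hcont : ContinuousOn (fun p => 2 * (conj (fderiv ℝ V p (1,0)) * fderiv ℝ V p (0,1)).im) (Icc a b) := by
    have h1 : ContinuousOn (fderiv ℝ V) (Icc a b) := fun p hp => 
      ((hV p hp).fderiv_right (m := 1) (by norm_num)).continuousAt.continuousWithinAt
    have h2 : ∀ v, ContinuousOn (fun p => fderiv ℝ V p v) (Icc a b) := fun v => h1.clm_apply continuousOn_const
    exact continuousOn_const.mul (Complex.continuous_im.comp_continuousOn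
      ((Complex.continuous_conj.comp_continuousOn (h2 _)).mul (h2 _)))
  have hI : IntegrableOn (fun p => fderiv ℝ f p (1,0) + fderiv ℝ g p (0,1)) (Icc a b) :=
    (hcont.integrableOn_compact isCompact_Icc).congr_fun (fun p hp => (hval p hp).symm) measurableSet_Icc
  rw [← setIntegral_congr_fun measurableSet_Icc hval, key hI]


def Jac (U : ℂ → ℂ) (z : ℂ) : ℝ := (conj (fderiv ℝ U z 1) * fderiv ℝ U z Complex.I).im

lemma jac_scale (L : ℂ →L[ℝ] ℂ) (c d : ℂ) :
    (conj (L c) * L d).im = (conj c * d).im * (conj (L 1) * L Complex.I).im := by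
  have h : ∀ c : ℂ, L c = c.re * L 1 + c.im * L Complex.I := by
    intro c
    have : c = c.re • (1:ℂ) + c.im • Complex.I := by simp
    conv_lhs => rw [this]
    rw [map_add, map_smul, map_smul]; simp
  rw [h c, h d]
  simp
  ring

lemma disc_green (U : ℂ → ℂ) (R : ℝ) (hR : 0 < R)
    (hU : ∀ z ∈ closedBall (0:ℂ) R, ContDiffAt ℝ 2 U z) :
    (∫ z in ball (0:ℂ) R, 2 * Jac U z) =
      ∫ θ in (-Real.pi)..Real.pi, (conj (U (circleMap 0 R θ)) *
        fderiv ℝ U (circleMap 0 R θ) (circleMap 0 R θ * Complex.I)).im := by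
  set m : ℝ × ℝ → ℂ := fun p => circleMap 0 p.1 p.2 with hm
  have hmC : ContDiff ℝ 2 m := by
    have : m = fun p : ℝ × ℝ => (p.1 : ℂ) * Complex.exp (p.2 * Complex.I) := by
      ext p; simp [hm, circleMap]
    rw [this]
    have h1 : ContDiff ℝ 2 (fun p : ℝ × ℝ => (p.1 : ℂ)) := Complex.ofRealCLM.contDiff.comp contDiff_fst
    have h2 : ContDiff ℝ 2 (fun p : ℝ × ℝ => (p.2 : ℂ)) := Complex.ofRealCLM.contDiff.comp contDiff_snd
    exact h1.mul (h2.mul contDiff_const).cexp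
  have hm1 : ∀ p, fderiv ℝ m p (1,0) = Complex.exp (p.2 * Complex.I) := by
    intro p
    have h1 : HasDerivAt (fun t : ℝ => m (p + t • ((1,0):ℝ × ℝ))) (fderiv ℝ m p (1,0)) 0 := by
      have := (hmC.differentiable (by norm_num) p).hasFDerivAt.hasLineDerivAt (1,0)
      exact this
    have h2 : HasDerivAt (fun t : ℝ => m (p + t • ((1,0):ℝ × ℝ))) (Complex.exp (p.2 * Complex.I)) 0 := by
      have h3 : HasDerivAt (fun t : ℝ => ((p.1 + t : ℝ):ℂ)) (1:ℂ) 0 := by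
        have := ((hasDerivAt_id (0:ℝ)).const_add p.1).ofReal_comp
        simpa using this
      have := h3.mul_const (Complex.exp (p.2 * Complex.I))
      simpa [hm, circleMap] using this
    exact h1.unique h2
  have hm2 : ∀ p, fderiv ℝ m p (0,1) = m p * Complex.I := by
    intro p
    have h1 : HasDerivAt (fun t : ℝ => m (p + t • ((0,1):ℝ × ℝ))) (fderiv ℝ m p (0,1)) 0 :=
      (hmC.differentiable (by norm_num) p).hasFDerivAt.hasLineDerivAt (0,1)
    have h2 : HasDerivAt (fun t : ℝ => m (p + t • ((0,1):ℝ × ℝ))) (m p * Complex.I) 0 := by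
      have h4 : HasDerivAt (circleMap 0 p.1) (circleMap 0 p.1 p.2 * Complex.I) (p.2 + 0) := by
        simpa using hasDerivAt_circleMap 0 p.1 p.2
      have := HasDerivAt.scomp (0:ℝ) h4 ((hasDerivAt_id (0:ℝ)).const_add p.2)
      simpa [hm, Function.comp_def] using this
    exact h1.unique h2
  have hpi := Real.pi_pos
  have hmem : ∀ p ∈ Icc ((0:ℝ), -Real.pi) (R, Real.pi), m p ∈ closedBall (0:ℂ) R := by
    intro p hp
    have h0 : 0 ≤ p.1 := hp.1.1
    have h1 : p.1 ≤ R := hp.2.1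
    simp [hm, abs_of_nonneg h0, h1]
  have hfd : ∀ p, m p ∈ closedBall (0:ℂ) R → fderiv ℝ (U ∘ m) p = (fderiv ℝ U (m p)).comp (fderiv ℝ m p) := by
    intro p hp
    exact fderiv_comp p ((hU _ hp).differentiableAt (by norm_num)) (hmC.differentiable (by norm_num) p)
  have key := rect_green (U ∘ m) (0, -Real.pi) (R, Real.pi) ⟨hR.le, by simp; linarith⟩
    (fun p hp => (hU _ (hmem p hp)).comp p hmC.contDiffAt)
  simp only at key
  have e1 : ∀ x, m (x, Real.pi) = m (x, -Real.pi) := by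
    intro x
    simp only [hm]
    have := periodic_circleMap 0 x (-Real.pi)
    rw [← this]; congr 1; ring
  have e2 : (∫ x in (0:ℝ)..R, -(conj ((U ∘ m) (x, Real.pi)) * fderiv ℝ (U ∘ m) (x, Real.pi) (1,0)).im)
      = ∫ x in (0:ℝ)..R, -(conj ((U ∘ m) (x, -Real.pi)) * fderiv ℝ (U ∘ m) (x, -Real.pi) (1,0)).im := by
    apply intervalIntegral.integral_congr
    intro x hx
    rw [uIcc_of_le hR.le] at hx
    have hx1 := hmem (x, Real.pi) ⟨⟨hx.1, by simp; linarith⟩, ⟨hx.2, by simp⟩⟩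
    have hx2 := hmem (x, -Real.pi) ⟨⟨hx.1, by simp⟩, ⟨hx.2, by simp; linarith⟩⟩
    have hex : Complex.exp ((Real.pi:ℂ) * Complex.I) = Complex.exp (((-Real.pi:ℝ):ℂ) * Complex.I) := by
      push_cast
      rw [Complex.exp_pi_mul_I, neg_mul, Complex.exp_neg, Complex.exp_pi_mul_I]
      norm_num
    simp only [hfd _ hx1, hfd _ hx2, ContinuousLinearMap.comp_apply, Function.comp, hm1, e1, hex]
  have e3 : (∫ y in (-Real.pi)..Real.pi, (conj ((U ∘ m) (0, y)) * fderiv ℝ (U ∘ m) (0, y) (0,1)).im) = 0 := by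
    rw [← intervalIntegral.integral_zero (a := -Real.pi) (b := Real.pi) (μ := volume)]
    apply intervalIntegral.integral_congr
    intro y hy
    have h0 : m (0, y) = 0 := by simp [hm]
    have : m (0, y) ∈ closedBall (0:ℂ) R := by simp [h0, hR.le]
    simp [hfd _ this, hm2, h0]
  have e4 : (∫ y in (-Real.pi)..Real.pi, (conj ((U ∘ m) (R, y)) * fderiv ℝ (U ∘ m) (R, y) (0,1)).im)
     = ∫ θ in (-Real.pi)..Real.pi, (conj (U (circleMap 0 R θ)) *
        fderiv ℝ U (circleMap 0 R θ) (circleMap 0 R θ * Complex.I)).im := by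
    apply intervalIntegral.integral_congr
    intro y hy
    have : m (R, y) ∈ closedBall (0:ℂ) R := by simp [hm, abs_of_pos hR]
    simp [hfd _ this, hm2]
    simp [hm]
  rw [e2, e3, e4, sub_self, zero_add, sub_zero] at key
  rw [← key]
  rw [← integral_indicator measurableSet_ball, ← Complex.integral_comp_polarCoord_symm]
  have hset : (Icc ((0:ℝ), -Real.pi) (R, Real.pi)) =ᵐ[volume] (Ioo (0:ℝ) R ×ˢ Ioo (-Real.pi) Real.pi : Set (ℝ × ℝ)) := by
    rw [Icc_prod_eq]
    exact (Measure.set_prod_ae_eq Ioo_ae_eq_Icc Ioo_ae_eq_Icc).symm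
  rw [setIntegral_congr_set hset]
  have hsub : (Ioo (0:ℝ) R ×ˢ Ioo (-Real.pi) Real.pi : Set (ℝ × ℝ)) ⊆ polarCoord.target := by
    rintro p ⟨h1, h2⟩
    exact ⟨h1.1, h2⟩
  refine (setIntegral_eq_of_subset_of_forall_sdiff_eq_zero (polarCoord.open_target.measurableSet) hsub ?_).trans ?_
  rotate_left
  · apply setIntegral_congr_fun (measurableSet_Ioo.prod measurableSet_Ioo)
    rintro p ⟨h1, h2⟩
    have hmp : Complex.polarCoord.symm p = m p := by
      rw [Complex.polarCoord_symm_apply]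
      simp [hm, circleMap, Complex.exp_mul_I]
    have hb : m p ∈ ball (0:ℂ) R := by
      simp [hm, abs_of_pos h1.1, h1.2]
    simp only [hmp, indicator_of_mem hb, hfd _ (ball_subset_closedBall hb), ContinuousLinearMap.comp_apply,
      hm1, hm2]
    rw [jac_scale, Jac]
    have : (conj (Complex.exp (p.2 * Complex.I)) * (m p * Complex.I)).im = p.1 := by
      have : m p = p.1 * Complex.exp (p.2 * Complex.I) := by simp [hm, circleMap]
      rw [this]
      have h3 : conj (Complex.exp (p.2 * Complex.I)) * Complex.exp (p.2 * Complex.I) = 1 := by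
        rw [← Complex.normSq_eq_conj_mul_self, Complex.normSq_eq_norm_sq, Complex.norm_exp_ofReal_mul_I]; simp
      have h4 : conj (Complex.exp (p.2 * Complex.I)) * (p.1 * Complex.exp (p.2 * Complex.I) * Complex.I)
        = p.1 * Complex.I := by
        linear_combination (p.1 * Complex.I) * h3
      rw [h4]; simp
    rw [this]; simp; ring
  · rintro p ⟨h1, h2⟩
    have h3 : Complex.polarCoord.symm p ∉ ball (0:ℂ) R := by
      intro hb
      apply h2
      rw [mem_ball_zero_iff, Complex.norm_polarCoord_symm, abs_of_pos h1.1] at hb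
      exact ⟨⟨h1.1, hb⟩, h1.2⟩
    simp only [indicator_of_notMem h3, smul_zero]

open Filter Topology in
lemma open_image {g : ℂ → ℂ} (hg : DifferentiableOn ℂ g (ball 0 1)) (hinj : InjOn g (ball 0 1))
    {t : Set ℂ} (ht : t ⊆ ball 0 1) (hto : IsOpen t) : IsOpen (g '' t) := by
  rcases (hg.analyticOnNhd isOpen_ball).is_constant_or_isOpen (convex_ball _ _).isPreconnected with h | h
  · exfalso
    obtain ⟨w, hw⟩ := h
    have h0 : (0:ℂ) ∈ ball (0:ℂ) 1 := by simp
    have h1 : (1/2:ℂ) ∈ ball (0:ℂ) 1 := by simp; norm_num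
    have := hinj h0 h1 (by rw [hw _ h0, hw _ h1])
    norm_num at this
  · exact h t ht hto

lemma det_mul_complex (c : ℂ) : (((ContinuousLinearMap.toSpanSingleton ℂ c).restrictScalars ℝ : ℂ →L[ℝ] ℂ)).det
    = Complex.normSq c := by
  rw [← Algebra.norm_complex_apply, Algebra.norm_apply]
  rw [ContinuousLinearMap.det]
  congr 1
  ext <;> simp [mul_comm]

lemma fderiv_real_of_hasDerivAt {P : ℂ → ℂ} {c w : ℂ} (h : HasDerivAt P c w) (v : ℂ) :
    fderiv ℝ P w v = v * c := by
  have := (h.hasFDerivAt.restrictScalars ℝ).fderiv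
  rw [this]; simp

lemma jac_of_hasDerivAt {P : ℂ → ℂ} {c w : ℂ} (h : HasDerivAt P c w) : Jac P w = Complex.normSq c := by
  rw [Jac, fderiv_real_of_hasDerivAt h, fderiv_real_of_hasDerivAt h]
  simp [Complex.normSq_apply]
  try ring

open Filter Topology in
open scoped Manifold ContDiff in
lemma exists_cutoff {K L : Set ℂ} (hK : IsClosed K) (hL : IsClosed L) (hd : Disjoint K L) :
    ∃ κ : ℂ → ℝ, ContDiff ℝ 2 κ ∧ (∀ w ∈ K, ∀ᶠ x in 𝓝 w, κ x = 0) ∧ (∀ w ∈ L, ∀ᶠ x in 𝓝 w, κ x = 1) := by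
  obtain ⟨f, h0, h1, -⟩ := exists_contMDiffMap_zero_one_nhds_of_isClosed (n := 2) 𝓘(ℝ, ℂ) hK hL hd
  refine ⟨f, f.contMDiff.contDiff, fun w hw => ?_, fun w hw => ?_⟩
  · exact (eventually_nhdsSet_iff_forall.1 h0) w hw
  · exact (eventually_nhdsSet_iff_forall.1 h1) w hw

open Filter Topology in
lemma area_ineq (g : ℂ → ℂ) (hg : DifferentiableOn ℂ g (ball 0 1)) (hinj : InjOn g (ball 0 1))
    (ρ s : ℝ) (hρs : ρ < s) (hρ0 : 0 ≤ ρ) (hs1 : s < 1) (P P' : ℂ → ℂ)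
    (hP : ∀ w ∉ g '' closedBall 0 ρ, HasDerivAt P (P' w) w)
    (hdec : Tendsto (fun w => ‖P w‖ * ‖w‖ * ‖P' w‖) (cocompact ℂ) (𝓝 0)) :
    ∫ θ in (-Real.pi)..Real.pi, (conj (P (g (circleMap 0 s θ))) *
      (P' (g (circleMap 0 s θ)) * deriv g (circleMap 0 s θ) * circleMap 0 s θ)).re ≤ 0 := by
  have hs0 : 0 < s := hρ0.trans_lt hρs
  have hpi := Real.pi_pos
  obtain ⟨ρ2, h1, h2⟩ := exists_between hρs
  have hcb : ∀ {t : ℝ}, t < 1 → closedBall (0:ℂ) t ⊆ ball 0 1 := fun ht => closedBall_subset_ball ht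
  have hKc : IsCompact (g '' closedBall 0 ρ) :=
    (isCompact_closedBall _ _).image_of_continuousOn (hg.continuousOn.mono (hcb (hρs.trans hs1)))
  have hO : ∀ t ≤ 1, IsOpen (g '' ball 0 t) := fun t ht => open_image hg hinj (ball_subset_ball ht) isOpen_ball
  have hO2 := hO ρ2 (by linarith)
  obtain ⟨κ, hκ, hκ0, hκ1⟩ := exists_cutoff hKc.isClosed hO2.isClosed_compl
    (disjoint_compl_right_iff_subset.2 (image_mono (closedBall_subset_ball h1)))
  set U : ℂ → ℂ := fun w => (κ w : ℂ) * P w with hUdef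
  have hUC : ∀ w, ContDiffAt ℝ 2 U w := by
    intro w
    by_cases hw : w ∈ g '' closedBall 0 ρ
    · have : U =ᶠ[𝓝 w] fun _ => 0 := by
        filter_upwards [hκ0 w hw] with x hx
        simp [hUdef, hx]
      exact contDiffAt_const.congr_of_eventuallyEq this
    · have hop : IsOpen (g '' closedBall 0 ρ)ᶜ := hKc.isClosed.isOpen_compl
      have hd : DifferentiableOn ℂ P (g '' closedBall 0 ρ)ᶜ := fun x hx =>
        (hP x hx).differentiableAt.differentiableWithinAt
      have : ContDiffAt ℝ 2 P w := 
        (((hd.contDiffOn (n := 2) hop).contDiffAt (hop.mem_nhds hw)).restrict_scalars ℝ)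
      exact ((Complex.ofRealCLM.contDiff.comp hκ).contDiffAt).mul this
  have hUP : ∀ w ∉ g '' ball 0 ρ2, U =ᶠ[𝓝 w] P := by
    intro w hw
    filter_upwards [hκ1 w hw] with x hx
    simp [hUdef, hx]
  have hsubK : ∀ w ∉ g '' ball 0 ρ2, w ∉ g '' closedBall 0 ρ := fun w hw hw' =>
    hw (image_mono (closedBall_subset_ball h1) hw')
  have hUd : ∀ w ∉ g '' ball 0 ρ2, HasDerivAt U (P' w) w := fun w hw =>
    (hP w (hsubK w hw)).congr_of_eventuallyEq (hUP w hw)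
  have hgd : ∀ z ∈ ball (0:ℂ) 1, HasDerivAt g (deriv g z) z := fun z hz =>
    (hg.differentiableAt (isOpen_ball.mem_nhds hz)).hasDerivAt
  -- the inner disc
  have hgC : ∀ z ∈ ball (0:ℂ) 1, ContDiffAt ℝ 2 g z := fun z hz =>
    ((hg.contDiffOn (n := 2) isOpen_ball).contDiffAt (isOpen_ball.mem_nhds hz)).restrict_scalars ℝ
  have hinner := disc_green (U ∘ g) s hs0
    (fun z hz => (hUC _).comp z (hgC z (hcb hs1 hz)))
  have hjac : ∀ z ∈ ball (0:ℂ) 1, Jac (U ∘ g) z = Complex.normSq (deriv g z) * Jac U (g z) := by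
    intro z hz
    have hf : fderiv ℝ (U ∘ g) z = (fderiv ℝ U (g z)).comp (fderiv ℝ g z) :=
      fderiv_comp z ((hUC _).differentiableAt (by norm_num)) ((hgC z hz).differentiableAt (by norm_num))
    rw [Jac, hf]
    simp only [ContinuousLinearMap.comp_apply, fderiv_real_of_hasDerivAt (hgd z hz)]
    rw [jac_scale, Jac]
    congr 1
    simp [Complex.normSq_apply]
  have hcov : ∫ w in g '' ball 0 s, 2 * Jac U w = ∫ z in ball (0:ℂ) s, 2 * Jac (U ∘ g) z := by
    rw [integral_image_eq_integral_abs_det_fderiv_smul volume measurableSet_ball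
      (fun z hz => ((hgd z (ball_subset_ball hs1.le hz)).hasFDerivAt.restrictScalars ℝ).hasFDerivWithinAt)
      (hinj.mono (ball_subset_ball hs1.le))]
    apply setIntegral_congr_fun measurableSet_ball
    intro z hz
    simp only
    rw [hjac z (ball_subset_ball hs1.le hz), det_mul_complex, abs_of_nonneg (Complex.normSq_nonneg _), smul_eq_mul]
    ring
  have hbd : (∫ θ in (-Real.pi)..Real.pi, (conj ((U ∘ g) (circleMap 0 s θ)) *
        fderiv ℝ (U ∘ g) (circleMap 0 s θ) (circleMap 0 s θ * Complex.I)).im) =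
      ∫ θ in (-Real.pi)..Real.pi, (conj (P (g (circleMap 0 s θ))) *
      (P' (g (circleMap 0 s θ)) * deriv g (circleMap 0 s θ) * circleMap 0 s θ)).re := by
    apply intervalIntegral.integral_congr
    intro θ _
    simp only
    set z := circleMap 0 s θ with hz
    have hzn : ‖z‖ = s := by simp [hz, abs_of_pos hs0]
    have hz1 : z ∈ ball (0:ℂ) 1 := by simp [hzn, hs1]
    have hgz : g z ∉ g '' ball 0 ρ2 := by
      rintro ⟨y, hy, hyz⟩
      have : y = z := hinj (ball_subset_ball (by linarith) hy) hz1 hyz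
      subst this
      rw [mem_ball_zero_iff] at hy; linarith
    have := (hUd _ hgz).comp z (hgd z hz1)
    rw [fderiv_real_of_hasDerivAt this]
    have h3 : (U ∘ g) z = P (g z) := (hUP _ hgz).eq_of_nhds
    rw [h3]
    have : conj (P (g z)) * (z * Complex.I * (P' (g z) * deriv g z)) =
      (conj (P (g z)) * (P' (g z) * deriv g z * z)) * Complex.I := by ring
    rw [this, Complex.mul_I_im]
  rw [← hbd, ← hinner, ← hcov]
  -- the outer disc
  refine le_of_forall_pos_le_add fun ε hε => ?_
  rw [zero_add]
  have hev : ∀ᶠ w in cocompact ℂ, ‖P w‖ * ‖w‖ * ‖P' w‖ ≤ ε / (2 * Real.pi) :=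
    (hdec.eventually (gt_mem_nhds (show 0 < ε / (2 * Real.pi) by positivity))).mono fun _ h => h.le
  have hgs : IsCompact (g '' closedBall 0 s) :=
    (isCompact_closedBall _ _).image_of_continuousOn (hg.continuousOn.mono (hcb hs1))
  obtain ⟨R1, hR1⟩ := (hasBasis_cocompact.eventually_iff.1 hev)
  obtain ⟨R, hR0, hR⟩ := ((hR1.1.union hgs).isBounded).subset_ball_lt 0 0
  have houter := disc_green U R hR0 (fun z _ => hUC z)
  have hJc : Continuous (fun w => 2 * Jac U w) := by
    have hU2 : ContDiff ℝ 2 U := contDiff_iff_contDiffAt.2 hUC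
    have h1 : Continuous (fderiv ℝ U) := hU2.continuous_fderiv (by norm_num)
    unfold Jac
    exact continuous_const.mul (Complex.continuous_im.comp
      ((Complex.continuous_conj.comp (h1.clm_apply continuous_const)).mul (h1.clm_apply continuous_const)))
  have hbound : (∫ θ in (-Real.pi)..Real.pi, (conj (U (circleMap 0 R θ)) *
        fderiv ℝ U (circleMap 0 R θ) (circleMap 0 R θ * Complex.I)).im) ≤ ε := by
    have := intervalIntegral.norm_integral_le_of_norm_le_const (a := -Real.pi) (b := Real.pi) 
      (C := ε / (2 * Real.pi)) (f := fun θ => (conj (U (circleMap 0 R θ)) *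
        fderiv ℝ U (circleMap 0 R θ) (circleMap 0 R θ * Complex.I)).im) ?_
    · refine (le_abs_self _).trans (this.trans (le_of_eq ?_))
      rw [abs_of_pos (by linarith)]
      field_simp
      ring
    · intro θ _
      set z := circleMap 0 R θ with hz
      have hzn : ‖z‖ = R := by simp [hz, abs_of_pos hR0]
      have hzo : z ∉ ball (0:ℂ) R := by simp [hzn]
      have hz2 : z ∉ g '' ball 0 ρ2 := fun h => hzo (hR (Or.inr (image_mono (ball_subset_closedBall.trans (closedBall_subset_closedBall h2.le)) h)))
      have hz3 : z ∈ R1ᶜ := fun h => hzo (hR (Or.inl h))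
      rw [fderiv_real_of_hasDerivAt (hUd z hz2), (hUP z hz2).eq_of_nhds]
      refine (Complex.abs_im_le_norm _).trans (le_trans (le_of_eq ?_) (hR1.2 hz3))
      simp; ring
  have hsplit : ∫ w in ball (0:ℂ) R, 2 * Jac U w = (∫ w in g '' ball 0 s, 2 * Jac U w) +
      ∫ w in ball (0:ℂ) R \ g '' ball 0 s, 2 * Jac U w := by
    have hsub : g '' ball 0 s ⊆ ball 0 R := fun w hw => hR (Or.inr (image_mono ball_subset_closedBall hw))
    have hintg : IntegrableOn (fun w => 2 * Jac U w) (ball 0 R) :=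
      (hJc.continuousOn.integrableOn_compact (isCompact_closedBall 0 R)).mono_set ball_subset_closedBall
    have := integral_inter_add_sdiff (s := ball (0:ℂ) R) (hO s hs1.le).measurableSet hintg
    rw [← this, inter_eq_self_of_subset_right hsub]
  have hnn : 0 ≤ ∫ w in ball (0:ℂ) R \ g '' ball 0 s, 2 * Jac U w := by
    apply setIntegral_nonneg (measurableSet_ball.diff (hO s hs1.le).measurableSet)
    intro w hw
    have : w ∉ g '' ball 0 ρ2 := fun h => hw.2 (image_mono (ball_subset_ball h2.le) h)
    rw [jac_of_hasDerivAt (hUd w this)]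
    have := Complex.normSq_nonneg (P' w)
    linarith
  linarith

def ee (k : ℤ) (θ : ℝ) : ℂ := Complex.exp (k * θ * Complex.I)

lemma ee_cont (k : ℤ) : Continuous (ee k) := by unfold ee; fun_prop

lemma ee_norm (k : ℤ) (θ : ℝ) : ‖ee k θ‖ = 1 := by
  have : ee k θ = Complex.exp (((k * θ : ℝ) : ℂ) * Complex.I) := by simp [ee]
  rw [this, Complex.norm_exp_ofReal_mul_I]

lemma ee_mul (k l : ℤ) (θ : ℝ) : ee k θ * ee l θ = ee (k + l) θ := by
  simp only [ee, ← Complex.exp_add]; push_cast; ring_nf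

lemma ee_conj (k : ℤ) (θ : ℝ) : conj (ee k θ) = ee (-k) θ := by
  simp only [ee, ← Complex.exp_conj]; simp

lemma ee_deriv (k : ℤ) (θ : ℝ) : HasDerivAt (ee k) (k * Complex.I * ee k θ) θ := by
  have h : HasDerivAt (fun θ : ℝ => (k * θ * Complex.I : ℂ)) (k * Complex.I) θ := by
    have := ((Complex.ofRealCLM.hasDerivAt (x := θ)).const_mul (k:ℂ)).mul_const Complex.I
    simpa using this
  have := h.cexp
  rw [mul_comm] at this
  exact this

lemma ee_pi (k : ℤ) : ee k Real.pi = ee k (-Real.pi) := by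
  simp only [ee]
  rw [Complex.exp_eq_exp_iff_exists_int]
  exact ⟨k, by push_cast; ring⟩

lemma ee_int (k : ℤ) : ∫ θ in (-Real.pi)..Real.pi, ee k θ = if k = 0 then (2 * Real.pi : ℂ) else 0 := by
  split_ifs with h
  · subst h
    simp [ee]; ring
  · have h1 : ∀ θ ∈ uIcc (-Real.pi) Real.pi, HasDerivAt (fun θ => ee k θ / (k * Complex.I)) (ee k θ) θ := by
      intro θ _
      have := (ee_deriv k θ).div_const (k * Complex.I)
      have hk : (k : ℂ) ≠ 0 := by exact_mod_cast h
      rwa [mul_div_cancel_left₀ _ (mul_ne_zero hk Complex.I_ne_zero)] at this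
    rw [intervalIntegral.integral_eq_sub_of_hasDerivAt h1 ((ee_cont k).intervalIntegrable _ _), ee_pi, sub_self]

lemma fourier_swap {ι : Type} [Countable ι] (κ : ι → ℤ) (c : ι → ℂ) (hc : Summable fun i => ‖c i‖)
    (F B : ℝ → ℂ) (hF : Continuous F) (hB : ∀ θ, HasSum (fun i => c i * ee (κ i) θ) (B θ)) :
    HasSum (fun i => c i * ∫ θ in (-Real.pi)..Real.pi, F θ * ee (κ i) θ) 
      (∫ θ in (-Real.pi)..Real.pi, F θ * B θ) := by
  have := intervalIntegral.hasSum_integral_of_dominated_convergence (μ := volume) (a := -Real.pi) (b := Real.pi)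
    (F := fun i θ => F θ * (c i * ee (κ i) θ)) (f := fun θ => F θ * B θ)
    (fun i θ => ‖F θ‖ * ‖c i‖)
    (fun i => (hF.mul (continuous_const.mul (ee_cont _))).aestronglyMeasurable)
    (fun i => Filter.Eventually.of_forall fun θ _ => by simp [ee_norm])
    (Filter.Eventually.of_forall fun θ _ => hc.mul_left _)
    (by
      simp_rw [tsum_mul_left]
      exact (hF.norm.mul continuous_const).intervalIntegrable _ _)
    (Filter.Eventually.of_forall fun θ _ => (hB θ).mul_left _)
  refine this.congr_fun fun i => ?_
  rw [← intervalIntegral.integral_const_mul]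
  congr 1; ext θ; ring

lemma area_coeff {ι : Type} [Countable ι] (κ : ι → ℤ) (hκ : Function.Injective κ) (hκ0 : ∀ i, κ i ≠ 0)
    (c : ι → ℂ) (hc : Summable fun i => ‖c i‖)
    (g : ℂ → ℂ) (hg : DifferentiableOn ℂ g (ball 0 1)) (hinj : InjOn g (ball 0 1))
    (ρ s : ℝ) (hρs : ρ < s) (hρ0 : 0 ≤ ρ) (hs1 : s < 1) (P P' : ℂ → ℂ)
    (hP : ∀ w ∉ g '' closedBall 0 ρ, HasDerivAt P (P' w) w)
    (hdec : Filter.Tendsto (fun w => ‖P w‖ * ‖w‖ * ‖P' w‖) (Filter.cocompact ℂ) (nhds 0))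
    (hB : ∀ θ, HasSum (fun i => c i * ee (κ i) θ) 
       (P' (g (circleMap 0 s θ)) * deriv g (circleMap 0 s θ) * circleMap 0 s θ)) :
    ∃ S ≤ (0:ℝ), HasSum (fun i => ‖c i‖^2 / κ i) S := by
  have hs0 : 0 < s := hρ0.trans_lt hρs
  have harea := area_ineq g hg hinj ρ s hρs hρ0 hs1 P P' hP hdec
  set B : ℝ → ℂ := fun θ => P' (g (circleMap 0 s θ)) * deriv g (circleMap 0 s θ) * circleMap 0 s θ with hBdef
  set H : ℝ → ℂ := fun θ => P (g (circleMap 0 s θ)) with hH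
  have hHd : ∀ θ, HasDerivAt H (Complex.I * B θ) θ := by
    intro θ
    have hzn : ‖circleMap 0 s θ‖ = s := by simp [abs_of_pos hs0]
    have hz1 : circleMap 0 s θ ∈ ball (0:ℂ) 1 := by simp [abs_of_pos hs0, hs1]
    have hgz : g (circleMap 0 s θ) ∉ g '' closedBall 0 ρ := by
      rintro ⟨y, hy, hyz⟩
      have : y = circleMap 0 s θ := hinj (closedBall_subset_ball (by linarith) hy) hz1 hyz
      rw [mem_closedBall_zero_iff, this] at hy; linarith
    have h1 := (hP _ hgz).comp (circleMap 0 s θ) (hg.differentiableAt (isOpen_ball.mem_nhds hz1)).hasDerivAt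
    have h2 := HasDerivAt.scomp θ h1 (hasDerivAt_circleMap 0 s θ)
    refine h2.congr_deriv ?_
    simp only [hBdef, smul_eq_mul]; ring
  have hHc : Continuous H := continuous_iff_continuousAt.2 fun θ => (hHd θ).continuousAt
  have hHper : H Real.pi = H (-Real.pi) := by
    simp only [hH]
    have := periodic_circleMap 0 s (-Real.pi)
    rw [← this]; congr 3; ring
  have hBc : Continuous B := by
    have : B = fun θ => ∑' i, c i * ee (κ i) θ := by ext θ; exact (hB θ).tsum_eq.symm
    rw [this]
    exact continuous_tsum (fun i => continuous_const.mul (ee_cont _)) hc (fun i θ => by simp [ee_norm])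
  have hcoef : ∀ i, ∫ θ in (-Real.pi)..Real.pi, ee (-(κ i)) θ * B θ = 2 * Real.pi * c i := by
    intro i
    have := fourier_swap κ c hc (ee (-(κ i))) B (ee_cont _) hB
    rw [← this.tsum_eq, tsum_eq_single i]
    · simp only [ee_mul, ee_int]; simp; ring
    · intro j hj
      have : -κ i + κ j ≠ 0 := fun h => hj (hκ (by omega))
      simp only [ee_mul, ee_int, if_neg this, mul_zero]
  have hHcoef : ∀ i, ∫ θ in (-Real.pi)..Real.pi, ee (-(κ i)) θ * H θ = 2 * Real.pi * c i / κ i := by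
    intro i
    have hk : (κ i : ℂ) ≠ 0 := by exact_mod_cast hκ0 i
    have hd : ∀ θ ∈ uIcc (-Real.pi) Real.pi, HasDerivAt (fun θ => ee (-(κ i)) θ * H θ)
        (Complex.I * (ee (-(κ i)) θ * B θ) - κ i * Complex.I * (ee (-(κ i)) θ * H θ)) θ := by
      intro θ _
      refine ((ee_deriv (-(κ i)) θ).mul (hHd θ)).congr_deriv ?_
      push_cast; ring
    have c1 : Continuous fun θ => ee (-(κ i)) θ * B θ := (ee_cont _).mul hBc
    have c2 : Continuous fun θ => ee (-(κ i)) θ * H θ := (ee_cont _).mul hHc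
    have := intervalIntegral.integral_eq_sub_of_hasDerivAt hd
      (((continuous_const.mul c1).sub (continuous_const.mul c2)).intervalIntegrable _ _)
    have i1 : IntervalIntegrable (fun θ => Complex.I * (ee (-(κ i)) θ * B θ)) volume (-Real.pi) Real.pi :=
      (continuous_const.mul c1).intervalIntegrable _ _
    have i2 : IntervalIntegrable (fun θ => κ i * Complex.I * (ee (-(κ i)) θ * H θ)) volume (-Real.pi) Real.pi :=
      (continuous_const.mul c2).intervalIntegrable _ _
    rw [hHper, ee_pi, sub_self, intervalIntegral.integral_sub i1 i2, intervalIntegral.integral_const_mul,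
      intervalIntegral.integral_const_mul, hcoef] at this
    rw [eq_div_iff hk]
    apply mul_left_cancel₀ Complex.I_ne_zero
    linear_combination -this
  have hfin := fourier_swap κ c hc (fun θ => conj (H θ)) B (Complex.continuous_conj.comp hHc) hB
  have hterm : ∀ i, c i * ∫ θ in (-Real.pi)..Real.pi, conj (H θ) * ee (κ i) θ = 
     ((2 * Real.pi * (‖c i‖^2 / κ i) : ℝ) : ℂ) := by
    intro i
    have : (∫ θ in (-Real.pi)..Real.pi, conj (H θ) * ee (κ i) θ) = conj (∫ θ in (-Real.pi)..Real.pi, ee (-(κ i)) θ * H θ) := by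
      rw [← intervalIntegral.intervalIntegral_conj]
      congr 1; ext θ
      rw [map_mul, ee_conj, neg_neg, mul_comm]
    rw [this, hHcoef]
    have h2 : c i * conj (c i) = ((‖c i‖^2 : ℝ) : ℂ) := by rw [Complex.mul_conj, Complex.normSq_eq_norm_sq]
    simp only [map_mul, map_div₀, Complex.conj_ofReal, map_ofNat, map_intCast]
    push_cast at h2 ⊢
    rw [← h2]; ring
  simp_rw [hterm] at hfin
  have hre := (Complex.reCLM.hasSum hfin)
  have hval : Complex.reCLM (∫ θ in (-Real.pi)..Real.pi, conj (H θ) * B θ) = 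
      ∫ θ in (-Real.pi)..Real.pi, (conj (H θ) * B θ).re := by
    have := Complex.reCLM.intervalIntegral_comp_comm (μ := volume) (((Complex.continuous_conj.comp hHc).mul hBc).intervalIntegrable (-Real.pi) Real.pi)
    exact this.symm
  rw [hval] at hre
  have hpi := Real.pi_pos
  refine ⟨(2 * Real.pi)⁻¹ * ∫ θ in (-Real.pi)..Real.pi, (conj (H θ) * B θ).re, ?_, ?_⟩
  · exact mul_nonpos_of_nonneg_of_nonpos (by positivity) harea
  · refine (hre.mul_left (2 * Real.pi)⁻¹).congr_fun ?_
    intro i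
    simp only [Function.comp, Complex.reCLM_apply, Complex.ofReal_re]
    field_simp

def tc (h : ℂ → ℂ) (n : ℕ) : ℂ := (n.factorial : ℂ)⁻¹ * iteratedDeriv n h 0

lemma tc_hasSum {h : ℂ → ℂ} (hh : DifferentiableOn ℂ h (ball 0 1)) {z : ℂ} (hz : z ∈ ball (0:ℂ) 1) :
    HasSum (fun n => tc h n * z ^ n) (h z) := by
  have := Complex.hasSum_taylorSeries_on_ball (r := 1) (c := 0) (f := h) (by simpa using hh) (z := z) (by simpa using hz)
  refine this.congr_fun ?_
  intro n
  simp [tc]; ring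

lemma tc_summable {h : ℂ → ℂ} (hh : DifferentiableOn ℂ h (ball 0 1)) {r : ℝ} (hr : 0 ≤ r) (hr1 : r < 1) :
    Summable (fun n => ‖tc h n‖ * r ^ n) := by
  have := (tc_hasSum hh (z := (r:ℂ)) (by simp [abs_of_nonneg hr, hr1])).summable.norm
  refine this.congr ?_
  intro n
  simp [abs_of_nonneg hr]

lemma tc_unique {h : ℂ → ℂ} {c : ℕ → ℂ} {δ : ℝ} (hδ : 0 < δ)
    (hc : ∀ z ∈ ball (0:ℂ) δ, HasSum (fun n => c n * z ^ n) (h z)) (n : ℕ) : tc h n = c n := by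
  have hfp : HasFPowerSeriesAt h (FormalMultilinearSeries.ofScalars ℂ c) 0 := by
    set δ' : NNReal := ⟨δ/2, by positivity⟩ with hδ'
    have hδ2 : (δ' : ℝ) = δ/2 := rfl
    refine ⟨δ', ?_, ?_, ?_⟩
    · apply FormalMultilinearSeries.le_radius_of_summable_norm
      have := (hc (δ/2 : ℝ) (by simp [abs_of_pos hδ, hδ])).summable.norm
      refine this.congr ?_
      intro n
      simp [FormalMultilinearSeries.ofScalars_norm, hδ2, abs_of_pos hδ]
    · simp [← NNReal.coe_pos, hδ2, hδ]
    · intro y hy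
      have hy' : y ∈ ball (0:ℂ) δ := by
        rw [Metric.eball_coe] at hy
        simp only [mem_ball, dist_zero_right] at hy ⊢
        linarith
      simpa [FormalMultilinearSeries.ofScalars_apply_eq, zero_add, mul_comm] using hc y hy'
  have := hfp.eq_formalMultilinearSeries (p₂ := FormalMultilinearSeries.ofScalars ℂ (tc h)) ?_
  · exact (congrFun ((FormalMultilinearSeries.ofScalars_series_injective ℂ ℂ) this) n).symm
  · have := hfp.analyticAt.hasFPowerSeriesAt
    have e : (tc h) = fun n : ℕ => iteratedDeriv n h 0 / (n.factorial : ℂ) := by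
      ext n; simp [tc, div_eq_inv_mul]
    rw [e]; exact this

lemma tc_congr {h k : ℂ → ℂ} (hh : DifferentiableOn ℂ h (ball 0 1)) (e : ∀ z ∈ ball (0:ℂ) 1, h z = k z) (n : ℕ) :
    tc k n = tc h n :=
  tc_unique one_pos (fun z hz => by rw [← e z hz]; exact tc_hasSum hh hz) n

lemma tc_zero (h : ℂ → ℂ) : tc h 0 = h 0 := by simp [tc]

lemma diff_deriv {h : ℂ → ℂ} (hh : DifferentiableOn ℂ h (ball 0 1)) : DifferentiableOn ℂ (deriv h) (ball 0 1) :=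
  hh.deriv isOpen_ball

lemma tc_one (h : ℂ → ℂ) : tc h 1 = deriv h 0 := by simp [tc]

lemma tc_deriv_coeff (h : ℂ → ℂ) (n : ℕ) : tc (deriv h) n = (n+1) * tc h (n+1) := by
  unfold tc
  rw [← iteratedDeriv_succ', Nat.factorial_succ]
  push_cast
  have : (n.factorial : ℂ) ≠ 0 := by exact_mod_cast n.factorial_ne_zero
  have : (n + 1 : ℂ) ≠ 0 := by exact_mod_cast n.succ_ne_zero
  field_simp

lemma tc_deriv {h : ℂ → ℂ} (hh : DifferentiableOn ℂ h (ball 0 1)) {z : ℂ} (hz : z ∈ ball (0:ℂ) 1) :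
    HasSum (fun n : ℕ => n * tc h n * z ^ n) (z * deriv h z) := by
  have := (tc_hasSum (diff_deriv hh) hz).mul_left z
  rw [← hasSum_nat_add_iff' 1]
  simp only [Finset.range_one, Finset.sum_singleton, Nat.cast_zero, zero_mul, sub_zero]
  refine this.congr_fun ?_
  intro n
  rw [tc_deriv_coeff]; push_cast; ring

lemma tc_mul {h k : ℂ → ℂ} (hh : DifferentiableOn ℂ h (ball 0 1)) (hk : DifferentiableOn ℂ k (ball 0 1)) (n : ℕ) :
    tc (fun z => h z * k z) n = ∑ p ∈ Finset.HasAntidiagonal.antidiagonal n, tc h p.1 * tc k p.2 := by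
  refine tc_unique (c := fun n => ∑ p ∈ Finset.HasAntidiagonal.antidiagonal n, tc h p.1 * tc k p.2) one_pos ?_ n
  intro z hz
  have h1 := tc_hasSum hh hz
  have h2 := tc_hasSum hk hz
  have := (summable_norm_sum_mul_antidiagonal_of_summable_norm h1.summable.norm h2.summable.norm).of_norm.hasSum
  rw [← tsum_mul_tsum_eq_tsum_sum_antidiagonal_of_summable_norm h1.summable.norm h2.summable.norm, h1.tsum_eq, h2.tsum_eq] at this
  refine this.congr_fun ?_
  intro n
  rw [Finset.sum_mul]
  refine Finset.sum_congr rfl ?_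
  intro p hp
  rw [← Finset.HasAntidiagonal.mem_antidiagonal.mp hp]; ring

lemma log_lemma {h : ℂ → ℂ} (hh : DifferentiableOn ℂ h (ball 0 1)) (h0 : ∀ z ∈ ball (0:ℂ) 1, h z ≠ 0) :
    ∃ q : ℂ → ℂ, DifferentiableOn ℂ q (ball 0 1) ∧ q 0 = 0 ∧ ∀ z ∈ ball (0:ℂ) 1, h z = h 0 * Complex.exp (q z) := by
  have hd : DifferentiableOn ℂ (fun z => deriv h z / h z) (ball 0 1) := (diff_deriv hh).div hh h0
  obtain ⟨q, hq0, hq⟩ := hd.isExactOn_ball.with_val_at 0 0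
  refine ⟨q, fun z hz => (hq z hz).differentiableAt.differentiableWithinAt, hq0, ?_⟩
  have hder : ∀ z ∈ ball (0:ℂ) 1, HasDerivAt (fun z => h z * Complex.exp (- q z)) 0 z := by
    intro z hz
    have h1 := (hh.differentiableAt (isOpen_ball.mem_nhds hz)).hasDerivAt
    have := h1.mul ((hq z hz).neg.cexp)
    refine this.congr_deriv ?_
    field_simp [h0 z hz]
    simp
  have hconst := fun (x y : ℂ) (hx : x ∈ ball (0:ℂ) 1) (hy : y ∈ ball (0:ℂ) 1) => isOpen_ball.is_const_of_deriv_eq_zero (convex_ball (0:ℂ) 1).isPreconnected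
    (f := fun z => h z * Complex.exp (- q z)) (fun z hz => (hder z hz).differentiableAt.differentiableWithinAt)
    (fun z hz => (hder z hz).deriv) hx hy
  intro z hz
  have := hconst z 0 hz (by simp)
  simp only [hq0, neg_zero, Complex.exp_zero, mul_one] at this
  rw [← this, mul_assoc, ← Complex.exp_add]; simp

structure Gam (γ : ℂ → ℂ) : Prop where
  diff : DifferentiableOn ℂ γ (ball 0 1)
  one : γ 0 = 1
  ne : ∀ z ∈ ball (0:ℂ) 1, γ z ≠ 0
  inj : InjOn (fun z => z * γ z ^ 2) (ball 0 1)

def RR (γ : ℂ → ℂ) (x : ℂ) : ℂ := - dslope (fun z => (γ z)⁻¹) 0 x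

lemma Gam.invdiff {γ : ℂ → ℂ} (h : Gam γ) : DifferentiableOn ℂ (fun z => (γ z)⁻¹) (ball 0 1) :=
  h.diff.inv h.ne

lemma Gam.Rdiff {γ : ℂ → ℂ} (h : Gam γ) : DifferentiableOn ℂ (RR γ) (ball 0 1) := by
  unfold RR
  exact ((Complex.differentiableOn_dslope (isOpen_ball.mem_nhds (by simp))).2 h.invdiff).neg

lemma Gam.Req {γ : ℂ → ℂ} (h : Gam γ) (x : ℂ) : (γ x)⁻¹ = 1 - x * RR γ x := by
  have := sub_smul_dslope (fun z => (γ z)⁻¹) 0 x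
  simp only [sub_zero, smul_eq_mul, h.one, inv_one] at this
  unfold RR
  linear_combination -this

lemma sq_mem {z : ℂ} (hz : z ∈ ball (0:ℂ) 1) : z ^ 2 ∈ ball (0:ℂ) 1 := by
  simp only [mem_ball, dist_zero_right, norm_pow] at hz ⊢
  nlinarith [norm_nonneg z]

def gg (γ : ℂ → ℂ) (t : ℂ) : ℂ := t * γ (t ^ 2)

lemma Gam.gdiff {γ : ℂ → ℂ} (h : Gam γ) : DifferentiableOn ℂ (gg γ) (ball 0 1) := by
  unfold gg
  refine differentiableOn_id.mul (h.diff.comp (t := ball 0 1) (by fun_prop) ?_)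
  intro z hz; exact sq_mem hz

lemma Gam.ginj {γ : ℂ → ℂ} (h : Gam γ) : InjOn (gg γ) (ball 0 1) := by
  intro z hz w hw e
  unfold gg at e
  have e2 : z ^ 2 = w ^ 2 := by
    apply h.inj (sq_mem hz) (sq_mem hw)
    simp only
    linear_combination (z * γ (z^2) + w * γ (w^2)) * e
  rw [e2] at e
  exact mul_right_cancel₀ (h.ne _ (sq_mem hw)) e

lemma gg_zero (γ : ℂ → ℂ) : gg γ 0 = 0 := by simp [gg]

lemma Gam.gne {γ : ℂ → ℂ} (h : Gam γ) {z : ℂ} (hz : z ∈ ball (0:ℂ) 1) (h0 : z ≠ 0) : gg γ z ≠ 0 :=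
  mul_ne_zero h0 (h.ne _ (sq_mem hz))

lemma Gam.ginv {γ : ℂ → ℂ} (h : Gam γ) {z : ℂ} (h0 : z ≠ 0) : (gg γ z)⁻¹ = z⁻¹ - z * RR γ (z^2) := by
  unfold gg
  rw [mul_inv, h.Req]
  field_simp

lemma Gam.ginv_deriv {γ : ℂ → ℂ} (h : Gam γ) {z : ℂ} (hz : z ∈ ball (0:ℂ) 1) (h0 : z ≠ 0) :
    -(gg γ z ^ 2)⁻¹ * deriv (gg γ) z * z = - z⁻¹ - z * (RR γ (z^2) + 2 * (z^2 * deriv (RR γ) (z^2))) := by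
  have h1 := (h.gdiff.differentiableAt (isOpen_ball.mem_nhds hz)).hasDerivAt.inv (h.gne hz h0)
  have h2 := (h.Rdiff.differentiableAt (isOpen_ball.mem_nhds (sq_mem hz))).hasDerivAt
  have h3 := HasDerivAt.comp (h₂ := RR γ) z h2 (hasDerivAt_pow 2 z)
  have h4 := (hasDerivAt_inv h0).sub ((hasDerivAt_id z).mul h3)
  have h5 : (gg γ)⁻¹ =ᶠ[nhds z] ((fun z => z⁻¹) - (id * (RR γ ∘ fun x => x ^ 2))) := by
    filter_upwards [isOpen_ne.mem_nhds h0] with w hw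
    simpa using h.ginv hw
  have h6 := h1.unique (h4.congr_of_eventuallyEq h5)
  have h7 : -(gg γ z ^ 2)⁻¹ * deriv (gg γ) z * z = z * (-deriv (gg γ) z / gg γ z ^ 2) := by ring
  rw [h7, h6]
  simp
  field_simp

lemma lim_one {N : ℕ} (a : ℕ → ℝ) (e : ℕ → ℕ) (K : ℝ → ℝ) (hK : ContinuousAt K 1) {s0 : ℝ} (hs0 : s0 < 1)
    (H : ∀ s ∈ Ioo s0 1, ∑ j ∈ Finset.range N, a j * s ^ (e j) ≤ K s) : ∑ j ∈ Finset.range N, a j ≤ K 1 := by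
  have hc : ContinuousAt (fun s : ℝ => ∑ j ∈ Finset.range N, a j * s ^ (e j)) 1 := by fun_prop
  have h1 := hc.tendsto.mono_left (nhdsWithin_le_nhds (s := Iio 1))
  have h2 := hK.tendsto.mono_left (nhdsWithin_le_nhds (s := Iio 1))
  have := le_of_tendsto_of_tendsto h1 h2 (by filter_upwards [Ioo_mem_nhdsLT hs0] with s hs using H s hs)
  simpa using this

lemma circ_pow (s θ : ℝ) (n : ℕ) : circleMap 0 s θ ^ n = (s:ℂ) ^ n * ee n θ := by
  simp only [circleMap, zero_add, mul_pow, ee, ← Complex.exp_nat_mul]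
  push_cast; ring_nf

lemma circ_inv (s θ : ℝ) (n : ℕ) : (circleMap 0 s θ ^ n)⁻¹ = ((s:ℂ) ^ n)⁻¹ * ee (-n) θ := by
  simp only [circleMap, zero_add, mul_pow, ee, ← Complex.exp_nat_mul, mul_inv, ← Complex.exp_neg]
  push_cast; ring_nf

lemma odd_hasSum {h : ℂ → ℂ} (hh : DifferentiableOn ℂ h (ball 0 1)) {z : ℂ} (hz : z ∈ ball (0:ℂ) 1) :
    HasSum (fun j : ℕ => ((2 * j + 1 : ℕ) : ℂ) * tc h j * z ^ (2 * j + 1)) (z * (h (z^2) + 2 * (z^2 * deriv h (z^2)))) := by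
  have h1 := (tc_hasSum hh (sq_mem hz)).add ((tc_deriv hh (sq_mem hz)).mul_left 2)
  refine (h1.mul_left z).congr_fun ?_
  intro j
  push_cast; ring

lemma circ_mem {s : ℝ} (hs : 0 ≤ s) (hs1 : s < 1) (θ : ℝ) : circleMap 0 s θ ∈ ball (0:ℂ) 1 := by
  simp [abs_of_nonneg hs, hs1]

lemma Gam.area_a {γ : ℂ → ℂ} (h : Gam γ) (N : ℕ) :
    ∑ j ∈ Finset.range N, (2 * j + 1) * ‖tc (RR γ) j‖ ^ 2 ≤ 1 := by
  have key : ∀ s ∈ Ioo (0:ℝ) 1, ∑ j ∈ Finset.range N, ((2 * j + 1) * ‖tc (RR γ) j‖ ^ 2) * s ^ (4 * j + 2) ≤ (s^2)⁻¹ := by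
    rintro s ⟨hs, hs1⟩
    have hsum := fun θ => odd_hasSum h.Rdiff (circ_mem hs.le hs1 θ)
    obtain ⟨S, hS0, hS⟩ := area_coeff (ι := Unit ⊕ ℕ) (Sum.elim (fun _ => -1) (fun j => ((2 * j + 1 : ℕ) : ℤ)))
      (by
        rintro (a | a) (b | b) e <;> simp at e ⊢ <;> omega)
      (by rintro (a | a) <;> simp; omega)
      (Sum.elim (fun _ => -(s:ℂ)⁻¹) (fun j => - (((2 * j + 1 : ℕ) : ℂ) * tc (RR γ) j * (s:ℂ) ^ (2 * j + 1))))
      (by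
        have := (hsum 0).summable.norm
        refine Summable.sum _ ?_ ?_
        · exact (hasSum_fintype _).summable
        · refine this.congr ?_
          intro j
          simp [circleMap])
      (gg γ) h.gdiff h.ginj (s/2) s (by linarith) (by linarith) hs1 (fun w => w⁻¹) (fun w => -(w^2)⁻¹)
      (by
        intro w hw
        apply hasDerivAt_inv
        rintro rfl
        exact hw ⟨0, by simp; linarith, gg_zero γ⟩)
      (by
        have h1 : Filter.Tendsto (fun w : ℂ => (‖w‖⁻¹)^2) (Filter.cocompact ℂ) (nhds 0) := by
          have := (tendsto_inv_atTop_zero.comp (tendsto_norm_cocompact_atTop (E := ℂ))).pow 2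
          simpa [Function.comp_def] using this
        refine h1.congr ?_
        intro w
        by_cases hw : w = 0
        · simp [hw]
        · have : ‖w‖ ≠ 0 := by simpa using hw
          simp; field_simp)
      (by
        intro θ
        have hz0 : circleMap 0 s θ ≠ 0 := by simp [circleMap, hs.ne']
        rw [h.ginv_deriv (circ_mem hs.le hs1 θ) hz0]
        rw [sub_eq_add_neg]
        refine HasSum.sum ?_ ?_
        · have e := circ_inv s θ 1
          simp only [pow_one] at e
          rw [e]
          have := hasSum_fintype (fun u : Unit => -((s:ℂ)⁻¹ * ee (-1) θ))
          simpa [Function.comp_def] using this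
        · refine (hsum θ).neg.congr_fun ?_
          intro j
          rw [circ_pow]
          simp; ring)
    have hSr := hS.summable.comp_injective Sum.inr_injective
    have hSl : HasSum ((fun i => ‖(Sum.elim (fun _ => -(s:ℂ)⁻¹) (fun j => - (((2 * j + 1 : ℕ) : ℂ) * tc (RR γ) j * (s:ℂ) ^ (2 * j + 1))) : Unit ⊕ ℕ → ℂ) i‖ ^ 2 / ((Sum.elim (fun _ => -1) (fun j => ((2 * j + 1 : ℕ) : ℤ)) : Unit ⊕ ℕ → ℤ) i : ℝ)) ∘ Sum.inl) (-(s^2)⁻¹) := by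
      have hl := hasSum_fintype (fun u : Unit => (s^2)⁻¹ / (-1:ℝ))
      have e2 : ∑ u : Unit, (s^2)⁻¹ / (-1:ℝ) = -(s^2)⁻¹ := by simp [div_neg]
      rw [e2] at hl
      refine hl.congr_fun ?_
      intro u
      simp
    have htot := hS.unique (HasSum.sum hSl hSr.hasSum)
    have hle := hSr.sum_le_tsum (Finset.range N) (by
      intro i _
      simp only [Function.comp, Sum.elim_inr]
      positivity)
    have hterm : ∑ j ∈ Finset.range N, ((2 * j + 1) * ‖tc (RR γ) j‖ ^ 2) * s ^ (4 * j + 2) = ∑ i ∈ Finset.range N, ((fun i => ‖(Sum.elim (fun _ => -(s:ℂ)⁻¹) (fun j => - (((2 * j + 1 : ℕ) : ℂ) * tc (RR γ) j * (s:ℂ) ^ (2 * j + 1))) : Unit ⊕ ℕ → ℂ) i‖ ^ 2 / ((Sum.elim (fun _ => -1) (fun j => ((2 * j + 1 : ℕ) : ℤ)) : Unit ⊕ ℕ → ℤ) i : ℝ)) ∘ Sum.inr) i := by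
      refine Finset.sum_congr rfl ?_
      intro j _
      simp only [Function.comp, Sum.elim_inr, norm_neg, norm_mul, norm_pow, Complex.norm_real, Real.norm_eq_abs, abs_of_pos hs, Complex.norm_natCast]
      have : (2 * (j:ℝ) + 1) ≠ 0 := by positivity
      push_cast
      field_simp
      ring
    rw [hterm]
    linarith
  have := lim_one _ _ (fun s => (s^2)⁻¹) (ContinuousAt.inv₀ (by fun_prop) (by norm_num)) zero_lt_one key
  simpa using this

lemma seg_mem {τ : ℂ} {u : ℝ} (hu : u ∈ Icc (-1:ℝ) 1) : (u:ℂ) * τ ∈ closedBall (0:ℂ) ‖τ‖ := by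
  simp only [mem_closedBall, dist_zero_right, norm_mul, Complex.norm_real, Real.norm_eq_abs]
  have := abs_le.2 hu
  nlinarith [norm_nonneg τ]

lemma prim_exists {g : ℂ → ℂ} (hg : DifferentiableOn ℂ g (ball 0 1)) {τ : ℂ} (hτ : τ ∈ ball (0:ℂ) 1) :
    ∃ P : ℂ → ℂ, (∀ w ∉ g '' closedBall 0 ‖τ‖, HasDerivAt P ((w - g τ)⁻¹ - (w - g (-τ))⁻¹) w) ∧
      ∃ C M : ℝ, ∀ w, M ≤ ‖w‖ → ‖P w‖ ≤ C := by
  have hτ1 : ‖τ‖ < 1 := by simpa using hτ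
  set K := g '' closedBall 0 ‖τ‖ with hK
  have hsub : closedBall (0:ℂ) ‖τ‖ ⊆ ball 0 1 := closedBall_subset_ball hτ1
  have hKc : IsCompact K := (isCompact_closedBall _ _).image_of_continuousOn (hg.continuousOn.mono hsub)
  have huI : uIcc (-1:ℝ) 1 = Icc (-1) 1 := uIcc_of_le (by norm_num)
  have hline : ContinuousOn (fun u : ℝ => (u:ℂ) * τ) (Icc (-1) 1) := by fun_prop
  have hgc : ContinuousOn (fun u : ℝ => g (u * τ)) (Icc (-1) 1) :=
    (hg.continuousOn.mono hsub).comp hline (fun u hu => seg_mem hu)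
  have hdc : ContinuousOn (fun u : ℝ => τ * deriv g (u * τ)) (Icc (-1) 1) :=
    continuousOn_const.mul (((diff_deriv hg).continuousOn.mono hsub).comp hline (fun u hu => seg_mem hu))
  obtain ⟨B, hB⟩ := isCompact_Icc.exists_bound_of_continuousOn hdc
  have hB0 : 0 ≤ B := (norm_nonneg _).trans (hB 0 (by norm_num))
  obtain ⟨M, hM⟩ := hKc.isBounded.exists_norm_le
  have hmemK : ∀ u ∈ Icc (-1:ℝ) 1, g (u * τ) ∈ K := fun u hu => ⟨_, seg_mem hu, rfl⟩
  refine ⟨fun w => - ∫ u in (-1:ℝ)..1, τ * deriv g (u * τ) * (w - g (u * τ))⁻¹, ?_, B * 2, M + 1, ?_⟩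
  · intro w hw
    have hδ : 0 < infDist w K := by
      rw [← hKc.isClosed.notMem_iff_infDist_pos]
      · exact hw
      · exact ⟨_, hmemK 0 (by norm_num)⟩
    set δ := infDist w K with hδd
    have hfar : ∀ w' ∈ ball w (δ/2), ∀ u ∈ Icc (-1:ℝ) 1, δ/2 ≤ ‖w' - g (u * τ)‖ := by
      intro w' hw' u hu
      have h1 : δ ≤ dist w (g (u*τ)) := infDist_le_dist_of_mem (hmemK u hu)
      have h2 : dist w' w < δ/2 := hw'
      have h3 := dist_triangle w w' (g (u*τ))
      rw [dist_comm w w', dist_eq_norm w' (g _)] at h3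
      linarith
    have hne : ∀ w' ∈ ball w (δ/2), ∀ u ∈ Icc (-1:ℝ) 1, w' - g (u * τ) ≠ 0 := by
      intro w' hw' u hu h0
      have := hfar w' hw' u hu
      rw [h0, norm_zero] at this; linarith
    have hc1 : ∀ w' ∈ ball w (δ/2), ContinuousOn (fun u : ℝ => τ * deriv g (u * τ) * (w' - g (u * τ))⁻¹) (Icc (-1) 1) :=
      fun w' hw' => hdc.mul ((continuousOn_const.sub hgc).inv₀ (hne w' hw'))
    have hww : w ∈ ball w (δ/2) := mem_ball_self (by linarith)
    have hc2 : ContinuousOn (fun u : ℝ => τ * deriv g (u * τ) * (-((w - g (u * τ))^2)⁻¹)) (Icc (-1) 1) :=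
      hdc.mul (((continuousOn_const.sub hgc).pow 2).inv₀ (fun u hu => pow_ne_zero 2 (hne w hww u hu))).neg
    have hmeas : ∀ f : ℝ → ℂ, ContinuousOn f (Icc (-1) 1) → AEStronglyMeasurable f (volume.restrict (uIoc (-1:ℝ) 1)) := by
      intro f hf
      rw [uIoc_of_le (by norm_num)]
      exact (hf.mono Ioc_subset_Icc_self).aestronglyMeasurable measurableSet_Ioc
    have hIoc : ∀ u ∈ uIoc (-1:ℝ) 1, u ∈ Icc (-1:ℝ) 1 := by
      intro u hu; rw [uIoc_of_le (by norm_num)] at hu; exact Ioc_subset_Icc_self hu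
    have main := intervalIntegral.hasDerivAt_integral_of_dominated_loc_of_deriv_le (μ := volume) (a := -1) (b := 1)
      (F := fun w (u:ℝ) => τ * deriv g (u * τ) * (w - g (u * τ))⁻¹)
      (F' := fun w (u:ℝ) => τ * deriv g (u * τ) * (-((w - g (u * τ))^2)⁻¹)) (x₀ := w) (s := ball w (δ/2))
      (bound := fun _ => B * (((δ/2)^2)⁻¹)) (ball_mem_nhds w (by linarith))
      (by filter_upwards [ball_mem_nhds w (half_pos hδ)] with w' hw' using hmeas _ (hc1 w' hw'))
      (by apply ContinuousOn.intervalIntegrable; rw [huI]; exact hc1 w hww)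
      (hmeas _ hc2)
      (by
        refine Filter.Eventually.of_forall ?_
        intro u hu w' hw'
        have hu := hIoc u hu
        rw [norm_mul, norm_neg, norm_inv, norm_pow]
        gcongr
        · exact hB u hu
        · exact hfar w' hw' u hu)
      (by simp)
      (by
        refine Filter.Eventually.of_forall ?_
        intro u hu w' hw'
        have hu := hIoc u hu
        have := ((hasDerivAt_id w').sub_const (g (u*τ))).inv (hne w' hw' u hu)
        refine (this.const_mul (τ * deriv g (u * τ))).congr_deriv ?_
        simp [div_eq_mul_inv])
    refine main.2.neg.congr_deriv ?_
    have hftc := intervalIntegral.integral_eq_sub_of_hasDerivAt (a := -1) (b := 1)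
      (f := fun u : ℝ => (w - g (u * τ))⁻¹) (f' := fun u : ℝ => - (τ * deriv g (u * τ) * (-((w - g (u * τ))^2)⁻¹)))
      (by
        intro u hu
        rw [huI] at hu
        have h1 := (hg.differentiableAt (isOpen_ball.mem_nhds (hsub (seg_mem (τ := τ) hu)))).hasDerivAt
        have h2 : HasDerivAt (fun u : ℝ => (u:ℂ) * τ) τ u := by
          simpa using (Complex.ofRealCLM.hasDerivAt (x := u)).mul_const τ
        have h3 := HasDerivAt.comp_of_eq u h1 h2 rfl
        have h4 := (h3.const_sub w).inv (hne w hww u hu)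
        refine h4.congr_deriv ?_
        simp only [Function.comp, div_eq_mul_inv]; ring)
      (by apply ContinuousOn.intervalIntegrable; rw [huI]; exact hc2.neg)
    rw [intervalIntegral.integral_neg] at hftc
    rw [hftc]; simp
  · intro w hw
    rw [norm_neg]
    have := intervalIntegral.norm_integral_le_of_norm_le_const (a := -1) (b := 1) (C := B)
      (f := fun u : ℝ => τ * deriv g (u * τ) * (w - g (u * τ))⁻¹) ?_
    · refine this.trans (le_of_eq ?_); norm_num
    · intro u hu
      rw [uIoc_of_le (by norm_num)] at hu
      have hu := Ioc_subset_Icc_self hu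
      have h1 := hM _ (hmemK u hu)
      have h2 : 1 ≤ ‖w - g (u * τ)‖ := by
        have := norm_sub_norm_le w (g (u*τ)); linarith
      rw [norm_mul, norm_inv]
      calc _ ≤ B * 1 := by
            gcongr
            · exact hB u hu
            · exact inv_le_one_of_one_le₀ h2
        _ = B := mul_one B

structure Gam2 (γ : ℂ → ℂ) : Prop extends Gam γ where
  dne : ∀ z ∈ ball (0:ℂ) 1, deriv (fun z => z * γ z ^ 2) z ≠ 0

lemma Gam2.gdne {γ : ℂ → ℂ} (h : Gam2 γ) {z : ℂ} (hz : z ∈ ball (0:ℂ) 1) : deriv (gg γ) z ≠ 0 := by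
  by_cases h0 : z = 0
  · subst h0
    have h1 := (h.diff.differentiableAt (isOpen_ball.mem_nhds (by simp : (0:ℂ)^2 ∈ ball (0:ℂ) 1))).hasDerivAt
    have h3 := HasDerivAt.comp (h₂ := γ) 0 h1 (hasDerivAt_pow 2 (0:ℂ))
    have h4 : HasDerivAt (gg γ) _ 0 := (hasDerivAt_id (0:ℂ)).mul h3
    rw [h4.deriv]; simp [h.one]
  · have h1 := (h.gdiff.differentiableAt (isOpen_ball.mem_nhds hz)).hasDerivAt.pow 2
    have hd : DifferentiableOn ℂ (fun z => z * γ z ^ 2) (ball 0 1) := differentiableOn_id.mul (h.diff.pow 2)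
    have h2 := (hd.differentiableAt (isOpen_ball.mem_nhds (sq_mem hz))).hasDerivAt
    have h3 := HasDerivAt.comp (h₂ := fun z => z * γ z ^ 2) z h2 (hasDerivAt_pow 2 z)
    have e : (gg γ) ^ 2 = (fun z => z * γ z ^ 2) ∘ fun z => z ^ 2 := by
      ext w; simp [gg]; ring
    rw [e] at h1
    have h5 := h1.unique h3
    intro h6
    rw [h6] at h5
    have := h.dne _ (sq_mem hz)
    simp at h5
    tauto

lemma Gam2.ds_ne {γ : ℂ → ℂ} (h : Gam2 γ) {z τ : ℂ} (hz : z ∈ ball (0:ℂ) 1) (hτ : τ ∈ ball (0:ℂ) 1) :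
    dslope (gg γ) τ z ≠ 0 := by
  by_cases e : z = τ
  · subst e; rw [dslope_same]; exact h.gdne hz
  · intro h0
    have := sub_smul_dslope (gg γ) τ z
    rw [h0, smul_zero] at this
    exact e (h.ginj hz hτ (sub_eq_zero.1 this.symm))

lemma Gam.ds_diff {γ : ℂ → ℂ} (h : Gam γ) {τ : ℂ} (hτ : τ ∈ ball (0:ℂ) 1) :
    DifferentiableOn ℂ (dslope (gg γ) τ) (ball 0 1) :=
  (Complex.differentiableOn_dslope (isOpen_ball.mem_nhds hτ)).2 h.gdiff

lemma gg_neg (γ : ℂ → ℂ) (t : ℂ) : gg γ (-t) = - gg γ t := by simp [gg]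

lemma decay_lemma {P : ℂ → ℂ} {C M : ℝ} (hC : ∀ w, M ≤ ‖w‖ → ‖P w‖ ≤ C) (b : ℂ) :
    Filter.Tendsto (fun w => ‖P w‖ * ‖w‖ * ‖(w - b)⁻¹ - (w - -b)⁻¹‖) (Filter.cocompact ℂ) (nhds 0) := by
  have hn := tendsto_norm_cocompact_atTop (E := ℂ)
  have h1 : Filter.Tendsto (fun w : ℂ => |C| * (8 * ‖b‖) * ‖w‖⁻¹) (Filter.cocompact ℂ) (nhds 0) := by
    have := (tendsto_inv_atTop_zero.comp hn).const_mul (|C| * (8 * ‖b‖))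
    simpa using this
  refine squeeze_zero' (Filter.Eventually.of_forall fun w => by positivity) ?_ h1
  filter_upwards [hn.eventually_ge_atTop M, hn.eventually_ge_atTop (2 * ‖b‖ + 1)] with w h2 h3
  have hb := norm_nonneg b
  have h4 : ‖w‖ / 2 ≤ ‖w - b‖ := by have := norm_sub_norm_le w b; linarith
  have h5 : ‖w‖ / 2 ≤ ‖w - -b‖ := by have := norm_sub_norm_le w (-b); rw [norm_neg] at this; linarith
  have hw0 : 0 < ‖w‖ := by linarith
  have n1 : w - b ≠ 0 := by rw [← norm_pos_iff]; linarith
  have n2 : w - -b ≠ 0 := by rw [← norm_pos_iff]; linarith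
  have e : (w - b)⁻¹ - (w - -b)⁻¹ = 2 * b * ((w - b)⁻¹ * (w - -b)⁻¹) := by field_simp; ring
  rw [e, norm_mul, norm_mul, norm_mul, norm_inv, norm_inv]
  calc ‖P w‖ * ‖w‖ * (‖(2:ℂ)‖ * ‖b‖ * (‖w - b‖⁻¹ * ‖w - -b‖⁻¹)) ≤ |C| * ‖w‖ * (2 * ‖b‖ * ((‖w‖/2)⁻¹ * (‖w‖/2)⁻¹)) := by
        gcongr
        · exact (hC w h2).trans (le_abs_self C)
        · simp
    _ = _ := by field_simp; ring

lemma geo_odd {y : ℂ} (hy : ‖y‖ < 1) : HasSum (fun m : ℕ => 2 * y ^ (2 * m + 1)) (2 * y * (1 - y^2)⁻¹) := by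
  have : ‖y^2‖ < 1 := by rw [norm_pow]; nlinarith [norm_nonneg y]
  refine ((hasSum_geometric_of_norm_lt_one this).mul_left (2 * y)).congr_fun ?_
  intro m; ring

/-- coefficient bound for the logarithm of the symmetric quotient -/
lemma Gam2.area_b {γ : ℂ → ℂ} (h : Gam2 γ) {τ : ℂ} (hτ : τ ∈ ball (0:ℂ) 1) {q : ℂ → ℂ}
    (hq : DifferentiableOn ℂ q (ball 0 1))
    (hqe : ∀ z ∈ ball (0:ℂ) 1, dslope (gg γ) τ z = dslope (gg γ) (-τ) z * Complex.exp (q z)) (N : ℕ) :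
    ∑ j ∈ Finset.range N, (j + 1) * ‖tc q (j + 1)‖ ^ 2 ≤ 2 * (Real.log (1 + ‖τ‖^2) - Real.log (1 - ‖τ‖^2)) := by
  have hτ1 : ‖τ‖ < 1 := by simpa using hτ
  have hτn : -τ ∈ ball (0:ℂ) 1 := by simpa using hτ
  have key : ∀ s ∈ Ioo ‖τ‖ 1, ∑ j ∈ Finset.range N, ((j + 1) * ‖tc q (j + 1)‖ ^ 2) * s ^ (2 * (j + 1)) ≤
      2 * (Real.log (1 + (‖τ‖/s)^2) - Real.log (1 - (‖τ‖/s)^2)) := by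
    rintro s ⟨hsτ, hs1⟩
    have hs : 0 < s := (norm_nonneg τ).trans_lt hsτ
    have hy : ∀ θ, ‖τ / circleMap 0 s θ‖ < 1 := by
      intro θ
      rw [norm_div, norm_circleMap_zero, abs_of_pos hs, div_lt_one hs]; exact hsτ
    have hsumn := fun θ => geo_odd (hy θ)
    have hsump : ∀ θ, HasSum (fun n : ℕ => ((n + 1 : ℕ) : ℂ) * tc q (n+1) * circleMap 0 s θ ^ (n+1)) (circleMap 0 s θ * deriv q (circleMap 0 s θ)) := by
      intro θ
      have := (hasSum_nat_add_iff' 1).2 (tc_deriv hq (circ_mem hs.le hs1 θ))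
      simpa using this
    obtain ⟨P, hP, C, M, hCM⟩ := prim_exists h.gdiff hτ
    have hdec := decay_lemma hCM (gg γ τ)
    rw [gg_neg] at hP
    set cc : ℕ ⊕ ℕ → ℂ := Sum.elim (fun m => 2 * τ ^ (2 * m + 1) * ((s:ℂ) ^ (2 * m + 1))⁻¹) (fun n => ((n + 1 : ℕ) : ℂ) * tc q (n+1) * (s:ℂ) ^ (n + 1)) with hcc
    set kk : ℕ ⊕ ℕ → ℤ := Sum.elim (fun m => -((2 * m + 1 : ℕ) : ℤ)) (fun n => ((n + 1 : ℕ) : ℤ)) with hkk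
    obtain ⟨S, hS0, hS⟩ := area_coeff (ι := ℕ ⊕ ℕ) kk
      (by
        rintro (a | a) (b | b) e <;> simp [hkk] at e ⊢ <;> omega)
      (by rintro (a | a) <;> simp [hkk] <;> omega) cc
      (by
        refine Summable.sum _ ?_ ?_
        · refine (hsumn 0).summable.norm.congr ?_
          intro j
          simp [circleMap, hcc, div_pow]; ring
        · refine (hsump 0).summable.norm.congr ?_
          intro j
          simp [circleMap, hcc])
      (gg γ) h.gdiff h.ginj ‖τ‖ s hsτ (norm_nonneg τ) hs1 P (fun w => (w - gg γ τ)⁻¹ - (w - -gg γ τ)⁻¹) hP hdec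
      (by
        intro θ
        set z := circleMap 0 s θ with hz
        have hzb : z ∈ ball (0:ℂ) 1 := circ_mem hs.le hs1 θ
        have hzn : ‖z‖ = s := by rw [hz, norm_circleMap_zero, abs_of_pos hs]
        have hz0 : z ≠ 0 := by rw [← norm_pos_iff, hzn]; exact hs
        have n1 : z - τ ≠ 0 := by
          intro e; rw [sub_eq_zero.1 e] at hzn; linarith
        have n2 : z + τ ≠ 0 := by
          intro e; rw [eq_neg_of_add_eq_zero_left e, norm_neg] at hzn; linarith
        have hA := sub_smul_dslope (gg γ) τ
        have hB := sub_smul_dslope (gg γ) (-τ)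
        simp only [gg_neg, sub_neg_eq_add, smul_eq_mul] at hA hB
        have dA := ((h.ds_diff hτ).differentiableAt (isOpen_ball.mem_nhds hzb)).hasDerivAt
        have dB := ((h.ds_diff hτn).differentiableAt (isOpen_ball.mem_nhds hzb)).hasDerivAt
        have dq := (hq.differentiableAt (isOpen_ball.mem_nhds hzb)).hasDerivAt
        have dg := (h.gdiff.differentiableAt (isOpen_ball.mem_nhds hzb)).hasDerivAt
        have A0 := h.ds_ne hzb hτ
        have B0 := h.ds_ne hzb hτn
        have e1 : deriv (gg γ) z = dslope (gg γ) τ z + (z - τ) * deriv (dslope (gg γ) τ) z := by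
          have t1 := ((hasDerivAt_id z).sub_const τ).mul dA
          have t2 := dg.sub_const (gg γ τ)
          have t3 := t2.unique (t1.congr_of_eventuallyEq (Filter.Eventually.of_forall fun w => by simp [← hA w]))
          rw [t3]; simp
        have e2 : deriv (gg γ) z = dslope (gg γ) (-τ) z + (z + τ) * deriv (dslope (gg γ) (-τ)) z := by
          have t1 := ((hasDerivAt_id z).add_const τ).mul dB
          have t2 := dg.add_const (gg γ τ)
          have t3 := t2.unique (t1.congr_of_eventuallyEq (Filter.Eventually.of_forall fun w => by simp [← hB w]))
          rw [t3]; simp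
        have e3 : deriv (dslope (gg γ) τ) z * dslope (gg γ) (-τ) z = deriv (dslope (gg γ) (-τ)) z * dslope (gg γ) τ z + dslope (gg γ) (-τ) z * dslope (gg γ) τ z * deriv q z := by
          have t1 := dB.mul dq.cexp
          have t3 := dA.unique (t1.congr_of_eventuallyEq (by
            filter_upwards [isOpen_ball.mem_nhds hzb] with w hw
            simp [hqe w hw]))
          rw [t3, hqe z hzb]; ring
        have tot : ((gg γ z - gg γ τ)⁻¹ - (gg γ z - -gg γ τ)⁻¹) * deriv (gg γ) z * z = 2 * (τ / z) * (1 - (τ/z)^2)⁻¹ + z * deriv q z := by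
          rw [sub_neg_eq_add, ← hA z, ← hB z]
          set A := dslope (gg γ) τ z
          set B := dslope (gg γ) (-τ) z
          set A' := deriv (dslope (gg γ) τ) z
          set B' := deriv (dslope (gg γ) (-τ)) z
          have u1 : ((z - τ) * A)⁻¹ * deriv (gg γ) z = (z - τ)⁻¹ + A' / A := by
            rw [e1]; field_simp
          have u2 : ((z + τ) * B)⁻¹ * deriv (gg γ) z = (z + τ)⁻¹ + B' / B := by
            rw [e2]; field_simp
          have u3 : A' / A - B' / B = deriv q z := by
            field_simp
            linear_combination e3
          have n3 : z ^ 2 - τ ^ 2 ≠ 0 := by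
            have : z ^ 2 - τ ^ 2 = (z - τ) * (z + τ) := by ring
            rw [this]; exact mul_ne_zero n1 n2
          have u4 : 2 * (τ / z) * (1 - (τ/z)^2)⁻¹ = z * ((z - τ)⁻¹ - (z + τ)⁻¹) := by
            have : 1 - (τ/z)^2 = (z - τ) * (z + τ) / z^2 := by field_simp; ring
            rw [this]; field_simp; ring
          rw [u4]
          linear_combination z * u1 - z * u2 + z * u3
        rw [tot]
        refine HasSum.sum ?_ ?_
        · refine (hsumn θ).congr_fun ?_
          intro m
          have := circ_inv s θ (2 * m + 1)
          simp only [Function.comp, hcc, hkk, Sum.elim_inl]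
          rw [div_pow, div_eq_mul_inv, this]; ring
        · refine (hsump θ).congr_fun ?_
          intro j
          have := circ_pow s θ (j + 1)
          simp only [Function.comp, hcc, hkk, Sum.elim_inr]
          rw [this]; ring)
    have hSr := hS.summable.comp_injective Sum.inr_injective
    have hSl : HasSum ((fun i => ‖cc i‖ ^ 2 / (kk i : ℝ)) ∘ Sum.inl) (-(2 * (Real.log (1 + (‖τ‖/s)^2) - Real.log (1 - (‖τ‖/s)^2)))) := by
      have hx : |(‖τ‖/s)^2| < 1 := by
        rw [abs_of_nonneg (by positivity)]
        have : ‖τ‖/s < 1 := (div_lt_one hs).2 hsτ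
        have : 0 ≤ ‖τ‖/s := by positivity
        nlinarith
      refine ((Real.hasSum_log_sub_log_of_abs_lt_one hx).mul_left 2).neg.congr_fun ?_
      intro m
      simp only [Function.comp, hcc, hkk, Sum.elim_inl, norm_mul, norm_pow, norm_inv, Complex.norm_real, Real.norm_eq_abs, abs_of_pos hs]
      push_cast
      simp only [Complex.norm_ofNat]
      rw [div_pow, div_pow, div_neg]
      field_simp
      ring
    have htot := hS.unique (HasSum.sum hSl hSr.hasSum)
    have hle := hSr.sum_le_tsum (Finset.range N) (by
      intro i _
      simp only [Function.comp, hcc, hkk, Sum.elim_inr]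
      positivity)
    have hterm : ∑ j ∈ Finset.range N, ((j + 1) * ‖tc q (j + 1)‖ ^ 2) * s ^ (2 * (j + 1)) = ∑ i ∈ Finset.range N, ((fun i => ‖cc i‖ ^ 2 / (kk i : ℝ)) ∘ Sum.inr) i := by
      refine Finset.sum_congr rfl ?_
      intro j _
      simp only [Function.comp, hcc, hkk, Sum.elim_inr, norm_mul, norm_pow, Complex.norm_real, Real.norm_eq_abs, abs_of_pos hs, Complex.norm_natCast]
      have : ((j:ℝ) + 1) ≠ 0 := by positivity
      push_cast
      field_simp
      ring
    rw [hterm]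
    linarith
  have hp : 1 - (‖τ‖/1)^2 ≠ 0 := by
    rw [div_one]
    nlinarith [norm_nonneg τ]
  have hp2 : 1 + (‖τ‖/1)^2 ≠ 0 := by positivity
  have := lim_one _ _ (fun s => 2 * (Real.log (1 + (‖τ‖/s)^2) - Real.log (1 - (‖τ‖/s)^2))) (by
    have hd : ContinuousAt (fun s : ℝ => ‖τ‖/s) 1 := continuousAt_const.div continuousAt_id one_ne_zero
    exact continuousAt_const.mul (((continuousAt_const.add (hd.pow 2)).log hp2).sub ((continuousAt_const.sub (hd.pow 2)).log hp))) hτ1 key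
  simpa using this

lemma odd_sum_le (a : ℕ → ℝ) (ha : ∀ n, 0 ≤ a n) (N : ℕ) :
    ∑ m ∈ Finset.range N, a (2 * m) ≤ ∑ j ∈ Finset.range (2 * N), a j := by
  induction N with
  | zero => simp
  | succ n ih =>
    rw [Finset.sum_range_succ, show 2 * (n + 1) = 2 * n + 1 + 1 by ring, Finset.sum_range_succ, Finset.sum_range_succ]
    linarith [ha (2 * n + 1)]

lemma odd_part_sum (q : ℕ → ℂ) (t : ℂ) (N : ℕ) :
    ∑ n ∈ Finset.range (2 * N), (q n * t ^ n - q n * (-t) ^ n) = ∑ m ∈ Finset.range N, 2 * (q (2 * m + 1) * t ^ (2 * m + 1)) := by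
  induction N with
  | zero => simp
  | succ n ih =>
    rw [Finset.sum_range_succ, show 2 * (n + 1) = 2 * n + 1 + 1 by ring, Finset.sum_range_succ, Finset.sum_range_succ, ih,
      Even.neg_pow ⟨n, by ring⟩, Odd.neg_pow ⟨n, by ring⟩]
    ring

lemma odd_part_bound {q : ℂ → ℂ} (hq : DifferentiableOn ℂ q (ball 0 1)) {t : ℂ} (ht : t ∈ ball (0:ℂ) 1) {L : ℝ}
    (hL : L = Real.log (1 + ‖t‖^2) - Real.log (1 - ‖t‖^2))
    (hb : ∀ N, ∑ j ∈ Finset.range N, (j + 1) * ‖tc q (j + 1)‖ ^ 2 ≤ 2 * L) : ‖q t - q (-t)‖ ≤ 2 * L := by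
  have ht1 : ‖t‖ < 1 := by simpa using ht
  have htn : -t ∈ ball (0:ℂ) 1 := by simpa using ht
  have hx : |‖t‖^2| < 1 := by
    rw [abs_of_nonneg (by positivity)]; nlinarith [norm_nonneg t]
  have hlog := Real.hasSum_log_sub_log_of_abs_lt_one hx
  rw [← hL] at hlog
  have hL0 : 0 ≤ L := hlog.nonneg (fun n => by positivity)
  have hs := ((tc_hasSum hq ht).sub (tc_hasSum hq htn)).tendsto_sum_nat
  have hs2 := (hs.comp (Filter.tendsto_atTop_mono (fun N => show N ≤ 2 * N by omega) Filter.tendsto_id)).norm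
  refine le_of_tendsto hs2 (Filter.Eventually.of_forall fun N => ?_)
  simp only [Function.comp]
  rw [odd_part_sum]
  have h1 : ‖∑ m ∈ Finset.range N, 2 * (tc q (2 * m + 1) * t ^ (2 * m + 1))‖ ≤ 2 * ∑ m ∈ Finset.range N, ‖tc q (2 * m + 1)‖ * ‖t‖ ^ (2 * m + 1) := by
    rw [← Finset.mul_sum, norm_mul, Complex.norm_ofNat]
    gcongr
    refine (norm_sum_le _ _).trans (le_of_eq (Finset.sum_congr rfl fun m _ => by simp))
  have h2 : (∑ m ∈ Finset.range N, ‖tc q (2 * m + 1)‖ * ‖t‖ ^ (2 * m + 1)) ^ 2 ≤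
      (∑ m ∈ Finset.range N, (2 * m + 1) * ‖tc q (2 * m + 1)‖ ^ 2) * ∑ m ∈ Finset.range N, (1 / (2 * (m:ℝ) + 1)) * (‖t‖^2) ^ (2 * m + 1) := by
    refine Finset.sum_sq_le_sum_mul_sum_of_sq_le_mul _ (fun m _ => by positivity) (fun m _ => by positivity) (fun m _ => le_of_eq ?_)
    field_simp
    ring
  have h3 : ∑ m ∈ Finset.range N, (2 * (m:ℝ) + 1) * ‖tc q (2 * m + 1)‖ ^ 2 ≤ 2 * L := by
    have := odd_sum_le (fun j => ((j:ℝ) + 1) * ‖tc q (j + 1)‖ ^ 2) (fun n => by positivity) N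
    push_cast at this
    exact this.trans (hb _)
  have h4 : ∑ m ∈ Finset.range N, (1 / (2 * (m:ℝ) + 1)) * (‖t‖^2) ^ (2 * m + 1) ≤ L / 2 := by
    have := sum_le_hasSum (Finset.range N) (fun n _ => by positivity) hlog
    have e : ∑ m ∈ Finset.range N, 2 * (1 / (2 * (m:ℝ) + 1)) * (‖t‖^2) ^ (2 * m + 1) = 2 * ∑ m ∈ Finset.range N, (1 / (2 * (m:ℝ) + 1)) * (‖t‖^2) ^ (2 * m + 1) := by
      rw [Finset.mul_sum]; exact Finset.sum_congr rfl fun m _ => by ring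
    rw [e] at this; linarith
  have h5 : (∑ m ∈ Finset.range N, ‖tc q (2 * m + 1)‖ * ‖t‖ ^ (2 * m + 1)) ^ 2 ≤ L ^ 2 := by
    calc _ ≤ _ := h2
      _ ≤ (2 * L) * (L / 2) := by
        gcongr
      _ = L ^ 2 := by ring
  have h6 := abs_le_of_sq_le_sq h5 hL0
  linarith [(abs_le.1 h6).2]

lemma Gam2.pair_g {γ : ℂ → ℂ} (h : Gam2 γ) {t τ : ℂ} (ht : t ∈ ball (0:ℂ) 1) (hτ : ‖τ‖ = ‖t‖) (h0 : τ ≠ 0) (n1 : t ≠ τ) (n2 : t ≠ -τ) :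
    ‖gg γ t - gg γ τ‖ * ‖t + τ‖ * (1 - ‖t‖^2) ≤ (1 + ‖t‖^2) * ‖gg γ t + gg γ τ‖ * ‖t - τ‖ := by
  have ht1 : ‖t‖ < 1 := by simpa using ht
  have hτb : τ ∈ ball (0:ℂ) 1 := by simpa [hτ] using ht
  have hτn : -τ ∈ ball (0:ℂ) 1 := by simpa using hτb
  have htn : -t ∈ ball (0:ℂ) 1 := by simpa using ht
  have hA := sub_smul_dslope (gg γ) τ
  have hB := sub_smul_dslope (gg γ) (-τ)
  simp only [gg_neg, sub_neg_eq_add, smul_eq_mul] at hA hB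
  have m1 : t - τ ≠ 0 := sub_ne_zero.2 n1
  have m2 : t + τ ≠ 0 := fun e => n2 (eq_neg_of_add_eq_zero_left e)
  have hSd : DifferentiableOn ℂ (fun z => dslope (gg γ) τ z / dslope (gg γ) (-τ) z) (ball 0 1) :=
    (h.ds_diff hτb).div (h.ds_diff hτn) (fun z hz => h.ds_ne hz hτn)
  obtain ⟨q, hq, hq0, hqe⟩ := log_lemma hSd (fun z hz => div_ne_zero (h.ds_ne hz hτb) (h.ds_ne hz hτn))
  have hS0 : dslope (gg γ) τ 0 / dslope (gg γ) (-τ) 0 = 1 := by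
    rw [div_eq_one_iff_eq (h.ds_ne (by simp) hτn)]
    have := hA 0; have h2 := hB 0
    simp only [gg_zero] at this h2
    apply mul_left_cancel₀ h0
    linear_combination -this - h2
  have hqe' : ∀ z ∈ ball (0:ℂ) 1, dslope (gg γ) τ z = dslope (gg γ) (-τ) z * Complex.exp (q z) := by
    intro z hz
    have := hqe z hz
    rw [hS0, one_mul, div_eq_iff (h.ds_ne hz hτn)] at this
    rw [this, mul_comm]
  have hb := odd_part_bound hq ht (L := Real.log (1 + ‖t‖^2) - Real.log (1 - ‖t‖^2)) rfl (by
    intro N; rw [← hτ]; exact h.area_b hτb hq hqe' N)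
  -- symmetry
  have s1 : dslope (gg γ) τ (-t) = dslope (gg γ) (-τ) t := by
    have a1 := hA (-t); have a2 := hB t
    rw [gg_neg] at a1
    apply mul_left_cancel₀ m2
    linear_combination -a1 - a2
  have s2 : dslope (gg γ) (-τ) (-t) = dslope (gg γ) τ t := by
    have a1 := hA (t); have a2 := hB (-t)
    rw [gg_neg] at a2
    apply mul_left_cancel₀ m1
    linear_combination -a1 - a2
  have e1 := hqe' t ht
  have e2 := hqe' (-t) htn
  rw [s1, s2] at e2
  have e3 : Complex.exp (q t + q (-t)) = 1 := by
    rw [Complex.exp_add]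
    apply mul_left_cancel₀ (h.ds_ne ht hτn)
    rw [← mul_assoc, ← e1, ← e2, mul_one]
  have e4 : (q t).re + (q (-t)).re = 0 := by
    have := congrArg norm e3
    rw [Complex.norm_exp, norm_one] at this
    simpa using this
  have e5 : (q t).re ≤ Real.log (1 + ‖t‖^2) - Real.log (1 - ‖t‖^2) := by
    have := (Complex.re_le_norm _).trans hb
    rw [Complex.sub_re] at this
    linarith
  have p1 : 0 < 1 - ‖t‖^2 := by nlinarith [norm_nonneg t]
  have p2 : 0 < 1 + ‖t‖^2 := by positivity
  have e6 : ‖Complex.exp (q t)‖ * (1 - ‖t‖^2) ≤ 1 + ‖t‖^2 := by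
    rw [Complex.norm_exp, ← le_div_iff₀ p1]
    rw [← Real.log_div p2.ne' p1.ne'] at e5
    exact (Real.exp_le_exp.2 e5).trans (le_of_eq (Real.exp_log (by positivity)))
  have f1 := hA t
  have f2 := hB t
  rw [← f1, ← f2, e1]
  rw [norm_mul, norm_mul, norm_mul]
  calc _ = (‖t - τ‖ * ‖dslope (gg γ) (-τ) t‖ * ‖t + τ‖) * (‖Complex.exp (q t)‖ * (1 - ‖t‖^2)) := by ring
    _ ≤ (‖t - τ‖ * ‖dslope (gg γ) (-τ) t‖ * ‖t + τ‖) * (1 + ‖t‖^2) := by gcongr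
    _ = _ := by ring

/-- pair inequality -/
lemma Gam2.pair {γ : ℂ → ℂ} (h : Gam2 γ) {t τ : ℂ} (ht : t ∈ ball (0:ℂ) 1) (hτ : ‖τ‖ = ‖t‖) (h0 : t ≠ 0) :
    ‖(gg γ τ)⁻¹ - (gg γ t)⁻¹‖ * ‖t + τ‖ * (1 - ‖t‖^2) ≤ (1 + ‖t‖^2) * ‖(gg γ t)⁻¹ + (gg γ τ)⁻¹‖ * ‖t - τ‖ := by
  have ht1 : ‖t‖ < 1 := by simpa using ht
  have hτb : τ ∈ ball (0:ℂ) 1 := by simpa [hτ] using ht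
  have p2 : 0 < 1 + ‖t‖^2 := by positivity
  by_cases n1 : t = τ
  · subst n1; simp
  by_cases n2 : t = -τ
  · have : t + τ = 0 := by rw [n2]; simp
    rw [this]; simp only [norm_zero, mul_zero, zero_mul]; positivity
  have hτ0 : τ ≠ 0 := by rw [← norm_pos_iff, hτ, norm_pos_iff]; exact h0
  have hp := h.pair_g ht hτ hτ0 n1 n2
  have g1 := h.gne ht h0
  have g2 := h.gne hτb hτ0
  have a1 : gg γ t - gg γ τ = gg γ t * gg γ τ * ((gg γ τ)⁻¹ - (gg γ t)⁻¹) := by field_simp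
  have a2 : gg γ t + gg γ τ = gg γ t * gg γ τ * ((gg γ t)⁻¹ + (gg γ τ)⁻¹) := by field_simp; ring
  rw [a1, a2, norm_mul, norm_mul (gg γ t * gg γ τ)] at hp
  have hpos : 0 < ‖gg γ t * gg γ τ‖ := norm_pos_iff.2 (mul_ne_zero g1 g2)
  refine le_of_mul_le_mul_left ?_ hpos
  calc _ = _ := by ring
    _ ≤ _ := hp
    _ = _ := by ring

lemma im_pow_le (t : ℂ) (n : ℕ) : |(t ^ n).im| ≤ n * ‖t‖ ^ (n - 1) * |t.im| := by
  induction n with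
  | zero => simp
  | succ n ih =>
    rw [pow_succ, Complex.mul_im]
    have h1 : |(t ^ n).re| ≤ ‖t‖ ^ n := by
      have := Complex.abs_re_le_norm (t ^ n); rwa [norm_pow] at this
    have h2 := Complex.abs_re_le_norm t
    calc |(t ^ n).re * t.im + (t ^ n).im * t.re| ≤ |(t ^ n).re| * |t.im| + |(t ^ n).im| * |t.re| := by
          rw [← abs_mul, ← abs_mul]; exact abs_add_le _ _
      _ ≤ ‖t‖ ^ n * |t.im| + n * ‖t‖ ^ (n - 1) * |t.im| * ‖t‖ := by gcongr
      _ = (n + 1 : ℕ) * ‖t‖ ^ (n + 1 - 1) * |t.im| := by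
        rcases n with _ | n
        · simp
        · simp only [Nat.add_sub_cancel]; push_cast; ring

lemma re_pow_le (t : ℂ) (j : ℕ) : |(t ^ (2 * j + 1)).re| ≤ (2 * j + 1) * ‖t‖ ^ (2 * j) * |t.re| := by
  have h := im_pow_le (Complex.I * t) (2 * j + 1)
  have e : (Complex.I * t) ^ (2 * j + 1) = (-1 : ℝ) ^ j * (Complex.I * t ^ (2 * j + 1)) := by
    rw [mul_pow, pow_succ, pow_mul, Complex.I_sq]; push_cast; ring
  rw [e] at h
  have e2 : |(((-1 : ℝ) : ℂ) ^ j * (Complex.I * t ^ (2 * j + 1))).im| = |(t ^ (2 * j + 1)).re| := by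
    rw [← Complex.ofReal_pow, Complex.im_ofReal_mul, abs_mul]; simp
  rw [e2] at h
  simpa using h

/-- Cauchy–Schwarz for the tail -/
lemma tail_cs (A : ℕ → ℝ) (hA : ∀ n, 0 ≤ A n) {c T y : ℝ} (w : ℕ → ℝ) (hw : ∀ n, 0 ≤ w n)
    (hN : ∀ N, ∑ j ∈ Finset.range N, (2 * j + 1) * A j ^ 2 ≤ 1) (hc : A 0 = c)
    (hT : HasSum (fun j : ℕ => w (j+1) ^ 2 / (2 * (j + 1 : ℕ) + 1)) T)
    (hy : 0 ≤ y) (hyy : (1 - c^2) * T ≤ y ^ 2) (N : ℕ) :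
    ∑ j ∈ Finset.range N, A (j + 1) * w (j + 1) ≤ y := by
  have h1 := hN (N + 1)
  rw [Finset.sum_range_succ'] at h1
  simp only [hc, Nat.cast_zero, mul_zero, zero_add, one_mul] at h1
  have h2 := sum_le_hasSum (Finset.range N) (fun n _ => by positivity) hT
  have h3 : (∑ j ∈ Finset.range N, A (j + 1) * w (j + 1)) ^ 2 ≤ (∑ j ∈ Finset.range N, (2 * (j + 1 : ℕ) + 1) * A (j+1) ^ 2) * ∑ j ∈ Finset.range N, w (j+1) ^ 2 / (2 * (j + 1 : ℕ) + 1) := by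
    refine Finset.sum_sq_le_sum_mul_sum_of_sq_le_mul _ (fun m _ => by positivity) (fun m _ => by positivity) (fun m _ => le_of_eq ?_)
    field_simp
  have h4 : 0 ≤ ∑ j ∈ Finset.range N, w (j+1) ^ 2 / (2 * (j + 1 : ℕ) + 1) := Finset.sum_nonneg fun m _ => by positivity
  have h4' : 0 ≤ ∑ j ∈ Finset.range N, (2 * ((j + 1 : ℕ) : ℝ) + 1) * A (j+1) ^ 2 := Finset.sum_nonneg fun m _ => by positivity
  have h5 : (∑ j ∈ Finset.range N, A (j + 1) * w (j + 1)) ^ 2 ≤ y ^ 2 := by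
    refine h3.trans (le_trans ?_ hyy)
    have : 0 ≤ T := h4.trans h2
    have h6 : ∑ j ∈ Finset.range N, (2 * ((j + 1 : ℕ) : ℝ) + 1) * A (j+1) ^ 2 ≤ 1 - c^2 := by linarith
    exact mul_le_mul h6 h2 h4 (h4'.trans h6)
  exact (abs_le.1 (abs_le_of_sq_le_sq h5 hy)).2

lemma T_quarter : HasSum (fun j : ℕ => ((2 * ((j + 1 : ℕ) : ℝ) + 1) * (1/4) ^ (j+1)) ^ 2 / (2 * (j + 1 : ℕ) + 1)) (47/225 : ℝ) := by
  have h1 := hasSum_geometric_of_lt_one (r := (1/16:ℝ)) (by norm_num) (by norm_num)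
  have h2 := hasSum_coe_mul_geometric_of_norm_lt_one (r := (1/16:ℝ)) (by norm_num)
  have h3 := ((h2.mul_left 2).add (h1.mul_left 3)).mul_left (1/16)
  have e : (1/16 : ℝ) * (2 * (1 / 16 / (1 - 1 / 16) ^ 2) + 3 * (1 - 1 / 16)⁻¹) = 47/225 := by norm_num
  rw [e] at h3
  refine h3.congr_fun ?_
  intro j
  push_cast
  have : (1/16:ℝ) ^ j = ((1/4)^j)^2 := by rw [← pow_mul, mul_comm, pow_mul]; norm_num
  rw [this]
  field_simp
  ring

/-- bound for odd real series -/
lemma real_series_bound (a A : ℕ → ℝ) (haA : ∀ n, |a (n+1)| ≤ A (n+1)) {y : ℝ}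
    (hb : ∀ N, ∑ j ∈ Finset.range N, A (j + 1) * ((2 * ((j + 1 : ℕ) : ℝ) + 1) * (1/4) ^ (j+1)) ≤ y)
    {t U : ℂ} (ht : ‖t‖ = 1/2) (hU : HasSum (fun j : ℕ => (a j : ℂ) * t ^ (2 * j + 1)) U) :
    |(U - a 0 * t).re| ≤ y * |t.re| ∧ |(U - a 0 * t).im| ≤ y * |t.im| := by
  have h1 := ((hasSum_nat_add_iff' 1).2 hU).tendsto_sum_nat
  simp only [Finset.range_one, Finset.sum_singleton, mul_zero, zero_add, pow_one] at h1
  have hp : ∀ j : ℕ, ‖t‖ ^ (2 * (j+1)) = (1/4) ^ (j + 1) := by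
    intro j; rw [ht, pow_mul]; norm_num
  constructor
  · refine le_of_tendsto ((Complex.continuous_re.tendsto _).comp h1).abs (Filter.Eventually.of_forall fun N => ?_)
    simp only [Function.comp, Complex.re_sum]
    calc _ ≤ ∑ j ∈ Finset.range N, |((a (j+1) : ℂ) * t ^ (2 * (j+1) + 1)).re| := Finset.abs_sum_le_sum_abs _ _
      _ ≤ ∑ j ∈ Finset.range N, (A (j + 1) * ((2 * ((j + 1 : ℕ) : ℝ) + 1) * (1/4) ^ (j+1))) * |t.re| := by
        refine Finset.sum_le_sum fun j _ => ?_
        rw [Complex.re_ofReal_mul, abs_mul]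
        have := re_pow_le t (j+1)
        rw [hp] at this
        rw [mul_assoc]
        exact mul_le_mul (haA j) this (abs_nonneg _) ((abs_nonneg _).trans (haA j))
      _ ≤ _ := by
        rw [← Finset.sum_mul]; gcongr; exact hb N
  · refine le_of_tendsto ((Complex.continuous_im.tendsto _).comp h1).abs (Filter.Eventually.of_forall fun N => ?_)
    simp only [Function.comp, Complex.im_sum]
    calc _ ≤ ∑ j ∈ Finset.range N, |((a (j+1) : ℂ) * t ^ (2 * (j+1) + 1)).im| := Finset.abs_sum_le_sum_abs _ _
      _ ≤ ∑ j ∈ Finset.range N, (A (j + 1) * ((2 * ((j + 1 : ℕ) : ℝ) + 1) * (1/4) ^ (j+1))) * |t.im| := by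
        refine Finset.sum_le_sum fun j _ => ?_
        rw [Complex.im_ofReal_mul, abs_mul]
        have := im_pow_le t (2 * (j+1) + 1)
        rw [Nat.add_sub_cancel, hp] at this
        rw [mul_assoc]
        refine mul_le_mul (haA j) ?_ (abs_nonneg _) ((abs_nonneg _).trans (haA j))
        push_cast at this ⊢
        exact this
      _ ≤ _ := by
        rw [← Finset.sum_mul]; gcongr; exact hb N

lemma key_real {A X Y Z : ℝ} (h1 : |X| + |Y| ≤ |A|) (h2 : (A - X)^2 ≤ (A + Y)^2 + Z^2) : -Z^2 ≤ A * (X + Y) := by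
  have hX := abs_le.1 (le_refl |X|)
  have hY := abs_le.1 (le_refl |Y|)
  have h3 : 0 ≤ (X + Y) * (2 * A + Y - X) + Z^2 := by nlinarith
  rcases le_total 0 A with hA | hA
  · rw [abs_of_nonneg hA] at h1
    by_cases hs : 0 ≤ X + Y
    · have := mul_nonneg hA hs; nlinarith [sq_nonneg Z]
    · push Not at hs
      have : A ≤ 2 * A + Y - X := by linarith
      nlinarith
  · rw [abs_of_nonpos hA] at h1
    by_cases hs : X + Y ≤ 0
    · have := mul_nonneg_of_nonpos_of_nonpos hA hs; nlinarith [sq_nonneg Z]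
    · push Not at hs
      have : 2 * A + Y - X ≤ A := by linarith
      nlinarith

lemma harnack {h : ℂ → ℂ} (hd : DifferentiableOn ℂ h (ball 0 1)) (hs : ∀ x, ‖x‖ = 1/4 → 0 ≤ (h x).re)
    {h0 : ℝ} (e0 : h 0 = h0) {r : ℝ} (hr : 0 ≤ r) (hr4 : r < 1/4) : h0 * (1 - 4 * r) ≤ (h r).re * (1 + 4 * r) := by
  have hsub : closedBall (0:ℂ) (1/4) ⊆ ball 0 1 := closedBall_subset_ball (by norm_num)
  have hpos : ∀ x ∈ closedBall (0:ℂ) (1/4), 0 ≤ (h x).re := by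
    intro x hx
    have hdc : DiffContOnCl ℂ (fun z => Complex.exp (- h z)) (ball 0 (1/4)) := by
      apply DifferentiableOn.diffContOnCl
      rw [closure_ball _ (by norm_num)]
      exact (hd.mono hsub).neg.cexp
    have := Complex.norm_le_of_forall_mem_frontier_norm_le isBounded_ball hdc (C := 1) (by
      intro z hz
      rw [frontier_ball _ (by norm_num)] at hz
      have := hs z (by simpa using hz)
      rw [Complex.norm_exp]
      simpa using this) (z := x) (by rw [closure_ball _ (by norm_num)]; exact hx)
    rw [Complex.norm_exp] at this
    simpa using this
  have hrm : (r:ℂ) ∈ ball (0:ℂ) (1/4) := by simp [abs_of_nonneg hr]; linarith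
  have hre := hpos r (ball_subset_closedBall hrm)
  have h00 : 0 ≤ h0 := by have := hpos 0 (by simp); rw [e0] at this; simpa using this
  rcases h00.eq_or_lt with h00 | h00
  · rw [← h00]; simp; positivity
  have hne : ∀ z ∈ ball (0:ℂ) (1/4), h z + h0 ≠ 0 := by
    intro z hz e
    have := hpos z (ball_subset_closedBall hz)
    have e := congrArg Complex.re e
    simp at e; linarith
  have hmd : DifferentiableOn ℂ (fun z => (h z - h0) / (h z + h0)) (ball 0 (1/4)) := by
    have := hd.mono (ball_subset_closedBall.trans hsub)
    exact (this.sub_const _).div (this.add_const _) hne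
  have hsch := Complex.dist_le_div_mul_dist_of_mapsTo_ball (R₂ := 1) hmd (by
    intro z hz
    simp only [e0, sub_self, zero_div, mem_closedBall, dist_zero_right, norm_div]
    rw [div_le_one (norm_pos_iff.2 (hne z hz))]
    have := hpos z (ball_subset_closedBall hz)
    rw [← sq_le_sq₀ (norm_nonneg _) (norm_nonneg _), ← Complex.normSq_eq_norm_sq, ← Complex.normSq_eq_norm_sq, Complex.normSq_apply, Complex.normSq_apply]
    simp
    nlinarith) hrm
  simp only [e0, sub_self, zero_div, dist_zero_right, norm_div, Complex.norm_real, Real.norm_eq_abs, abs_of_nonneg hr] at hsch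
  rw [div_le_iff₀ (norm_pos_iff.2 (hne _ hrm))] at hsch
  have e4 : (1:ℝ) / (1/4) * r = 4 * r := by ring
  rw [e4, ← sq_le_sq₀ (norm_nonneg _) (by positivity), mul_pow, ← Complex.normSq_eq_norm_sq, ← Complex.normSq_eq_norm_sq, Complex.normSq_apply, Complex.normSq_apply] at hsch
  simp at hsch
  have h7 : (h0 - (h r).re)^2 ≤ (4 * r * ((h r).re + h0))^2 := by
    have : (4 * r)^2 ≤ 1 := by nlinarith
    nlinarith [sq_nonneg (h r).im]
  have := abs_le_of_sq_le_sq h7 (by positivity)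
  have := (abs_le.1 this).2
  nlinarith

/-- the function with real-part coefficients -/
def rp (R : ℂ → ℂ) (x : ℂ) : ℂ := (R x + conj (R (conj x))) / 2
def ip (R : ℂ → ℂ) (x : ℂ) : ℂ := (R x - conj (R (conj x))) / (2 * Complex.I)

lemma conj_mem {x : ℂ} (hx : x ∈ ball (0:ℂ) 1) : conj x ∈ ball (0:ℂ) 1 := by simpa using hx

lemma conj_diff {R : ℂ → ℂ} (hR : DifferentiableOn ℂ R (ball 0 1)) :
    DifferentiableOn ℂ (fun x => conj (R (conj x))) (ball 0 1) := by
  intro z hz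
  have := (hR.differentiableAt (isOpen_ball.mem_nhds (conj_mem hz))).conj_conj
  rw [Complex.conj_conj] at this
  exact this.differentiableWithinAt

lemma rp_diff {R : ℂ → ℂ} (hR : DifferentiableOn ℂ R (ball 0 1)) : DifferentiableOn ℂ (rp R) (ball 0 1) :=
  (hR.add (conj_diff hR)).div_const 2

lemma conj_hasSum {R : ℂ → ℂ} (hR : DifferentiableOn ℂ R (ball 0 1)) {x : ℂ} (hx : x ∈ ball (0:ℂ) 1) :
    HasSum (fun n => conj (tc R n) * x ^ n) (conj (R (conj x))) := by
  have := (tc_hasSum hR (conj_mem hx)).map (starRingEnd ℂ) Complex.continuous_conj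
  refine this.congr_fun ?_
  intro n; simp

lemma rp_hasSum {R : ℂ → ℂ} (hR : DifferentiableOn ℂ R (ball 0 1)) {t : ℂ} (ht : t ∈ ball (0:ℂ) 1) :
    HasSum (fun n => ((tc R n).re : ℂ) * t ^ (2 * n + 1)) (t * rp R (t^2)) := by
  have := ((tc_hasSum hR (sq_mem ht)).add (conj_hasSum hR (sq_mem ht))).mul_left (t/2)
  unfold rp
  have e : t * ((R (t^2) + conj (R (conj (t^2)))) / 2) = t / 2 * (R (t^2) + conj (R (conj (t^2)))) := by ring
  rw [e]
  refine this.congr_fun ?_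
  intro n
  have := Complex.add_conj (tc R n)
  rw [← add_mul, this]; push_cast; ring

lemma ip_hasSum {R : ℂ → ℂ} (hR : DifferentiableOn ℂ R (ball 0 1)) {t : ℂ} (ht : t ∈ ball (0:ℂ) 1) :
    HasSum (fun n => ((tc R n).im : ℂ) * t ^ (2 * n + 1)) (t * ip R (t^2)) := by
  have := ((tc_hasSum hR (sq_mem ht)).sub (conj_hasSum hR (sq_mem ht))).mul_left (t/(2 * Complex.I))
  unfold ip
  have e : t * ((R (t^2) - conj (R (conj (t^2)))) / (2 * Complex.I)) = t / (2 * Complex.I) * (R (t^2) - conj (R (conj (t^2)))) := by ring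
  rw [e]
  refine this.congr_fun ?_
  intro n
  have := Complex.sub_conj (tc R n)
  rw [← sub_mul, this]; push_cast
  field_simp; ring

lemma R_split (R : ℂ → ℂ) (x : ℂ) : R x = rp R x + Complex.I * ip R x := by
  unfold rp ip; field_simp; ring

lemma R_split_conj (R : ℂ → ℂ) (x : ℂ) : R (conj x) = conj (rp R x) + Complex.I * conj (ip R x) := by
  unfold rp ip; simp [map_ofNat]; field_simp; ring

lemma bdry {γ : ℂ → ℂ} (h : Gam2 γ) {c ε y : ℝ} (hc : tc (RR γ) 0 = c) (hε : ε = 1 - c) (hε0 : 0 ≤ ε) (hε1 : ε ≤ 0.02)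
    (hy : 0 ≤ y) (hyy : y ^ 2 = 94/225 * ε) {t : ℂ} (ht : ‖t‖ = 1/2) :
    -((25/64) * ((t^2).im)^2 * y^2) ≤ (15/8) * (t^2).im * (((t^2) - 1/16) * (1 - rp (RR γ) (t^2))).im := by
  have htb : t ∈ ball (0:ℂ) 1 := by simp [ht]; norm_num
  have ht0 : t ≠ 0 := by rw [← norm_pos_iff, ht]; norm_num
  have htc0 : conj t ≠ 0 := by simpa using ht0
  have hcs := tail_cs (fun n => ‖tc (RR γ) n‖) (fun n => norm_nonneg _) (c := c) (T := 47/225) (y := y)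
    (fun j => (2 * (j : ℝ) + 1) * (1/4) ^ j) (fun n => by positivity) h.area_a (by
      simp only [hc, Complex.norm_real, Real.norm_eq_abs]; rw [abs_of_nonneg]; norm_num at hε1; linarith) T_quarter hy (by
      rw [hyy, show c = 1 - ε by linarith]; nlinarith)
  have hW := real_series_bound (fun n => (tc (RR γ) n).re) (fun n => ‖tc (RR γ) n‖) (fun n => Complex.abs_re_le_norm _) hcs ht (rp_hasSum h.Rdiff htb)
  have hV := real_series_bound (fun n => (tc (RR γ) n).im) (fun n => ‖tc (RR γ) n‖) (fun n => Complex.abs_im_le_norm _) hcs ht (ip_hasSum h.Rdiff htb)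
  simp only [hc, Complex.ofReal_re, Complex.ofReal_im] at hW hV
  have hpair := h.pair htb (τ := conj t) (by simp) ht0
  rw [h.ginv ht0, h.ginv htc0, ← map_pow, R_split_conj (RR γ), R_split (RR γ) (t^2)] at hpair
  set d := rp (RR γ) (t^2) with hd
  set ξ := ip (RR γ) (t^2) with hξ
  have hnorm : t.re ^ 2 + t.im ^ 2 = 1/4 := by
    have := Complex.normSq_eq_norm_sq t
    rw [Complex.normSq_apply, ht] at this; nlinarith
  have hinv : t⁻¹ = 4 * conj t := by
    rw [Complex.inv_def, Complex.normSq_eq_norm_sq, ht]; push_cast; ring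
  have hinvc : (conj t)⁻¹ = 4 * t := by
    rw [← map_inv₀, hinv]; simp [map_ofNat]
  rw [hinv, hinvc, ht] at hpair
  have hsq := mul_self_le_mul_self (by positivity) hpair
  have nsq : ∀ w : ℂ, ‖w‖ * ‖w‖ = w.re ^ 2 + w.im ^ 2 := by
    intro w; rw [← sq, ← Complex.normSq_eq_norm_sq, Complex.normSq_apply]; ring
  set p := t.re with hp
  set q := t.im with hq
  set Wr := p - (t * d).re with hWr
  set Wi := q - (t * d).im with hWi
  set Vr := (t * ξ).re with hVr
  set Vi := (t * ξ).im with hVi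
  have E1 : (4 * t - conj t * (conj d + Complex.I * conj ξ)) - (4 * conj t - t * (d + Complex.I * ξ)) = ⟨-2 * Vi, -2 * (Wi - 5 * q)⟩ := by
    apply Complex.ext <;> simp [hWr, hWi, hVr, hVi, hp, hq] <;> ring
  have E2 : (4 * conj t - t * (d + Complex.I * ξ)) + (4 * t - conj t * (conj d + Complex.I * conj ξ)) = ⟨2 * (3 * p + Wr), -2 * Vr⟩ := by
    apply Complex.ext <;> simp [hWr, hWi, hVr, hVi, hp, hq] <;> ring
  have E3 : t + conj t = ⟨2 * p, 0⟩ := by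
    apply Complex.ext <;> simp [hp]; ring
  have E4 : t - conj t = ⟨0, 2 * q⟩ := by
    apply Complex.ext <;> simp [hq]; ring
  rw [E1, E2, E3, E4] at hsq
  have hsq2 : ((-2 * Vi)^2 + (-2 * (Wi - 5 * q))^2) * ((2 * p)^2 + 0^2) * (9/16) ≤ (25/16) * ((2 * (3 * p + Wr))^2 + (-2 * Vr)^2) * (0^2 + (2 * q)^2) := by
    have n1 := nsq ⟨-2 * Vi, -2 * (Wi - 5 * q)⟩
    have n2 := nsq ⟨2 * (3 * p + Wr), -2 * Vr⟩
    have n3 := nsq ⟨2 * p, 0⟩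
    have n4 := nsq ⟨0, 2 * q⟩
    simp only at n1 n2 n3 n4
    rw [← n1, ← n2, ← n3, ← n4]
    refine le_trans (le_of_eq ?_) (hsq.trans (le_of_eq ?_)) <;> ring
  have bWr : |Wr| ≤ (ε + y) * |p| := by
    have e : Wr = ε * p - (t * d - c * t).re := by simp [hWr, hε, hp]; ring
    rw [e]
    calc _ ≤ |ε * p| + |(t * d - c * t).re| := abs_sub _ _
      _ ≤ ε * |p| + y * |p| := by rw [abs_mul, abs_of_nonneg hε0]; linarith [hW.1]
      _ = _ := by ring
  have bWi : |Wi| ≤ (ε + y) * |q| := by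
    have e : Wi = ε * q - (t * d - c * t).im := by simp [hWi, hε, hq]; ring
    rw [e]
    calc _ ≤ |ε * q| + |(t * d - c * t).im| := abs_sub _ _
      _ ≤ ε * |q| + y * |q| := by rw [abs_mul, abs_of_nonneg hε0]; linarith [hW.2]
      _ = _ := by ring
  have bVr : |Vr| ≤ y * |p| := by
    have := hV.1
    rw [Complex.ofReal_zero, zero_mul, sub_zero] at this; exact this
  have hy1 : ε + y ≤ 15/8 := by
    norm_num at hε1
    nlinarith
  have kr := key_real (A := 15/4 * (p * q)) (X := 3/4 * p * Wi) (Y := 5/4 * q * Wr) (Z := 5/4 * q * Vr) (by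
    simp only [abs_mul]
    rw [abs_of_pos (by norm_num : (0:ℝ) < 3/4), abs_of_pos (by norm_num : (0:ℝ) < 5/4), abs_of_pos (by norm_num : (0:ℝ) < 15/4)]
    calc _ ≤ 3/4 * |p| * ((ε + y) * |q|) + 5/4 * |q| * ((ε + y) * |p|) := by gcongr
      _ = (ε + y) * (2 * (|p| * |q|)) := by ring
      _ ≤ 15/8 * (2 * (|p| * |q|)) := by gcongr
      _ = _ := by ring) (by
    nlinarith [sq_nonneg (p * Vi)])
  have hV2 : Vr ^ 2 ≤ (y * p) ^ 2 := by
    rw [sq_le_sq, abs_mul, abs_of_nonneg hy]; exact bVr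
  have ex : (t^2).im = 2 * (p * q) := by rw [sq, Complex.mul_im]; ring
  have exr : (t^2).re = p^2 - q^2 := by rw [sq, Complex.mul_re]; ring
  have e2 : ((t^2 - 1/16) * (1 - d)).im = 3/4 * p * Wi + 5/4 * q * Wr := by
    have e16 : (1/16 : ℂ) = ((1/16 : ℝ) : ℂ) := by push_cast; ring
    rw [e16, Complex.mul_im, Complex.sub_re (t^2), Complex.sub_im (t^2), exr, ex]
    simp only [Complex.ofReal_re, Complex.ofReal_im, Complex.sub_re, Complex.sub_im, Complex.one_re, Complex.one_im, hWr, hWi, Complex.mul_re, Complex.mul_im]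
    have h4 : (1/16 : ℝ) = (p^2 + q^2) / 4 := by rw [hnorm]; norm_num
    rw [h4]
    ring
  rw [e2, ex]
  clear_value p q Wr Wi Vr
  clear hsq2 hsq hpair hcs hW hV E1 E2 E3 E4 bWr bWi bVr e2 ex exr
  have h9 : (5/4 * q * Vr)^2 ≤ 25/16 * q^2 * (y * p)^2 := by
    have := mul_le_mul_of_nonneg_left hV2 (sq_nonneg q)
    have e1 : (5/4 * q * Vr)^2 = 25/16 * (q^2 * Vr^2) := by ring
    rw [e1]; linarith
  have e3 : 25/64 * (2 * (p * q))^2 * y^2 = 25/16 * q^2 * (y * p)^2 := by ring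
  rw [e3]
  have e4 : 15/8 * (2 * (p * q)) * (3/4 * p * Wi + 5/4 * q * Wr) = 15/4 * (p * q) * (3/4 * p * Wi + 5/4 * q * Wr) := by ring
  rw [e4]
  linarith

lemma stab_num {x D : ℂ} {K : ℝ} (hx : ‖x‖ = 1/4) (hb : -(K * x.im^2) ≤ x.im * ((x - 1/16) * D).im) :
    0 ≤ ((D + K) * (1 - 16 * x^2) / (1 - x)).re := by
  have hn : x.re^2 + x.im^2 = 1/16 := by
    have := Complex.normSq_eq_norm_sq x
    rw [Complex.normSq_apply, hx] at this; nlinarith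
  rw [Complex.div_re, ← add_div]
  refine div_nonneg ?_ (Complex.normSq_nonneg _)
  have e16 : (1/16 : ℂ) = ((1/16 : ℝ) : ℂ) := by push_cast; ring
  have e17 : (16 : ℂ) = ((16 : ℝ) : ℂ) := by push_cast; ring
  rw [e16] at hb
  rw [e17]
  simp only [sq, Complex.mul_re, Complex.mul_im, Complex.sub_re, Complex.sub_im, Complex.add_re, Complex.add_im, Complex.ofReal_re, Complex.ofReal_im, Complex.one_re, Complex.one_im] at hb ⊢
  set p := x.re
  set q := x.im
  set u := D.re
  set v := D.im
  clear_value p q u v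
  have h1 : (1:ℝ) = 16 * (p^2 + q^2) := by rw [hn]; norm_num
  have key : 32 * (q * ((p - 1/16) * v + (q - 0) * u) + K * (q * q)) = 
     (((u + K) * (1 - (16 * (p * p - q * q) - 0 * (p * q + q * p))) - (v + 0) * (0 - (16 * (p * q + q * p) + 0 * (p * p - q * q)))) *
        (1 - p) +
      ((u + K) * (0 - (16 * (p * q + q * p) + 0 * (p * p - q * q))) + (v + 0) * (1 - (16 * (p * p - q * q) - 0 * (p * q + q * p)))) *
        (0 - q)) := by
    have e : p^2 = 1/16 - q^2 := by linarith
    linear_combination (16 * (u+K) * (1 - p) + 16 * v * q) * e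
  rw [← key]
  linarith

lemma stab {γ : ℂ → ℂ} (h : Gam2 γ) {c ε : ℝ} (hc : tc (RR γ) 0 = c) (hε : ε = 1 - c) (hε0 : 0 ≤ ε) (hε1 : ε ≤ 0.02)
    {r : ℝ} (hr : 0.1715 < r) (hr2 : r < 0.1716) : (rp (RR γ) r).re ≤ 1 - 0.22 * ε := by
  norm_num at hr hr2
  set y := Real.sqrt (94/225 * ε) with hy
  have hyy : y^2 = 94/225 * ε := Real.sq_sqrt (by positivity)
  set K : ℝ := 5/24 * y^2 with hK
  have hd : DifferentiableOn ℂ (fun x => ((1 - rp (RR γ) x) + K) * (1 - 16 * x^2) / (1 - x)) (ball 0 1) := by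
    refine DifferentiableOn.div ?_ (by fun_prop) ?_
    · exact (((differentiableOn_const _).sub (rp_diff h.Rdiff)).add (differentiableOn_const _)).mul (by fun_prop)
    · intro x hx e
      have : x = 1 := by linear_combination -e
      simp [this] at hx
  have hs : ∀ x : ℂ, ‖x‖ = 1/4 → 0 ≤ (((1 - rp (RR γ) x) + K) * (1 - 16 * x^2) / (1 - x)).re := by
    intro x hx
    apply stab_num hx
    obtain ⟨t, rfl⟩ := IsAlgClosed.exists_pow_nat_eq x (n := 2) (by norm_num)
    have ht : ‖t‖ = 1/2 := by
      rw [norm_pow] at hx; nlinarith [norm_nonneg t]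
    have := bdry h hc hε hε0 hε1 (Real.sqrt_nonneg _) hyy ht
    rw [hK]; linarith
  have h0 : rp (RR γ) 0 = c := by
    unfold rp; rw [map_zero, ← tc_zero (RR γ), hc]; simp
  have hh := harnack hd hs (h0 := ε + K) (by simp [h0, hε]) (r := r) (by linarith) (by linarith)
  have e : (((1 - rp (RR γ) r) + K) * (1 - 16 * (r:ℂ)^2) / (1 - r)).re = (1 - (rp (RR γ) r).re + K) * ((1 - 16 * r^2) / (1 - r)) := by
    have : ((1 - rp (RR γ) r) + K) * (1 - 16 * (r:ℂ)^2) / (1 - r) = ((1 - rp (RR γ) r) + K) * (((1 - 16 * r^2) / (1 - r) : ℝ) : ℂ) := by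
      push_cast; ring
    rw [this, Complex.re_mul_ofReal]; simp
  rw [e] at hh
  set D := (rp (RR γ) r).re
  have h1r : (0:ℝ) < 1 - r := by linarith
  have h4r : (0:ℝ) < 1 - 4 * r := by linarith
  have h2 : (1 - 16 * r^2) / (1 - r) * (1 + 4 * r) * (1 - r) = (1 - 4 * r) * (1 + 4*r)^2 := by field_simp; ring
  have h3 : (ε + K) * (1 - r) ≤ (1 - D + K) * (1 + 4*r)^2 := by
    have := mul_le_mul_of_nonneg_right hh h1r.le
    have h5 : (1 - 4*r) * ((ε + K) * (1 - r)) ≤ (1 - 4*r) * ((1 - D + K) * (1 + 4*r)^2) := by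
      calc _ = (ε + K) * (1 - 4*r) * (1 - r) := by ring
        _ ≤ _ := this
        _ = (1 - D + K) * ((1 - 16 * r^2) / (1 - r) * (1 + 4 * r) * (1 - r)) := by ring
        _ = _ := by rw [h2]; ring
    exact le_of_mul_le_mul_left h5 h4r
  have hK2 : K = 47/540 * ε := by rw [hK, hyy]; ring
  rw [hK2] at h3
  by_contra hcon
  push Not at hcon
  norm_num at hcon
  have h6 : (1 - D + 47/540 * ε) ≤ (11/50 + 47/540) * ε := by linarith
  have h7 : (1 + 4*r)^2 ≤ 2.85 := by norm_num; nlinarith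
  have h8 : ε * (587/540) * (1 - r) ≤ (11/50 + 47/540) * ε * 2.85 := by
    calc _ = (ε + 47/540*ε) * (1 - r) := by ring
      _ ≤ _ := h3
      _ ≤ (11/50 + 47/540) * ε * (1 + 4*r)^2 := by gcongr
      _ ≤ _ := by gcongr
  have h9 : 0 < ε ∨ ε = 0 := by rcases hε0.lt_or_eq with h | h; exact Or.inl h; exact Or.inr h.symm
  rcases h9 with h9 | h9
  · norm_num at h8; nlinarith
  · rw [h9] at h3 hcon; nlinarith

/-- convolution of sequences -/
def cv {α : Type*} [Semiring α] (a b : ℕ → α) (n : ℕ) : α := ∑ p ∈ Finset.HasAntidiagonal.antidiagonal n, a p.1 * b p.2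

lemma cv_nonneg {a b : ℕ → ℝ} (ha : ∀ n, 0 ≤ a n) (hb : ∀ n, 0 ≤ b n) (n : ℕ) : 0 ≤ cv a b n :=
  Finset.sum_nonneg (fun p _ => mul_nonneg (ha _) (hb _))

lemma cv_hasSum {a b : ℕ → ℝ} (ha : ∀ n, 0 ≤ a n) (hb : ∀ n, 0 ≤ b n) (sa : Summable a) (sb : Summable b) :
    HasSum (cv a b) ((∑' n, a n) * ∑' n, b n) := by
  have h1 : Summable (fun p : ℕ × ℕ => a p.1 * b p.2) := sa.mul_of_nonneg sb ha hb
  have := summable_sum_mul_antidiagonal_of_summable_mul h1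
  have e := sa.tsum_mul_tsum_eq_tsum_sum_antidiagonal sb h1
  rw [e]
  exact this.hasSum

lemma sq_summable {a : ℕ → ℝ} (ha : ∀ n, 0 ≤ a n) (sa : Summable a) : Summable (fun n => a n ^ 2) := by
  have h0 := sa.tendsto_atTop_zero
  have : ∀ᶠ n in Filter.atTop, a n ≤ 1 := (h0.eventually (ge_mem_nhds (by norm_num : (0:ℝ) < 1)))
  refine Summable.of_norm_bounded_eventually_nat sa ?_
  filter_upwards [this] with n hn
  rw [Real.norm_eq_abs, abs_of_nonneg (sq_nonneg _)]
  nlinarith [ha n]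

/-- Young inequality -/
lemma young {a b : ℕ → ℝ} (ha : ∀ n, 0 ≤ a n) (hb : ∀ n, 0 ≤ b n) (sa : Summable a) (sb : Summable b) :
    Summable (fun n => cv a b n ^ 2) ∧ ∑' n, cv a b n ^ 2 ≤ (∑' n, a n)^2 * ∑' n, b n ^ 2 := by
  have s2 := sq_summable hb sb
  have h := cv_hasSum ha (fun n => sq_nonneg (b n)) sa s2
  have hA : 0 ≤ ∑' n, a n := tsum_nonneg ha
  have key : ∀ n, cv a b n ^ 2 ≤ (∑' n, a n) * cv a (fun n => b n ^ 2) n := by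
    intro n
    have h1 := Finset.sum_sq_le_sum_mul_sum_of_sq_le_mul (Finset.HasAntidiagonal.antidiagonal n) (r := fun p => a p.1 * b p.2)
      (f := fun p => a p.1) (g := fun p => a p.1 * b p.2 ^ 2) (fun p _ => ha _) (fun p _ => mul_nonneg (ha _) (sq_nonneg _))
      (fun p _ => le_of_eq (by ring))
    refine h1.trans (mul_le_mul_of_nonneg_right ?_ (cv_nonneg ha (fun n => sq_nonneg _) n))
    rw [Finset.Nat.sum_antidiagonal_eq_sum_range_succ_mk]
    exact sa.sum_le_tsum _ (fun i _ => ha i)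
  have h3 := h.mul_left (∑' n, a n)
  have hs : Summable (fun n => cv a b n ^ 2) := Summable.of_nonneg_of_le (fun n => sq_nonneg _) key h3.summable
  refine ⟨hs, (hs.tsum_le_tsum key h3.summable).trans (le_of_eq ?_)⟩
  rw [h3.tsum_eq]; ring

lemma g_rec {γ : ℂ → ℂ} (h : Gam γ) (n : ℕ) : tc γ (n+1) = cv (tc (RR γ)) (tc γ) n := by
  have hk : DifferentiableOn ℂ (fun z => RR γ z * γ z) (ball 0 1) := h.Rdiff.mul h.diff
  have := tc_unique (h := γ) (δ := 1) (c := fun n => Nat.casesOn n 1 (fun m => tc (fun z => RR γ z * γ z) m)) one_pos (by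
    intro z hz
    rw [← hasSum_nat_add_iff' 1]
    have h1 := (tc_hasSum hk hz).mul_left z
    have e : γ z - ∑ i ∈ Finset.range 1, (Nat.casesOn i 1 (fun m => tc (fun z => RR γ z * γ z) m) : ℂ) * z ^ i = z * (RR γ z * γ z) := by
      have := h.Req z
      have h2 := h.ne z hz
      have h3 : γ z * (γ z)⁻¹ = 1 := mul_inv_cancel₀ h2
      rw [this] at h3
      simp
      linear_combination h3
    rw [e]
    refine h1.congr_fun ?_
    intro m
    simp only []
    ring) (n+1)
  rw [this]
  simp only []
  rw [tc_mul h.Rdiff h.diff]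
  rfl

lemma g_zero {γ : ℂ → ℂ} (h : Gam γ) : tc γ 0 = 1 := by rw [tc_zero, h.one]

lemma g_one {γ : ℂ → ℂ} (h : Gam γ) : tc γ 1 = tc (RR γ) 0 := by
  rw [g_rec h 0]; simp [cv, g_zero h]

lemma cv_norm_le (a b : ℕ → ℂ) {s : ℝ} (hs : 0 ≤ s) (n : ℕ) :
    ‖cv a b n‖ * s^n ≤ cv (fun n => ‖a n‖ * s^n) (fun n => ‖b n‖ * s^n) n := by
  unfold cv
  calc _ ≤ (∑ p ∈ Finset.HasAntidiagonal.antidiagonal n, ‖a p.1 * b p.2‖) * s^n := by gcongr; exact norm_sum_le _ _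
    _ = _ := by
      rw [Finset.sum_mul]
      refine Finset.sum_congr rfl (fun p hp => ?_)
      have : p.1 + p.2 = n := Finset.HasAntidiagonal.mem_antidiagonal.1 hp
      rw [norm_mul, ← this, pow_add]; ring

lemma T_bound {Q : ℝ} (h0 : 0 ≤ Q) (h1 : Q < 1) : ∃ T, HasSum (fun j : ℕ => Q^(j+1) / (2*((j+1:ℕ):ℝ)+1)) T ∧ T ≤ Q/3 + Q^2/5 + Q^3/7/(1-Q) := by
  have hg := ((hasSum_geometric_of_lt_one h0 h1).mul_left (Q^3/7))
  have hs : Summable (fun j : ℕ => Q^(j+1) / (2*((j+1:ℕ):ℝ)+1)) := by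
    refine Summable.of_nonneg_of_le (fun j => by positivity) (fun j => ?_) ((summable_geometric_of_lt_one h0 h1).mul_left Q)
    rw [pow_succ', div_le_iff₀ (by positivity)]
    have : 0 ≤ Q * Q^j := by positivity
    push_cast
    nlinarith [(Nat.cast_nonneg j : (0:ℝ) ≤ j)]
  refine ⟨_, hs.hasSum, ?_⟩
  rw [← hs.sum_add_tsum_nat_add 2]
  have h3 : ∑' j : ℕ, Q^(j+2+1) / (2*((j+2+1:ℕ):ℝ)+1) ≤ Q^3/7/(1-Q) := by
    rw [div_eq_mul_inv (Q^3/7), ← hg.tsum_eq]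
    refine ((summable_nat_add_iff 2).2 hs).tsum_le_tsum (fun j => ?_) hg.summable
    rw [div_mul_eq_mul_div, ← pow_add, add_comm 3 j]
    gcongr
    · push_cast; linarith [(Nat.cast_nonneg j : (0:ℝ) ≤ j)]
  simp only [Finset.sum_range_succ, Finset.sum_range_zero]
  norm_num
  norm_num at h3
  linarith

lemma R_tail {γ : ℂ → ℂ} (h : Gam γ) {c s T y : ℝ} (hs : 0 ≤ s) (hs1 : s < 1) (hc : ‖tc (RR γ) 0‖ = c) 
   (hT : (s^2)/3 + (s^2)^2/5 + (s^2)^3/7/(1-s^2) ≤ T) (hc1 : c ≤ 1) (hy : 0 ≤ y) (hyy : (1 - c^2) * T ≤ y^2) :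
   ∑' j, ‖tc (RR γ) (j+1)‖ * s^(j+1) ≤ y := by
  obtain ⟨T', hT', hT2⟩ := T_bound (Q := s^2) (by positivity) (by nlinarith)
  have hc0 : 0 ≤ c := hc ▸ norm_nonneg _
  have := tail_cs (fun n => ‖tc (RR γ) n‖) (fun n => norm_nonneg _) (c := c) (T := T') (y := y)
    (fun j => s ^ j) (fun n => by positivity) h.area_a hc (by
      refine hT'.congr_fun ?_
      intro j; ring) hy (le_trans (mul_le_mul_of_nonneg_left (hT2.trans hT) (by nlinarith)) hyy)
  refine Real.tsum_le_of_sum_range_le (fun n => by positivity) this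

lemma star_A {γ : ℂ → ℂ} (h : Gam γ) {r : ℝ} (hr : 0.1715 < r) (hr2 : r < 0.1716) (hc : ‖tc (RR γ) 0‖ ≤ 0.98) :
    ∑' n, ‖tc γ n‖ * r ^ n ≤ 1 / (1 - r) := by
  norm_num at hr hr2 hc
  have r0 : 0 ≤ r := by linarith
  have r1 : r < 1 := by linarith
  set c := ‖tc (RR γ) 0‖ with hcd
  have hc0 : 0 ≤ c := norm_nonneg _
  have hc2 : 0 ≤ 1 - c^2 := by nlinarith
  have sR := tc_summable h.Rdiff r0 r1
  have sg := tc_summable h.diff r0 r1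
  have hr3 : r^2 ≤ 0.02945 := by norm_num; nlinarith
  have hr20 : 0 ≤ r^2 := sq_nonneg r
  norm_num at hr3
  have hT := R_tail h r0 r1 hcd.symm (T := 0.01) (y := Real.sqrt ((1-c^2) * 0.01)) (by
    have : (r^2)^3/7/(1-r^2) ≤ 0.000004 := by
      rw [div_le_iff₀ (by linarith)]
      have : (r^2)^3 ≤ (589/20000)^3 := by gcongr
      norm_num at this ⊢; linarith
    have : (r^2)^2 ≤ (589/20000)^2 := by gcongr
    norm_num at *; linarith) (by linarith) (Real.sqrt_nonneg _) (by rw [Real.sq_sqrt (by positivity)])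
  have h1 : ∑' j, ‖tc (RR γ) j‖ * r^j ≤ 1 := by
    rw [sR.tsum_eq_zero_add]
    have : Real.sqrt ((1-c^2) * 0.01) ≤ 1 - c := by
      rw [Real.sqrt_le_left (by linarith)]; norm_num; nlinarith
    simp only [pow_zero, mul_one, ← hcd]; linarith
  have hcv := cv_hasSum (fun n => by positivity) (fun n => by positivity) sR sg
  have h2 : ∑' n, ‖tc γ (n+1)‖ * r^(n+1) ≤ r * ((∑' j, ‖tc (RR γ) j‖ * r^j) * ∑' n, ‖tc γ n‖ * r ^ n) := by
    rw [← (hcv.mul_left r).tsum_eq]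
    refine ((summable_nat_add_iff 1).2 sg).tsum_le_tsum (fun n => ?_) (hcv.mul_left r).summable
    rw [g_rec h, pow_succ']
    have := cv_norm_le (tc (RR γ)) (tc γ) r0 n
    nlinarith
  have e := sg.tsum_eq_zero_add
  simp only [g_zero h, norm_one, pow_zero, mul_one] at e
  have hS : 0 ≤ ∑' n, ‖tc γ n‖ * r ^ n := tsum_nonneg (fun n => by positivity)
  rw [le_div_iff₀ (by linarith)]
  have h3 : (∑' j, ‖tc (RR γ) j‖ * r^j) * ∑' n, ‖tc γ n‖ * r ^ n ≤ ∑' n, ‖tc γ n‖ * r ^ n := by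
    nlinarith
  nlinarith

lemma phase {a : ℂ} {p : ℝ} (hp : 0 < p) : ‖a‖ ≤ a.re + ‖a - p‖^2 / (2 * p) := by
  have h1 : ‖a - p‖^2 = ‖a‖^2 - 2 * p * a.re + p^2 := by
    rw [← Complex.normSq_eq_norm_sq, ← Complex.normSq_eq_norm_sq, Complex.normSq_apply, Complex.normSq_apply]
    simp; ring
  have : ‖a - p‖^2 / (2 * p) = (‖a‖^2 + p^2) / (2*p) - a.re := by
    rw [h1]; field_simp; ring
  rw [this]
  have : ‖a‖ ≤ (‖a‖^2 + p^2) / (2*p) := by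
    rw [le_div_iff₀ (by positivity)]; nlinarith [sq_nonneg (‖a‖ - p)]
  linarith

lemma loss {γ : ℂ → ℂ} (h : Gam γ) {c ε Q : ℝ} (hc : tc (RR γ) 0 = c) (hε : ε = 1 - c) (hε0 : 0 ≤ ε) (hε1 : ε ≤ 0.02)
    (hQ0 : 0 ≤ Q) (hQ : Q ≤ 0.1752) : Summable (fun n => Q^n * ‖tc γ n - (c:ℂ)^n‖^2) ∧ ∑' n, Q^n * ‖tc γ n - (c:ℂ)^n‖^2 ≤ 0.0895 * ε := by
  norm_num at hε1 hQ
  set s := Real.sqrt Q with hs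
  have s0 : 0 ≤ s := Real.sqrt_nonneg _
  have s2 : s^2 = Q := Real.sq_sqrt hQ0
  have s1 : s < 1 := by nlinarith
  have c1 : c ≤ 1 := by linarith
  have c0 : 0 ≤ c := by linarith
  have hcn : ‖tc (RR γ) 0‖ = c := by rw [hc]; simp [abs_of_nonneg c0]
  set E : ℕ → ℝ := fun n => ‖(if n = 0 then 0 else tc (RR γ) n)‖ * s^n with hE
  set G : ℕ → ℝ := fun n => ‖tc γ n‖ * s^n with hG
  set y : ℕ → ℝ := fun n => ‖tc γ n - (c:ℂ)^n‖ * s^n with hy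
  have E0 : ∀ n, 0 ≤ E n := fun n => by positivity
  have G0 : ∀ n, 0 ≤ G n := fun n => by positivity
  have y0 : ∀ n, 0 ≤ y n := fun n => by positivity
  have sR := tc_summable h.Rdiff s0 s1
  have sG : Summable G := tc_summable h.diff s0 s1
  have sgeo := summable_geometric_of_lt_one s0 s1
  have sE : Summable E := by
    refine Summable.of_nonneg_of_le E0 (fun n => ?_) sR
    simp only [hE]; gcongr; split_ifs <;> simp
  have sy : Summable y := by
    refine Summable.of_nonneg_of_le y0 (fun n => ?_) (sG.add sgeo)
    have : ‖tc γ n - (c:ℂ)^n‖ ≤ ‖tc γ n‖ + 1 := by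
      refine (norm_sub_le _ _).trans ?_
      gcongr
      rw [norm_pow]; apply pow_le_one₀ (norm_nonneg _); simp [abs_of_nonneg c0, c1]
    simp only [hy, hG]
    calc _ ≤ (‖tc γ n‖ + 1) * s^n := by gcongr
      _ = _ := by ring
  have sG2 := sq_summable G0 sG
  have sy2 := sq_summable y0 sy
  have hy2 : ∀ n, y n ^ 2 = Q^n * ‖tc γ n - (c:ℂ)^n‖^2 := by
    intro n; simp only [hy]; rw [mul_pow, ← pow_mul, mul_comm n 2, pow_mul, s2]; ring
  -- bound for the l1 norm of E
  have he : (∑' n, E n) ≤ Real.sqrt (0.1314 * ε) := by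
    rw [sE.tsum_eq_zero_add]
    have e : (fun n => E (n+1)) = fun j => ‖tc (RR γ) (j+1)‖ * s^(j+1) := by funext j; simp [hE]
    rw [e]
    have := R_tail h s0 s1 hcn (T := 0.0657) (y := Real.sqrt (0.1314 * ε)) (by
      rw [s2]
      have : Q^3/7/(1-Q) ≤ 0.00095 := by
        rw [div_le_iff₀ (by linarith)]
        have : Q^3 ≤ (219/1250)^3 := by gcongr
        norm_num at this ⊢; linarith
      have : Q^2 ≤ (219/1250)^2 := by gcongr
      norm_num at *; linarith) c1 (Real.sqrt_nonneg _) (by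
        rw [Real.sq_sqrt (by positivity), show c = 1 - ε by linarith]; norm_num; nlinarith)
    simp only [hE, if_true, norm_zero, zero_mul, zero_add]
    exact this
  have hesq : (∑' n, E n)^2 ≤ 0.1314 * ε := by
    have : 0 ≤ ∑' n, E n := tsum_nonneg E0
    calc _ ≤ (Real.sqrt (0.1314 * ε))^2 := by gcongr
      _ = _ := Real.sq_sqrt (by positivity)
  obtain ⟨sC, hC⟩ := young E0 G0 sE sG
  -- recursion
  have hrec : ∀ n, y (n+1) ≤ s * (y n + cv E G n) := by
    intro n
    have e : tc γ (n+1) - (c:ℂ)^(n+1) = c * (tc γ n - (c:ℂ)^n) + cv (fun n => if n = 0 then 0 else tc (RR γ) n) (tc γ) n := by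
      rw [g_rec h]
      have : cv (tc (RR γ)) (tc γ) n = c * tc γ n + cv (fun n => if n = 0 then 0 else tc (RR γ) n) (tc γ) n := by
        unfold cv
        rw [Finset.Nat.sum_antidiagonal_eq_sum_range_succ_mk, Finset.Nat.sum_antidiagonal_eq_sum_range_succ_mk, Finset.sum_range_succ', Finset.sum_range_succ']
        simp [hc]; ring
      rw [this]; ring
    simp only [hy]
    rw [e, pow_succ']
    have h1 := cv_norm_le (fun n => if n = 0 then 0 else tc (RR γ) n) (tc γ) s0 n
    have h2 : ‖c * (tc γ n - (c:ℂ)^n) + cv (fun n => if n = 0 then 0 else tc (RR γ) n) (tc γ) n‖ ≤ 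
       ‖tc γ n - (c:ℂ)^n‖ + ‖cv (fun n => if n = 0 then 0 else tc (RR γ) n) (tc γ) n‖ := by
      refine (norm_add_le _ _).trans ?_
      gcongr
      rw [norm_mul]
      have : ‖(c:ℂ)‖ ≤ 1 := by simp [abs_of_nonneg c0, c1]
      exact mul_le_of_le_one_left (norm_nonneg _) this
    calc _ ≤ (‖tc γ n - (c:ℂ)^n‖ + ‖cv (fun n => if n = 0 then 0 else tc (RR γ) n) (tc γ) n‖) * (s * s^n) := by gcongr
      _ = s * (‖tc γ n - (c:ℂ)^n‖ * s^n + ‖cv (fun n => if n = 0 then 0 else tc (RR γ) n) (tc γ) n‖ * s^n) := by ring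
      _ ≤ _ := by gcongr
  have hrec2 : ∀ n, y (n+1)^2 ≤ Q * (2.39 * y n ^ 2 + 1.72 * cv E G n ^ 2) := by
    intro n
    have h1 : y (n+1)^2 ≤ (s * (y n + cv E G n))^2 := by
      have := y0 (n+1); have := hrec n; gcongr
    rw [mul_pow s, s2] at h1
    refine h1.trans (mul_le_mul_of_nonneg_left ?_ hQ0)
    norm_num
    nlinarith [sq_nonneg (1.39 * y n - cv E G n), sq_nonneg (cv E G n)]
  have Y1 : ∑' n, y n ^ 2 ≤ Q * (2.39 * (∑' n, y n ^ 2) + 1.72 * ∑' n, cv E G n ^ 2) := by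
    have hs3 := ((sy2.hasSum.mul_left 2.39).add (sC.hasSum.mul_left 1.72)).mul_left Q
    have e := sy2.tsum_eq_zero_add
    have ez : y 0 = 0 := by simp [hy, g_zero h]
    rw [ez] at e
    have := ((summable_nat_add_iff 1).2 sy2).tsum_le_tsum hrec2 hs3.summable
    rw [hs3.tsum_eq] at this
    simp only [zero_pow two_ne_zero, zero_add] at e
    linarith
  have Γ1 : ∑' n, G n ^ 2 ≤ 27 * (∑' n, y n ^ 2) + 27/26 * (1 - Q)⁻¹ := by
    have hs3 := (sy2.hasSum.mul_left 27).add ((hasSum_geometric_of_lt_one hQ0 (by linarith)).mul_left (27/26))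
    rw [← hs3.tsum_eq]
    refine sG2.tsum_le_tsum (fun n => ?_) hs3.summable
    have h1 : G n ≤ y n + s^n := by
      have : ‖tc γ n‖ ≤ ‖tc γ n - (c:ℂ)^n‖ + 1 := by
        have h5 : ‖(c:ℂ)^n‖ ≤ 1 := by rw [norm_pow]; apply pow_le_one₀ (norm_nonneg _); simp [abs_of_nonneg c0, c1]
        have := norm_sub_norm_le (tc γ n) ((c:ℂ)^n)
        linarith
      simp only [hy, hG]
      calc _ ≤ (‖tc γ n - (c:ℂ)^n‖ + 1) * s^n := by gcongr
        _ = _ := by ring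
    have h2 : G n ^ 2 ≤ (y n + s^n)^2 := by have := G0 n; gcongr
    have h3 : Q^n = (s^n)^2 := by rw [← s2]; ring
    rw [h3]
    nlinarith [sq_nonneg (26 * y n - s^n)]
  have hinv : (1 - Q)⁻¹ ≤ 1.2125 := by
    rw [inv_le_comm₀ (by linarith) (by norm_num)]; norm_num; linarith
  simp only [hy2] at sy2
  refine ⟨sy2, ?_⟩
  simp only [← hy2]
  have Y0 : 0 ≤ ∑' n, y n ^ 2 := tsum_nonneg (fun n => sq_nonneg _)
  have Γ0 : 0 ≤ ∑' n, G n ^ 2 := tsum_nonneg (fun n => sq_nonneg _)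
  have C0 : 0 ≤ ∑' n, cv E G n ^ 2 := tsum_nonneg (fun n => sq_nonneg _)
  set Y := ∑' n, y n ^ 2
  set Γ := ∑' n, G n ^ 2
  set C := ∑' n, cv E G n ^ 2
  set e := ∑' n, E n
  clear_value Y Γ C e
  have hC2 : C ≤ 0.1314 * ε * Γ := hC.trans (mul_le_mul_of_nonneg_right hesq Γ0)
  have Y2 : Y ≤ 0.1752 * (2.39 * Y + 1.72 * C) := Y1.trans (by norm_num at *; gcongr)
  have Γ2 : Γ ≤ 27 * Y + 1.2592 := by norm_num at *; linarith
  have Y3 : Y ≤ 0.5185 * C := by norm_num at *; linarith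
  have h5 : ε * Γ ≤ ε * (27 * Y + 1.2592) := mul_le_mul_of_nonneg_left Γ2 hε0
  have h6 : ε * Y ≤ 0.02 * Y := mul_le_mul_of_nonneg_right (by norm_num; linarith) Y0
  norm_num at *
  linarith

lemma re_inv_le {w : ℂ} {m : ℝ} (hm : 0 < m) (hw : m ≤ w.re) : (w⁻¹).re ≤ 1 / m := by
  rw [Complex.inv_re, Complex.normSq_apply]
  have : 0 < w.re := by linarith
  rw [div_le_div_iff₀ (by nlinarith [sq_nonneg w.im]) hm]
  nlinarith [sq_nonneg w.im]

lemma star_B {γ : ℂ → ℂ} (h : Gam2 γ) {r c : ℝ} (hr : 0.1715 < r) (hr2 : r < 0.1716) (hc : tc (RR γ) 0 = c) (hc1 : c ≤ 1)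
    (hc2 : 0.98 ≤ c) : ∑' n, ‖tc γ n‖ * r ^ n ≤ 1 / (1 - r) := by
  have hst := stab h hc (ε := 1 - c) rfl (by linarith) (by norm_num at *; linarith) hr hr2
  have hl := loss h.toGam (ε := 1 - c) (Q := r / c) hc rfl (by linarith) (by norm_num at *; linarith) (by norm_num at *; positivity) (by
    norm_num at *
    rw [div_le_iff₀ (by linarith)]; linarith)
  norm_num at hr hr2 hc2 hst hl
  have r0 : 0 ≤ r := by linarith
  have r1 : r < 1 := by linarith
  have c0 : 0 < c := by linarith
  obtain ⟨sl, hl⟩ := hl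
  have sg := tc_summable h.diff r0 r1
  have rb : (r:ℂ) ∈ ball (0:ℂ) 1 := by simp [abs_of_nonneg r0, r1]
  have hre : HasSum (fun n => (tc γ n).re * r^n) (γ r).re := by
    have := Complex.reCLM.hasSum (tc_hasSum h.diff rb)
    refine this.congr_fun ?_
    intro n
    simp only [Function.comp, Complex.reCLM_apply]
    rw [← Complex.ofReal_pow, Complex.re_mul_ofReal]
  have hsum := hre.add (sl.hasSum.mul_left (1/2))
  have h1 : ∑' n, ‖tc γ n‖ * r ^ n ≤ (γ r).re + 1/2 * ∑' n, (r/c)^n * ‖tc γ n - (c:ℂ)^n‖^2 := by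
    rw [← hsum.tsum_eq]
    refine sg.tsum_le_tsum (fun n => ?_) hsum.summable
    have hp := phase (a := tc γ n) (p := c^n) (by positivity)
    calc _ ≤ ((tc γ n).re + ‖tc γ n - ((c^n:ℝ):ℂ)‖^2 / (2 * c^n)) * r^n := by gcongr
      _ = _ := by push_cast; rw [div_pow]; field_simp
  have hrr : (rp (RR γ) r).re = (RR γ r).re := by
    unfold rp
    rw [Complex.conj_ofReal, Complex.add_conj]; simp
  rw [hrr] at hst
  have h2 : (γ r).re ≤ 1 / (1 - r + r * (11/50 * (1 - c))) := by
    have e : γ r = (1 - r * RR γ r)⁻¹ := by rw [← h.Req, inv_inv]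
    rw [e]
    refine re_inv_le (by nlinarith) ?_
    rw [Complex.sub_re, Complex.re_ofReal_mul, Complex.one_re]
    nlinarith
  have h3 : 1 / (1 - r + r * (11/50 * (1 - c))) + 0.045 * (1 - c) ≤ 1 / (1 - r) := by
    set ε := 1 - c
    have e0 : 0 ≤ ε := by simp only [ε]; linarith
    have e1 : ε ≤ 1/50 := by simp only [ε]; linarith
    have d1 : 0 < 1 - r := by linarith
    set δ := r * (11/50 * ε) with hδ
    have δ0 : 0 ≤ δ := by positivity
    have δ1 : 0.0377 * ε ≤ δ := by norm_num; nlinarith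
    have δ2 : δ ≤ 0.001 := by norm_num; nlinarith
    have d2 : 0 < 1 - r + δ := by linarith
    have : 1 / (1 - r) - 1 / (1 - r + δ) = δ / ((1 - r) * (1 - r + δ)) := by field_simp; ring
    have h5 : 0.045 * ε ≤ δ / ((1 - r) * (1 - r + δ)) := by
      rw [le_div_iff₀ (by positivity)]
      have : (1 - r) * (1 - r + δ) ≤ 0.8285 * 0.8295 :=
        mul_le_mul (by norm_num at *; linarith) (by norm_num at *; linarith) d2.le (by norm_num)
      calc _ ≤ 0.045 * ε * (0.8285 * 0.8295) := by gcongr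
        _ ≤ _ := by norm_num at *; linarith
    linarith
  norm_num at *
  linarith

lemma tc_rot {k : ℂ → ℂ} (hk : DifferentiableOn ℂ k (ball 0 1)) {w : ℂ} (hw : ‖w‖ = 1) (n : ℕ) :
    tc (fun z => k (w * z)) n = tc k n * w ^ n := by
  refine tc_unique (c := fun n => tc k n * w ^ n) one_pos ?_ n
  intro z hz
  refine (tc_hasSum hk (z := w * z) (by simpa [hw] using hz)).congr_fun ?_
  intro n; rw [mul_pow]; ring

lemma Gam2.rot {γ : ℂ → ℂ} (h : Gam2 γ) {w : ℂ} (hw : ‖w‖ = 1) : Gam2 (fun z => γ (w * z)) := by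
  have hm : ∀ {z : ℂ}, z ∈ ball (0:ℂ) 1 → w * z ∈ ball (0:ℂ) 1 := fun {z} hz => by simpa [hw] using hz
  have hw0 : w ≠ 0 := by rw [← norm_pos_iff, hw]; norm_num
  refine { diff := ?_, one := ?_, ne := ?_, inj := ?_, dne := ?_ }
  · exact h.diff.comp (by fun_prop) (fun z hz => hm hz)
  · simp [h.one]
  · exact fun z hz => h.ne _ (hm hz)
  · intro x hx y hy e
    simp only at e
    have := h.inj (hm hx) (hm hy) (by simp only; linear_combination w * e)
    exact mul_left_cancel₀ hw0 this
  · intro z hz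
    have h1 := h.dne _ (hm hz)
    have hd : DifferentiableAt ℂ (fun z => z * γ z ^ 2) (w * z) := by
      have := h.diff.differentiableAt (isOpen_ball.mem_nhds (hm hz))
      fun_prop
    have h2 := HasDerivAt.comp (h₂ := fun z => z * γ z ^ 2) z hd.hasDerivAt ((hasDerivAt_id z).const_mul w)
    have h3 := h2.const_mul w⁻¹
    have e : (fun z => z * γ (w * z) ^ 2) = fun z => w⁻¹ * ((fun z => z * γ z ^ 2) ∘ HMul.hMul w) z := by
      funext z; simp only [Function.comp]; field_simp
    rw [e, h3.deriv]
    simp only [mul_one]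
    exact mul_ne_zero (inv_ne_zero hw0) (mul_ne_zero h1 hw0)

lemma R0_le {γ : ℂ → ℂ} (h : Gam γ) : ‖tc (RR γ) 0‖ ≤ 1 := by
  have := h.area_a 1
  simp at this
  exact this

lemma star {γ : ℂ → ℂ} (h : Gam2 γ) {r : ℝ} (hr : 0.1715 < r) (hr2 : r < 0.1716) :
    ∑' n, ‖tc γ n‖ * r ^ n ≤ 1 / (1 - r) := by
  by_cases hc : ‖tc (RR γ) 0‖ ≤ 0.98
  · exact star_A h.toGam hr hr2 hc
  push Not at hc
  norm_num at hc
  set c := ‖tc (RR γ) 0‖ with hcd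
  have c0 : 0 < c := by linarith
  set w : ℂ := conj (tc (RR γ) 0) / c with hwd
  have hw : ‖w‖ = 1 := by
    rw [hwd, norm_div, RCLike.norm_conj, Complex.norm_real, Real.norm_eq_abs, abs_of_pos c0, ← hcd]; field_simp
  have h2 := h.rot hw
  have e := g_one h2.toGam
  rw [tc_rot h.diff hw, g_one h.toGam, pow_one] at e
  have e2 : tc (RR γ) 0 * w = c := by
    have hcc : (c:ℂ) ≠ 0 := by exact_mod_cast c0.ne'
    rw [hwd, ← mul_div_assoc, Complex.mul_conj, Complex.normSq_eq_norm_sq, ← hcd]; push_cast; field_simp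
  rw [e2] at e
  have := star_B h2 hr hr2 e.symm (R0_le h.toGam) (by norm_num; linarith)
  refine le_trans (le_of_eq ?_) this
  congr 1; funext n
  rw [tc_rot h.diff hw, norm_mul, norm_pow, hw]; simp

/-- coefficient bound for the univalent function itself -/
lemma star_sq {γ : ℂ → ℂ} (h : Gam2 γ) {r ρ : ℝ} (hr : 0.1715 < r) (hr2 : r < 0.1716) (hr3 : r ^ 2 = 6 * r - 1) (hρ0 : 0 ≤ ρ) (hρ : ρ ≤ r) :
    Summable (fun n => ‖tc (fun z => γ z ^ 2) n‖ * ρ ^ (n + 1)) ∧ ∑' n, ‖tc (fun z => γ z ^ 2) n‖ * ρ ^ (n + 1) ≤ 1 / 4 := by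
  have hst := star h hr hr2
  norm_num at hr hr2
  have r0 : 0 ≤ r := by linarith
  have r1 : r < 1 := by linarith
  have hd : DifferentiableOn ℂ (fun z => γ z ^ 2) (ball 0 1) := h.diff.pow 2
  have sg := tc_summable h.diff r0 r1
  have s2 := tc_summable hd r0 r1
  have sρ := (tc_summable hd hρ0 (hρ.trans_lt r1)).mul_right ρ
  have hcv := cv_hasSum (fun n => by positivity) (fun n => by positivity) sg sg
  have h1 : ∑' n, ‖tc (fun z => γ z ^ 2) n‖ * r ^ n ≤ (1 / (1-r)) * (1 / (1 - r)) := by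
    have hS : 0 ≤ ∑' n, ‖tc γ n‖ * r ^ n := tsum_nonneg (fun n => by positivity)
    calc _ ≤ (∑' n, ‖tc γ n‖ * r ^ n) * ∑' n, ‖tc γ n‖ * r ^ n := by
          rw [← hcv.tsum_eq]
          refine s2.tsum_le_tsum (fun n => ?_) hcv.summable
          simp only [sq]
          rw [tc_mul h.diff h.diff]
          exact cv_norm_le (tc γ) (tc γ) r0 n
      _ ≤ _ := mul_self_le_mul_self hS hst
  have e : ∀ n, ‖tc (fun z => γ z ^ 2) n‖ * ρ ^ (n + 1) = ‖tc (fun z => γ z ^ 2) n‖ * ρ ^ n * ρ := fun n => by ring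
  simp only [e]
  refine ⟨sρ, ?_⟩
  calc _ ≤ ∑' n, ‖tc (fun z => γ z ^ 2) n‖ * r ^ n * r := by
        refine sρ.tsum_le_tsum (fun n => ?_) (s2.mul_right r)
        gcongr
    _ = (∑' n, ‖tc (fun z => γ z ^ 2) n‖ * r ^ n) * r := tsum_mul_right
    _ ≤ (1 / (1-r)) * (1 / (1 - r)) * r := by gcongr
    _ = 1 / 4 := by
      have : (1:ℝ) - r ≠ 0 := by linarith
      field_simp
      nlinarith

lemma koebe {γ : ℂ → ℂ} (h : Gam γ) {w : ℂ} (hw : ∀ z ∈ ball (0:ℂ) 1, z * γ z ^ 2 ≠ w) : 1/4 ≤ ‖w‖ := by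
  have zb : (0:ℂ) ∈ ball (0:ℂ) 1 := by simp
  have hw0 : w ≠ 0 := by
    have := hw 0 zb
    simpa using this.symm
  have hd : DifferentiableOn ℂ (fun z => 1 - z * γ z ^ 2 / w) (ball 0 1) := by
    have := h.diff
    fun_prop
  obtain ⟨q, hq, hq0, hqe⟩ := log_lemma hd (by
    intro z hz e
    apply hw z hz
    field_simp at e
    linear_combination -e)
  simp only [zero_mul, zero_div, sub_zero, one_mul] at hqe
  have hG : Gam (fun z => γ z * Complex.exp (- q z / 2)) := by
    have e2 : ∀ z ∈ ball (0:ℂ) 1, z * (γ z * Complex.exp (- q z / 2)) ^ 2 * (1 - z * γ z ^ 2 / w) = z * γ z ^ 2 := by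
      intro z hz
      rw [hqe z hz, mul_pow, ← Complex.exp_nat_mul]
      have : Complex.exp ((2:ℕ) * (- q z / 2)) * Complex.exp (q z) = 1 := by
        rw [← Complex.exp_add, ← Complex.exp_zero]; congr 1; push_cast; ring
      linear_combination z * γ z ^ 2 * this
    refine { diff := ?_, one := ?_, ne := ?_, inj := ?_ }
    · have := h.diff
      fun_prop
    · simp [h.one, hq0]
    · exact fun z hz => mul_ne_zero (h.ne z hz) (Complex.exp_ne_zero _)
    · intro x hx y hy e
      simp only at e
      have e1 := e2 x hx
      have e3 := e2 y hy
      refine h.inj hx hy ?_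
      simp only
      rw [e] at e1
      set m := y * (γ y * Complex.exp (- q y / 2)) ^ 2
      have n1 : 1 + m / w ≠ 0 := by
        intro hz
        have h5 : m = -w := by field_simp at hz; linear_combination hz
        rw [h5] at e1
        field_simp at e1
        apply hw0; linear_combination -e1
      apply mul_right_cancel₀ n1
      field_simp at e1 e3 ⊢
      linear_combination e3 - e1
  have hq' : deriv q 0 = - 1 / w := by
    have h1 := (hq.differentiableAt (isOpen_ball.mem_nhds zb)).hasDerivAt.cexp
    have hγ := (h.diff.differentiableAt (isOpen_ball.mem_nhds zb)).hasDerivAt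
    have h2 := ((((hasDerivAt_id (0:ℂ)).mul (hγ.pow 2)).div_const w).const_sub 1)
    have h3 := h2.congr_of_eventuallyEq (f₁ := fun z => Complex.exp (q z)) (by
      filter_upwards [isOpen_ball.mem_nhds zb] with z hz
      rw [← hqe z hz]; simp)
    have := h1.unique h3
    simp [hq0, h.one] at this
    rw [this]; field_simp
  have e1 : tc (fun z => γ z * Complex.exp (- q z / 2)) 1 = tc γ 1 + 1 / (2 * w) := by
    rw [tc_one, tc_one]
    have h1 := (((hq.differentiableAt (isOpen_ball.mem_nhds zb)).hasDerivAt.neg).div_const 2).cexp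
    have hγ := (h.diff.differentiableAt (isOpen_ball.mem_nhds zb)).hasDerivAt
    have := (hγ.mul h1).deriv
    refine Eq.trans ?_ (this.trans ?_)
    · rfl
    · simp [hq0, h.one, hq']; field_simp
  have e2 : (1 / w) / 2 = tc (RR (fun z => γ z * Complex.exp (- q z / 2))) 0 - tc (RR γ) 0 := by
    rw [← g_one hG, ← g_one h, e1]; field_simp; ring
  have h3 : ‖(1 / w) / 2‖ ≤ 2 := by
    rw [e2]; refine (norm_sub_le _ _).trans ?_
    linarith [R0_le hG, R0_le h]
  rw [norm_div, norm_div, norm_one, Complex.norm_two] at h3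
  have hwn : 0 < ‖w‖ := norm_pos_iff.2 hw0
  have h4 : 1 / ‖w‖ ≤ 4 := by linarith
  rw [div_le_iff₀ hwn] at h4
  linarith

lemma tc_shift {k : ℂ → ℂ} (hk : DifferentiableOn ℂ k (ball 0 1)) (n : ℕ) :
    tc (fun z => z * k z) (n+1) = tc k n := by
  have := tc_unique (h := fun z => z * k z) (δ := 1) (c := fun n => Nat.casesOn n 0 (fun m => tc k m)) one_pos (by
    intro z hz
    rw [← hasSum_nat_add_iff' 1]
    have h1 := (tc_hasSum hk hz).mul_left z
    have e : z * k z - ∑ i ∈ Finset.range 1, (Nat.casesOn i 0 (fun m => tc k m) : ℂ) * z ^ i = z * k z := by simp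
    rw [e]
    refine h1.congr_fun ?_
    intro m
    simp only []
    ring) (n+1)
  rw [this]

lemma tc_sub_const (k : ℂ → ℂ) (a : ℂ) (n : ℕ) : tc (fun z => k z - a) (n+1) = tc k (n+1) := by
  unfold tc
  rw [iteratedDeriv_succ', iteratedDeriv_succ']
  congr 2
  funext z
  exact deriv_sub_const a

lemma bohr_tail {η : ℂ → ℂ} (hd : DifferentiableOn ℂ η (ball 0 1)) (hb : ∀ z ∈ ball (0:ℂ) 1, ‖η z‖ ≤ 1)
    {r ρ : ℝ} (hr : 0.1715 < r) (hr2 : r < 0.1716) (hr3 : r ^ 2 = 6 * r - 1) (hρ0 : 0 ≤ ρ) (hρ : ρ ≤ r) :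
    ∑' n, ‖tc η n‖ * ρ ^ n ≤ 1 := by
  norm_num at hr hr2
  have zb : (0:ℂ) ∈ ball (0:ℂ) 1 := by simp
  set s := (1 - r) / 2 with hs
  have s2 : s ^ 2 = r := by rw [hs]; linarith
  have s0 : 0 < s := by rw [hs]; linarith
  have s1 : s < 1 := by rw [hs]; linarith
  have s3 : 2 * s^2 = (1 - s)^2 := by rw [hs]; nlinarith
  clear_value s
  obtain ⟨v, hv, hv2⟩ : ∃ v : ℂ, ‖v‖ = 1 ∧ v * η 0 = ‖η 0‖ := by
    by_cases h0 : η 0 = 0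
    · exact ⟨1, by simp, by simp [h0]⟩
    · refine ⟨conj (η 0) / ‖η 0‖, ?_, ?_⟩
      · rw [norm_div, RCLike.norm_conj, Complex.norm_real, norm_norm, div_self (norm_ne_zero_iff.2 h0)]
      · have : (‖η 0‖ : ℂ) ≠ 0 := by exact_mod_cast norm_ne_zero_iff.2 h0
        rw [div_mul_eq_mul_div, mul_comm, Complex.mul_conj, Complex.normSq_eq_norm_sq]; push_cast; field_simp
  have main : ∀ M, 1 - ‖η 0‖ < M → ∑' n, ‖tc η (n+1)‖ * ρ ^ (n+1) ≤ M := by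
    intro M hM
    have M0 : 0 < M := by linarith [hb 0 zb]
    have hBC : ∀ z ∈ sphere (0:ℂ) s, ‖η z - η 0‖ ≤ 2 * M * s / (1 - s) := by
      intro z hz
      have hz' : ‖z‖ = s := by simpa using hz
      have := Complex.borelCaratheodory_zero (f := fun z => v * (η z - η 0)) (R := 1) (z := z) M0 (by fun_prop) (by
        intro z hz
        simp only [mem_ofPred_eq]
        rw [mul_sub, hv2, Complex.sub_re, Complex.ofReal_re]
        have h1 : (v * η z).re ≤ 1 := (Complex.re_le_norm _).trans (by rw [norm_mul, hv, one_mul]; exact hb z hz)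
        linarith) one_pos (by simpa [hz'] using s1) (by simp)
      rw [norm_mul, hv, one_mul, hz'] at this
      exact this
    have hco : ∀ n, ‖tc η (n+1)‖ ≤ 2 * M * s / (1 - s) / s ^ (n+1) := by
      intro n
      rw [← tc_sub_const η (η 0)]
      have := Complex.norm_iteratedDeriv_le_of_forall_mem_sphere_norm_le (n+1) (f := fun z => η z - η 0) (c := 0) (R := s) (C := 2 * M * s / (1 - s)) s0 (by
        refine (DifferentiableOn.diffContOnCl ?_)
        rw [closure_ball _ s0.ne']
        exact (hd.sub_const _).mono (closedBall_subset_ball s1)) hBC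
      unfold tc
      rw [norm_mul, norm_inv, Complex.norm_natCast, inv_mul_le_iff₀ (by positivity)]
      refine this.trans (le_of_eq ?_)
      ring
    have hq0 : 0 ≤ ρ / s := by positivity
    have hqs : ρ / s ≤ s := by rw [div_le_iff₀ s0]; nlinarith
    have hgeo := ((hasSum_geometric_of_lt_one hq0 (hqs.trans_lt s1)).mul_left (2 * M * s / (1 - s) * (ρ / s)))
    have sη := (summable_nat_add_iff 1).2 (tc_summable hd hρ0 (by linarith : ρ < 1))
    calc _ ≤ ∑' n, 2 * M * s / (1 - s) * (ρ / s) * (ρ / s)^n := by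
          refine sη.tsum_le_tsum (fun n => ?_) hgeo.summable
          calc _ ≤ 2 * M * s / (1 - s) / s ^ (n+1) * ρ ^ (n+1) := by gcongr; exact hco n
            _ = _ := by rw [mul_assoc (2 * M * s / (1 - s)), ← pow_succ', div_pow]; ring
      _ = 2 * M * s / (1 - s) * (ρ / s) * (1 - ρ / s)⁻¹ := hgeo.tsum_eq
      _ ≤ 2 * M * s / (1 - s) * s * (1 - s)⁻¹ := by
          have : 0 < 1 - s := by linarith
          have h7 : 0 < 1 - ρ / s := by linarith
          have h8 : (1 - ρ / s)⁻¹ ≤ (1 - s)⁻¹ := by gcongr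
          have h9 : 0 ≤ (1 - ρ / s)⁻¹ := by positivity
          gcongr
      _ = M * (2 * s^2) / (1 - s)^2 := by
          have : 1 - s ≠ 0 := by linarith
          field_simp
      _ = M := by
          have : 1 - s ≠ 0 := by linarith
          rw [s3]; field_simp
  have h2 : ∑' n, ‖tc η (n+1)‖ * ρ ^ (n+1) ≤ 1 - ‖η 0‖ := le_of_forall_gt_imp_ge_of_dense main
  rw [(tc_summable hd hρ0 (by linarith : ρ < 1)).tsum_eq_zero_add, tc_zero]
  simp; linarith

/-- majorant -/
def MM (ρ : ℝ) (k : ℂ → ℂ) : ℝ := ∑' n, ‖tc k n‖ * ρ ^ n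

lemma MM_nonneg {ρ : ℝ} (h : 0 ≤ ρ) (k : ℂ → ℂ) : 0 ≤ MM ρ k := tsum_nonneg (fun n => by positivity)

lemma MM_mul {ρ : ℝ} (h0 : 0 ≤ ρ) (h1 : ρ < 1) {k l : ℂ → ℂ} (hk : DifferentiableOn ℂ k (ball 0 1))
    (hl : DifferentiableOn ℂ l (ball 0 1)) : MM ρ (fun z => k z * l z) ≤ MM ρ k * MM ρ l := by
  have hcv := cv_hasSum (fun n => by positivity) (fun n => by positivity) (tc_summable hk h0 h1) (tc_summable hl h0 h1)
  unfold MM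
  rw [← hcv.tsum_eq]
  refine (tc_summable (hk.mul hl) h0 h1).tsum_le_tsum (fun n => ?_) hcv.summable
  have := cv_norm_le (tc k) (tc l) h0 n
  rw [cv, ← tc_mul hk hl] at this
  exact this

lemma MM_pow {ρ : ℝ} (h0 : 0 ≤ ρ) (h1 : ρ < 1) {k : ℂ → ℂ} (hk : DifferentiableOn ℂ k (ball 0 1)) (hM : MM ρ k ≤ ρ)
    (m : ℕ) : MM ρ (fun z => k z ^ m) ≤ ρ ^ m := by
  induction m with
  | zero =>
    have : ∀ n, ‖tc (fun z => k z ^ 0) n‖ * ρ^n = if n = 0 then 1 else 0 := by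
      intro n
      have := tc_unique (h := fun z => k z ^ 0) (δ := 1) (c := fun n => if n = 0 then 1 else 0) one_pos (by
        intro z hz
        have := hasSum_ite_eq (0:ℕ) (1:ℂ)
        simp only [pow_zero]
        refine this.congr_fun ?_
        intro m; by_cases hm : m = 0 <;> simp [hm]) n
      rw [this]
      by_cases hm : n = 0 <;> simp [hm]
    unfold MM
    simp only [this]
    simp
  | succ m ih =>
    simp only [pow_succ]
    refine (MM_mul h0 h1 (hk.pow m) hk).trans ?_
    exact mul_le_mul ih hM (MM_nonneg h0 _) (by positivity)

lemma MM_omega {ω : ℂ → ℂ} (hd : DifferentiableOn ℂ ω (ball 0 1)) (hb : ∀ z ∈ ball (0:ℂ) 1, ‖ω z‖ < 1) (h0 : ω 0 = 0)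
    {r ρ : ℝ} (hr : 0.1715 < r) (hr2 : r < 0.1716) (hr3 : r ^ 2 = 6 * r - 1) (hρ0 : 0 ≤ ρ) (hρ : ρ ≤ r) :
    MM ρ ω ≤ ρ := by
  have hη : DifferentiableOn ℂ (dslope ω 0) (ball 0 1) :=
    (Complex.differentiableOn_dslope (isOpen_ball.mem_nhds (by simp))).2 hd
  have hηb : ∀ z ∈ ball (0:ℂ) 1, ‖dslope ω 0 z‖ ≤ 1 := by
    intro z hz
    have := Complex.norm_dslope_le_div_of_mapsTo_ball (f := ω) (c := 0) (R₁ := 1) (R₂ := 1) (z := z) hd (by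
      intro z hz; rw [h0]; simpa using (hb z hz).le) hz
    simpa using this
  have h1 := bohr_tail hη hηb hr hr2 hr3 hρ0 hρ
  norm_num at hr hr2
  have e : ω = fun z => z * dslope ω 0 z := by
    funext z
    have := sub_smul_dslope ω 0 z
    simpa [h0] using this.symm
  have hsu := tc_summable hd hρ0 (by linarith : ρ < 1)
  have hc : ∀ n, tc ω (n+1) = tc (dslope ω 0) n := by
    intro n
    rw [← tc_shift hη n, ← e]
  unfold MM
  rw [hsu.tsum_eq_zero_add, tc_zero, h0, norm_zero, zero_mul, zero_add]
  simp only [hc]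
  have e2 : ∀ n, ‖tc (dslope ω 0) n‖ * ρ^(n+1) = ‖tc (dslope ω 0) n‖ * ρ^n * ρ := fun n => by ring
  simp only [e2]
  rw [tsum_mul_right]
  nlinarith

lemma dbl {c : ℕ → ℂ} {τ : ℕ → ℕ → ℂ} {ρ : ℝ} (hρ0 : 0 < ρ)
    (hsφ : Summable (fun n => ‖c n‖ * ρ^n)) (hsω : ∀ k : ℕ, Summable (fun n => ‖τ k n‖ * ρ ^ n))
    (hP : ∀ k, ∑' n, ‖τ k n‖ * ρ ^ n ≤ ρ ^ k) :
    (∀ z ∈ ball (0:ℂ) ρ, ∀ (o : ℕ → ℂ) (w : ℂ), (∀ k, HasSum (fun n => τ k n * z ^ n) (o k)) → HasSum (fun k => c k * o k) w →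
      HasSum (fun n => (∑' k, c k * τ k n) * z ^ n) w) ∧
    Summable (fun n => ‖∑' k, c k * τ k n‖ * ρ^n) ∧ ∑' n, ‖∑' k, c k * τ k n‖ * ρ^n ≤ ∑' n, ‖c n‖ * ρ ^ n := by
  have hdbl : Summable (fun p : ℕ × ℕ => ‖c p.1‖ * (‖τ p.1 p.2‖ * ρ ^ p.2)) := by
    have hnn : ∀ p : ℕ × ℕ, 0 ≤ ‖c p.1‖ * (‖τ p.1 p.2‖ * ρ ^ p.2) := fun p => by positivity
    refine (summable_prod_of_nonneg hnn).2 ⟨fun k => (hsω k).mul_left ‖c k‖, ?_⟩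
    refine Summable.of_nonneg_of_le (fun k => tsum_nonneg (fun n => by positivity)) (fun k => ?_) hsφ
    simp only
    rw [tsum_mul_left]
    exact mul_le_mul_of_nonneg_left (hP k) (norm_nonneg _)
  have hcol : ∀ n, Summable (fun k => ‖c k‖ * (‖τ k n‖ * ρ^n)) := fun n =>
    hdbl.prod_symm.prod_factor n
  have hcolc : ∀ n, Summable (fun k => ‖c k‖ * ‖τ k n‖) := by
    intro n
    have := (hcol n).mul_right (ρ^n)⁻¹
    refine this.congr (fun k => ?_)
    field_simp
  have hcolc2 : ∀ n, Summable (fun k => c k * τ k n) := by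
    intro n
    refine Summable.of_norm_bounded (hcolc n) (fun k => ?_)
    rw [norm_mul]
  have hle : ∀ n, ‖∑' k, c k * τ k n‖ * ρ^n ≤ ∑' k, ‖c k‖ * (‖τ k n‖ * ρ^n) := by
    intro n
    have e : ∀ k, ‖c k‖ * (‖τ k n‖ * ρ^n) = ‖c k‖ * ‖τ k n‖ * ρ^n := fun k => by ring
    simp only [e]
    rw [tsum_mul_right]
    gcongr
    have h5 : ∀ k, ‖c k * τ k n‖ = ‖c k‖ * ‖τ k n‖ := fun k => norm_mul _ _
    have := norm_tsum_le_tsum_norm (f := fun k => c k * τ k n) (by simpa only [h5] using hcolc n)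
    simpa only [h5] using this
  have hsw : Summable (fun n => ∑' k, ‖c k‖ * (‖τ k n‖ * ρ^n)) := hdbl.prod_symm.prod
  have hsψ : Summable (fun n => ‖∑' k, c k * τ k n‖ * ρ^n) := Summable.of_nonneg_of_le (fun n => by positivity) hle hsw
  refine ⟨?_, hsψ, ?_⟩
  · intro z hz o w ho hw
    have hz' : ‖z‖ ≤ ρ := by simpa using (mem_ball_zero_iff.1 hz).le
    have hs : Summable (fun p : ℕ × ℕ => c p.1 * (τ p.1 p.2 * z ^ p.2)) := by
      refine Summable.of_norm_bounded hdbl (fun p => ?_)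
      rw [norm_mul, norm_mul, norm_pow]
      gcongr
    have e1 : ∑' p : ℕ × ℕ, c p.1 * (τ p.1 p.2 * z ^ p.2) = w := by
      refine HasSum.unique (hs.hasSum.prod_fiberwise (g := fun k => c k * o k) (fun k => ?_)) hw
      exact (ho k).mul_left (c k)
    have h3 : HasSum (fun p : ℕ × ℕ => c p.2 * (τ p.2 p.1 * z ^ p.1)) w := by
      rw [← e1]
      exact (Equiv.prodComm ℕ ℕ).hasSum_iff.2 hs.hasSum
    refine h3.prod_fiberwise (fun n => ?_)
    have := (hcolc2 n).hasSum.mul_right (z^n)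
    refine this.congr_fun ?_
    intro k; simp only; ring
  · calc _ ≤ ∑' n, ∑' k, ‖c k‖ * (‖τ k n‖ * ρ^n) := hsψ.tsum_le_tsum hle hsw
      _ = ∑' k, ∑' n, ‖c k‖ * (‖τ k n‖ * ρ^n) := (Summable.tsum_comm (f := fun n k => ‖c k‖ * (‖τ k n‖ * ρ^n)) hdbl.prod_symm).symm
      _ ≤ _ := by
        refine hdbl.prod.tsum_le_tsum (fun k => ?_) hsφ
        rw [tsum_mul_left]
        exact mul_le_mul_of_nonneg_left (hP k) (norm_nonneg _)

lemma bohr {φ ω ψ : ℂ → ℂ} (hφ : DifferentiableOn ℂ φ (ball 0 1)) (hω : DifferentiableOn ℂ ω (ball 0 1))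
    (hb : ∀ z ∈ ball (0:ℂ) 1, ‖ω z‖ < 1) (h0 : ω 0 = 0) (hψ : ∀ z ∈ ball (0:ℂ) 1, ψ z = φ (ω z))
    {r ρ : ℝ} (hr : 0.1715 < r) (hr2 : r < 0.1716) (hr3 : r ^ 2 = 6 * r - 1) (hρ0 : 0 < ρ) (hρ : ρ ≤ r) :
    Summable (fun n => ‖tc ψ n‖ * ρ^n) ∧ MM ρ ψ ≤ MM ρ φ := by
  have hM := MM_omega hω hb h0 hr hr2 hr3 hρ0.le hρ
  norm_num at hr hr2
  have ρ1 : ρ < 1 := by linarith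
  have hωp : ∀ k : ℕ, DifferentiableOn ℂ (fun z => ω z ^ k) (ball 0 1) := fun k => hω.pow k
  obtain ⟨d1, d2, d3⟩ := dbl (c := tc φ) (τ := fun k => tc (fun z => ω z ^ k)) hρ0 (tc_summable hφ hρ0.le ρ1)
    (fun k => tc_summable (hωp k) hρ0.le ρ1) (MM_pow hρ0.le ρ1 hω hM)
  have htc : ∀ n, tc ψ n = ∑' k, tc φ k * tc (fun z => ω z ^ k) n := by
    refine tc_unique (c := fun n => ∑' k, tc φ k * tc (fun z => ω z ^ k) n) hρ0 ?_
    intro z hz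
    have hz1 : z ∈ ball (0:ℂ) 1 := ball_subset_ball ρ1.le hz
    refine d1 z hz (fun k => ω z ^ k) (ψ z) (fun k => tc_hasSum (hωp k) hz1) ?_
    rw [hψ z hz1]
    exact tc_hasSum hφ (by simpa using hb z hz1)
  unfold MM
  simp only [htc]
  exact ⟨d2, d3⟩

lemma cb1 {Y : Type*} [NormedAddCommGroup Y] [NormedSpace ℂ Y] {k : ℂ → Y} {N M : ℝ} (hN : 0 < N)
    (hk : DifferentiableOn ℂ k (ball 0 N)) (hM : ∀ z ∈ ball (0:ℂ) N, ‖k z‖ ≤ M) :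
    ‖deriv k 0‖ ≤ 2 * M / N := by
  refine Complex.norm_deriv_le_div_of_mapsTo_ball hk ?_ hN
  intro z hz
  rw [mem_closedBall, dist_eq_norm]
  have := norm_sub_le (k z) (k 0)
  linarith [hM z hz, hM 0 (by simpa using hN)]

lemma cb1' {Y : Type*} [NormedAddCommGroup Y] [NormedSpace ℂ Y] {k : ℂ → Y} {N M : ℝ}
    (hk : DifferentiableOn ℂ k (ball 0 N)) (hM : ∀ z ∈ ball (0:ℂ) N, ‖k z‖ ≤ M)
    {z : ℂ} (hz : z ∈ ball (0:ℂ) N) : ‖dslope k 0 z‖ ≤ 2 * M / N := by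
  refine Complex.norm_dslope_le_div_of_mapsTo_ball hk ?_ hz
  intro w hw
  rw [mem_closedBall, dist_eq_norm]
  have := norm_sub_le (k w) (k 0)
  have hN : 0 < N := pos_of_mem_ball hw
  linarith [hM w hw, hM 0 (by simpa using hN)]

lemma cb2 {Y : Type*} [NormedAddCommGroup Y] [NormedSpace ℂ Y] [CompleteSpace Y] {k : ℂ → Y} {N M : ℝ} (hN : 1 < N)
    (hk : DifferentiableOn ℂ k (ball 0 N)) (hM : ∀ z ∈ ball (0:ℂ) N, ‖k z‖ ≤ M) :
    ‖k 1 - k 0 - deriv k 0‖ ≤ 4 * M / N ^ 2 := by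
  have h1 : DifferentiableOn ℂ (dslope k 0) (ball 0 N) :=
    (Complex.differentiableOn_dslope (ball_mem_nhds 0 (by linarith))).2 hk
  have h2 := cb1' h1 (fun z hz => cb1' hk hM hz) (z := 1) (by simpa using hN)
  have e : dslope (dslope k 0) 0 1 = k 1 - k 0 - deriv k 0 := by
    rw [dslope_of_ne _ one_ne_zero, slope_def_module, dslope_of_ne _ one_ne_zero, dslope_same, slope_def_module]
    simp
  rw [e] at h2
  refine h2.trans (le_of_eq ?_)
  field_simp; ring

section
variable {X Y : Type*} [NormedAddCommGroup X] [NormedSpace ℂ X] [NormedAddCommGroup Y] [NormedSpace ℂ Y]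

lemma line_hasDeriv {f : X → Y} {y v : X} {ζ : ℂ} (h : DifferentiableAt ℂ f (y + ζ • v)) :
    HasDerivAt (fun ζ : ℂ => f (y + ζ • v)) (fderiv ℂ f (y + ζ • v) v) ζ := by
  have h1 : HasDerivAt (fun ζ : ℂ => y + ζ • v) v ζ := by
    simpa using ((hasDerivAt_id ζ).smul_const v).const_add y
  exact h.hasFDerivAt.comp_hasDerivAt ζ h1

lemma mem_line {y v : X} {ζ : ℂ} {δ : ℝ} (hv : v ≠ 0) (hz : ζ ∈ ball (0:ℂ) (δ / ‖v‖)) : y + ζ • v ∈ ball y δ := by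
  rw [mem_ball_zero_iff, lt_div_iff₀ (norm_pos_iff.2 hv)] at hz
  simpa [mem_ball, dist_eq_norm, norm_smul] using hz

lemma bb1 {f : X → Y} {y : X} {δ M : ℝ} (hδ : 0 < δ) (hf : DifferentiableOn ℂ f (ball y (2*δ)))
    (hM : ∀ z ∈ ball y (2*δ), ‖f z‖ ≤ M) (v : X) : ‖fderiv ℂ f y v‖ ≤ M * ‖v‖ / δ := by
  by_cases hv : v = 0
  · subst hv; simp
  have hv' := norm_pos_iff.2 hv
  have hd : ∀ ζ ∈ ball (0:ℂ) (2*δ/‖v‖), HasDerivAt (fun ζ : ℂ => f (y + ζ • v)) (fderiv ℂ f (y + ζ • v) v) ζ :=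
    fun ζ hζ => line_hasDeriv ((hf _ (mem_line hv hζ)).differentiableAt (isOpen_ball.mem_nhds (mem_line hv hζ)))
  have hp : 0 < 2*δ/‖v‖ := by positivity
  have := cb1 hp (fun ζ hζ => (hd ζ hζ).differentiableAt.differentiableWithinAt) (fun ζ hζ => hM _ (mem_line hv hζ))
  rw [(hd 0 (by simpa using hp)).deriv] at this
  simp only [zero_smul, add_zero] at this
  refine this.trans (le_of_eq ?_)
  field_simp

lemma bb2 [CompleteSpace Y] {f : X → Y} {y : X} {δ M : ℝ} (hδ : 0 < δ) (hf : DifferentiableOn ℂ f (ball y (2*δ)))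
    (hM : ∀ z ∈ ball y (2*δ), ‖f z‖ ≤ M) {v : X} (hvd : ‖v‖ < 2*δ) :
    ‖f (y+v) - f y - fderiv ℂ f y v‖ ≤ M * ‖v‖^2 / δ^2 := by
  by_cases hv : v = 0
  · subst hv; simp
  have hv' := norm_pos_iff.2 hv
  have hd : ∀ ζ ∈ ball (0:ℂ) (2*δ/‖v‖), HasDerivAt (fun ζ : ℂ => f (y + ζ • v)) (fderiv ℂ f (y + ζ • v) v) ζ :=
    fun ζ hζ => line_hasDeriv ((hf _ (mem_line hv hζ)).differentiableAt (isOpen_ball.mem_nhds (mem_line hv hζ)))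
  have hp : 0 < 2*δ/‖v‖ := by positivity
  have := cb2 (by rwa [one_lt_div hv']) (fun ζ hζ => (hd ζ hζ).differentiableAt.differentiableWithinAt) (fun ζ hζ => hM _ (mem_line hv hζ))
  rw [(hd 0 (by simpa using hp)).deriv] at this
  simp only [zero_smul, add_zero, one_smul] at this
  refine this.trans (le_of_eq ?_)
  field_simp
  ring

lemma sub_b {x y : X} {δ : ℝ} (hy : y ∈ ball x (2*δ)) : ball y (2*δ) ⊆ ball x (4*δ) := by
  apply ball_subset_ball'
  rw [mem_ball] at hy; linarith

lemma bb3 [CompleteSpace Y] {f : X → Y} {x : X} {δ M : ℝ} (hδ : 0 < δ) (hf : DifferentiableOn ℂ f (ball x (4*δ)))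
    (hM : ∀ z ∈ ball x (4*δ), ‖f z‖ ≤ M) (h v : X) :
    DifferentiableOn ℂ (fun ζ : ℂ => fderiv ℂ f (x + ζ • v) h) ((fun ζ : ℂ => x + ζ • v) ⁻¹' ball x (2*δ)) := by
  have hc : Continuous (fun ζ : ℂ => x + ζ • v) := by fun_prop
  have hU := isOpen_ball.preimage hc (t := ball x (2*δ))
  have hM0 : 0 ≤ M := (norm_nonneg _).trans (hM x (by simp; linarith))
  have hsm : ∀ᶠ η : ℂ in nhdsWithin 0 {0}ᶜ, η ≠ 0 ∧ ‖η • h‖ < 2*δ := by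
    refine (eventually_mem_nhdsWithin).and ?_
    have : Filter.Tendsto (fun η : ℂ => ‖η • h‖) (nhds 0) (nhds 0) := by
      have : Continuous (fun η : ℂ => ‖η • h‖) := by fun_prop
      simpa using this.tendsto 0
    exact (this.eventually (gt_mem_nhds (by linarith))).filter_mono nhdsWithin_le_nhds
  refine TendstoLocallyUniformlyOn.differentiableOn (φ := nhdsWithin (0:ℂ) {0}ᶜ)
    (F := fun (η : ℂ) (ζ : ℂ) => η⁻¹ • (f ((x + η • h) + ζ • v) - f (x + ζ • v))) ?_ ?_ hU
  · apply TendstoUniformlyOn.tendstoLocallyUniformlyOn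
    rw [Metric.tendstoUniformlyOn_iff]
    intro ε hε
    have : ∀ᶠ η : ℂ in nhdsWithin 0 {0}ᶜ, ‖η‖ * (M * ‖h‖^2/δ^2) < ε := by
      have : Filter.Tendsto (fun η : ℂ => ‖η‖ * (M * ‖h‖^2/δ^2)) (nhds 0) (nhds 0) := by
        have : Continuous (fun η : ℂ => ‖η‖ * (M * ‖h‖^2/δ^2)) := by fun_prop
        simpa using this.tendsto 0
      exact (this.eventually (gt_mem_nhds hε)).filter_mono nhdsWithin_le_nhds
    filter_upwards [this, hsm] with η h1 ⟨h2, h3⟩ ζ hζ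
    refine lt_of_le_of_lt ?_ h1
    have hb := bb2 hδ (hf.mono (sub_b hζ)) (fun z hz => hM z (sub_b hζ hz)) h3
    rw [dist_comm, dist_eq_norm]
    have e : η⁻¹ • (f ((x + η • h) + ζ • v) - f (x + ζ • v)) - fderiv ℂ f (x + ζ • v) h
        = η⁻¹ • (f ((x + ζ • v) + η • h) - f (x + ζ • v) - fderiv ℂ f (x + ζ • v) (η • h)) := by
      rw [map_smul, smul_sub η⁻¹ (_ - _), smul_smul, inv_mul_cancel₀ h2, one_smul, add_right_comm]
    rw [e, norm_smul, norm_inv, inv_mul_le_iff₀ (norm_pos_iff.2 h2)]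
    refine hb.trans (le_of_eq ?_)
    rw [norm_smul]; ring
  · filter_upwards [hsm] with η ⟨h2, h3⟩ ζ hζ
    have hζ' := sub_b hζ
    have m1 : (x + η • h) + ζ • v ∈ ball x (4*δ) := hζ' (by
      rw [mem_ball, dist_eq_norm]
      have : x + η • h + ζ • v - (x + ζ • v) = η • h := by abel
      simp only [this]; exact h3)
    have m2 : x + ζ • v ∈ ball x (4*δ) := hζ' (mem_ball_self (by linarith))
    have d1 := (line_hasDeriv ((hf _ m1).differentiableAt (isOpen_ball.mem_nhds m1))).differentiableAt
    have d2 := (line_hasDeriv ((hf _ m2).differentiableAt (isOpen_ball.mem_nhds m2))).differentiableAt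
    exact ((d1.sub d2).const_smul η⁻¹).differentiableWithinAt

def mixd (f : X → Y) (x h v : X) : Y := deriv (fun ζ : ℂ => fderiv ℂ f (x + ζ • v) h) 0

lemma mixd_hasDeriv [CompleteSpace Y] {f : X → Y} {x : X} {δ M : ℝ} (hδ : 0 < δ) (hf : DifferentiableOn ℂ f (ball x (4*δ)))
    (hM : ∀ z ∈ ball x (4*δ), ‖f z‖ ≤ M) (h v : X) :
    HasDerivAt (fun ζ : ℂ => fderiv ℂ f (x + ζ • v) h) (mixd f x h v) 0 := by
  have hc : Continuous (fun ζ : ℂ => x + ζ • v) := by fun_prop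
  have hU := isOpen_ball.preimage hc (t := ball x (2*δ))
  exact ((bb3 hδ hf hM h v).differentiableAt (hU.mem_nhds (by simp [hδ]))).hasDerivAt

lemma mixd_bound [CompleteSpace Y] {f : X → Y} {x : X} {δ M : ℝ} (hδ : 0 < δ) (hf : DifferentiableOn ℂ f (ball x (4*δ)))
    (hM : ∀ z ∈ ball x (4*δ), ‖f z‖ ≤ M) (h v : X) :
    ‖mixd f x h v‖ ≤ M / δ^2 * ‖h‖ * ‖v‖ := by
  by_cases hv : v = 0
  · subst hv; simp [mixd]
  have hv' := norm_pos_iff.2 hv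
  have hp : 0 < 2*δ/‖v‖ := by positivity
  have hs : ball (0:ℂ) (2*δ/‖v‖) ⊆ ((fun ζ : ℂ => x + ζ • v) ⁻¹' ball x (2*δ)) := fun ζ hζ => mem_line hv hζ
  refine (cb1 hp ((bb3 hδ hf hM h v).mono hs) (M := M * ‖h‖/δ) ?_).trans (le_of_eq ?_)
  · intro ζ hζ
    exact bb1 hδ (hf.mono (sub_b (hs hζ))) (fun z hz => hM z (sub_b (hs hζ) hz)) h
  · field_simp

lemma mixd_err [CompleteSpace Y] {f : X → Y} {x : X} {δ M : ℝ} (hδ : 0 < δ) (hf : DifferentiableOn ℂ f (ball x (4*δ)))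
    (hM : ∀ z ∈ ball x (4*δ), ‖f z‖ ≤ M) {h : X} (hh : ‖h‖ < δ) (v : X) :
    ‖fderiv ℂ f (x+h) v - fderiv ℂ f x v - mixd f x h v‖ ≤ M / δ^3 * ‖h‖^2 * ‖v‖ := by
  by_cases hv : v = 0
  · subst hv; simp [mixd]
  have hv' := norm_pos_iff.2 hv
  have hp : 0 < 2*δ/‖v‖ := by positivity
  have hs : ball (0:ℂ) (2*δ/‖v‖) ⊆ ((fun ζ : ℂ => x + ζ • v) ⁻¹' ball x (2*δ)) := fun ζ hζ => mem_line hv hζ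
  have m1 : ∀ ζ ∈ ball (0:ℂ) (2*δ/‖v‖), (x + h) + ζ • v ∈ ball x (4*δ) := fun ζ hζ => sub_b (hs hζ) (by
      rw [mem_ball, dist_eq_norm]; simp only []
      have : x + h + ζ • v - (x + ζ • v) = h := by abel
      rw [this]; linarith)
  have m2 : ∀ ζ ∈ ball (0:ℂ) (2*δ/‖v‖), x + ζ • v ∈ ball x (4*δ) := fun ζ hζ => sub_b (hs hζ) (mem_ball_self (by linarith))
  have d1 := fun ζ hζ => (line_hasDeriv ((hf _ (m1 ζ hζ)).differentiableAt (isOpen_ball.mem_nhds (m1 ζ hζ))))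
  have d2 := fun ζ hζ => (line_hasDeriv ((hf _ (m2 ζ hζ)).differentiableAt (isOpen_ball.mem_nhds (m2 ζ hζ))))
  have h00 : (0:ℂ) ∈ ball (0:ℂ) (2*δ/‖v‖) := by simpa using hp
  have hD := ((d1 0 h00).sub (d2 0 h00)).sub (mixd_hasDeriv hδ hf hM h v)
  have hdo : DifferentiableOn ℂ (fun ζ : ℂ => f ((x+h) + ζ • v) - f (x + ζ • v) - fderiv ℂ f (x + ζ • v) h) (ball 0 (2*δ/‖v‖)) :=
    fun ζ hζ => (((d1 ζ hζ).differentiableAt.differentiableWithinAt).sub (d2 ζ hζ).differentiableAt.differentiableWithinAt).sub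
      ((bb3 hδ hf hM h v).mono hs ζ hζ)
  have := cb1 hp hdo (M := M * ‖h‖^2/δ^2) (by
    intro ζ hζ
    have := bb2 hδ (hf.mono (sub_b (hs hζ))) (fun z hz => hM z (sub_b (hs hζ) hz)) (v := h) (by linarith)
    simp only at this
    rwa [add_right_comm] at this)
  have e : deriv (fun ζ : ℂ => f ((x+h) + ζ • v) - f (x + ζ • v) - fderiv ℂ f (x + ζ • v) h) 0 = _ := hD.deriv
  rw [e] at this
  simp only [zero_smul, add_zero] at this
  refine this.trans (le_of_eq ?_)
  field_simp

lemma mixd_symm [CompleteSpace Y] {f : X → Y} {x : X} {δ M : ℝ} (hδ : 0 < δ) (hf : DifferentiableOn ℂ f (ball x (4*δ)))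
    (hM : ∀ z ∈ ball x (4*δ), ‖f z‖ ≤ M) (h v : X) : mixd f x v h = mixd f x h v := by
  have hsm : ∀ c : ℂ, mixd f x (c • h) v = c • mixd f x h v := by
    intro c
    have := (mixd_hasDeriv hδ hf hM h v).const_smul c
    rw [← this.deriv]; unfold mixd; congr 1; ext ζ; simp
  have h1 : HasFDerivAt (fun t : ℂ => fderiv ℂ f (x + t • h) v - fderiv ℂ f x v - t • mixd f x h v) (0 : ℂ →L[ℂ] Y) 0 := by
    refine Asymptotics.IsBigO.hasFDerivAt (n := 2) ?_ (by norm_num)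
    refine Asymptotics.IsBigO.of_bound (M / δ^3 * ‖h‖^2 * ‖v‖) ?_
    have : Filter.Tendsto (fun η : ℂ => ‖η • h‖) (nhds 0) (nhds 0) := by
      have : Continuous (fun η : ℂ => ‖η • h‖) := by fun_prop
      simpa using this.tendsto 0
    filter_upwards [this.eventually (gt_mem_nhds hδ)] with t ht
    have := mixd_err hδ hf hM ht v
    rw [hsm] at this
    refine this.trans (le_of_eq ?_)
    rw [norm_smul]; simp; ring
  have h2 := h1.hasDerivAt
  have h3 := (((mixd_hasDeriv hδ hf hM v h).sub_const (fderiv ℂ f x v)).sub ((hasDerivAt_id (0:ℂ)).smul_const (mixd f x h v)))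
  have := h2.unique h3
  simp only [zero_apply, one_smul] at this
  exact sub_eq_zero.1 this.symm

lemma fderiv_differentiableAt [CompleteSpace Y] {f : X → Y} {x : X} {δ M : ℝ} (hδ : 0 < δ) (hf : DifferentiableOn ℂ f (ball x (4*δ)))
    (hM : ∀ z ∈ ball x (4*δ), ‖f z‖ ≤ M) : DifferentiableAt ℂ (fderiv ℂ f) x := by
  have ha : ∀ h h' v : X, mixd f x (h + h') v = mixd f x h v + mixd f x h' v := by
    intro h h' v
    have := (mixd_hasDeriv hδ hf hM h v).add (mixd_hasDeriv hδ hf hM h' v)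
    rw [← this.deriv]; unfold mixd; congr 1; ext ζ; simp
  have hsm : ∀ (c : ℂ) (h v : X), mixd f x (c • h) v = c • mixd f x h v := by
    intro c h v
    have := (mixd_hasDeriv hδ hf hM h v).const_smul c
    rw [← this.deriv]; unfold mixd; congr 1; ext ζ; simp
  have hs := mixd_symm hδ hf hM
  let B0 : X →ₗ[ℂ] X →ₗ[ℂ] Y := LinearMap.mk₂ ℂ (mixd f x) ha hsm
    (fun h v v' => by rw [hs, ha, hs, hs v']) (fun c h v => by rw [hs, hsm, hs])
  let B := B0.mkContinuous₂ (M / δ^2) (fun h v => mixd_bound hδ hf hM h v)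
  have hB : ∀ h v, B h v = mixd f x h v := fun h v => rfl
  have hM0 : 0 ≤ M := (norm_nonneg _).trans (hM x (by simp; linarith))
  have h1 : HasFDerivAt (fun y => fderiv ℂ f y - fderiv ℂ f x - B (y - x)) (0 : X →L[ℂ] X →L[ℂ] Y) x := by
    refine Asymptotics.IsBigO.hasFDerivAt (n := 2) ?_ (by norm_num)
    refine Asymptotics.IsBigO.of_bound (M / δ^3) ?_
    filter_upwards [ball_mem_nhds x hδ] with y hy
    rw [mem_ball, dist_eq_norm] at hy
    rw [norm_pow, norm_norm]
    refine ContinuousLinearMap.opNorm_le_bound _ (by positivity) (fun v => ?_)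
    have := mixd_err hδ hf hM hy v
    rw [add_sub_cancel] at this
    rw [_root_.sub_apply, _root_.sub_apply, hB]
    exact this
  have h2 : HasFDerivAt (fun y => B (y - x)) B x := by
    exact B.hasFDerivAt.comp x ((hasFDerivAt_id x).sub_const x)
  have h3 := ((h1.add h2).add_const (fderiv ℂ f x)).differentiableAt
  refine h3.congr_of_eventuallyEq (Filter.Eventually.of_forall fun y => ?_)
  simp
end

lemma fderiv_diffOn {X Y : Type*} [NormedAddCommGroup X] [NormedSpace ℂ X] [NormedAddCommGroup Y] [NormedSpace ℂ Y]
    [CompleteSpace Y] {f : X → Y} {s : Set X} (hs : IsOpen s) (hf : DifferentiableOn ℂ f s) :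
    DifferentiableOn ℂ (fderiv ℂ f) s := by
  intro x hx
  have hc := (hf.continuousOn.continuousAt (hs.mem_nhds hx)).norm
  have : ∀ᶠ y in nhds x, ‖f y‖ < ‖f x‖ + 1 ∧ y ∈ s :=
    (hc.eventually (gt_mem_nhds (lt_add_one _))).and (hs.mem_nhds hx)
  obtain ⟨ε, hε, hb⟩ := Metric.eventually_nhds_iff_ball.1 this
  have e : 4 * (ε/4) = ε := by ring
  exact (fderiv_differentiableAt (δ := ε/4) (M := ‖f x‖+1) (by linarith)
    (by rw [e]; exact hf.mono (fun y hy => (hb y hy).2)) (by rw [e]; exact fun y hy => (hb y hy).1.le)).differentiableWithinAt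

universe u
lemma banach_contDiff {X : Type u} [NormedAddCommGroup X] [NormedSpace ℂ X] {s : Set X} (hs : IsOpen s) (n : ℕ) :
    ∀ {Y : Type u} [NormedAddCommGroup Y] [NormedSpace ℂ Y] [CompleteSpace Y] {f : X → Y} (_ : DifferentiableOn ℂ f s),
    ContDiffOn ℂ n f s := by
  induction n with
  | zero => intro Y _ _ _ f hf; exact contDiffOn_zero.2 hf.continuousOn
  | succ n ih =>
    intro Y _ _ _ f hf
    push_cast
    rw [contDiffOn_succ_iff_fderiv_of_isOpen hs]
    exact ⟨hf, by simp, ih (fderiv_diffOn hs hf)⟩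

lemma iter_line {X : Type u} [NormedAddCommGroup X] [NormedSpace ℂ X] [CompleteSpace X] {G : X → X}
    (hG : DifferentiableOn ℂ G (ball 0 1)) (n : ℕ) (x : X) :
    iteratedFDeriv ℂ n G 0 (fun _ => x) = iteratedDeriv n (fun z : ℂ => G (z • x)) 0 := by
  let L : ℂ →L[ℂ] X := ContinuousLinearMap.toSpanSingleton ℂ x
  have ho : IsOpen (L ⁻¹' ball 0 1) := isOpen_ball.preimage L.continuous
  have h0 : (0:ℂ) ∈ L ⁻¹' ball 0 1 := by simp
  have := L.iteratedFDerivWithin_comp_right (banach_contDiff isOpen_ball n hG) isOpen_ball.uniqueDiffOn ho.uniqueDiffOn h0 le_rfl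
  rw [iteratedFDerivWithin_of_isOpen n ho h0, iteratedFDerivWithin_of_isOpen n isOpen_ball h0] at this
  have e : (fun z : ℂ => G (z • x)) = G ∘ L := by ext z; simp [L]
  rw [iteratedDeriv_eq_iteratedFDeriv, e, this]
  simp [L]

lemma smul_mem {X : Type*} [NormedAddCommGroup X] [NormedSpace ℂ X] {u : X} (hu : ‖u‖ = 1) {z : ℂ}
    (hz : z ∈ ball (0:ℂ) 1) : z • u ∈ ball (0:X) 1 := by
  simpa [norm_smul, hu] using hz

lemma slice_diff {X : Type*} [NormedAddCommGroup X] [NormedSpace ℂ X] {u : X} (hu : ‖u‖ = 1) {Y : Type*}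
    [NormedAddCommGroup Y] [NormedSpace ℂ Y] {f : X → Y}
    (hf : DifferentiableOn ℂ f (ball (0 : X) 1)) : DifferentiableOn ℂ (fun z : ℂ => f (z • u)) (ball 0 1) :=
  hf.comp ((differentiable_id.smul_const u).differentiableOn) (fun _ hz => smul_mem hu hz)

lemma slice {X : Type*} [NormedAddCommGroup X] [NormedSpace ℂ X]
    {a : X} {f : X → ℂ} (hf : DifferentiableOn ℂ f (ball (0 : X) 1)) {F : X → X}
    (hF : ∀ x ∈ ball (0 : X) 1, F x = a + f x • x) (hbi : IsBiholoOn F (ball (0 : X) 1))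
    {u : X} (hu : ‖u‖ = 1) :
    f 0 ≠ 0 ∧ ∃ γ, Gam2 γ ∧ ∀ z ∈ ball (0:ℂ) 1, f (z • u) = f 0 * γ z ^ 2 := by
  obtain ⟨-, hinj, g₀, hg, hgF⟩ := hbi
  have hu0 : u ≠ 0 := by rintro rfl; simp at hu
  set φ : ℂ → ℂ := fun z => z * f (z • u) with hφdef
  have hh : DifferentiableOn ℂ (fun z : ℂ => f (z • u)) (ball 0 1) := slice_diff hu hf
  have hφd : DifferentiableOn ℂ φ (ball 0 1) := differentiableOn_id.mul hh
  have hφ : ∀ z ∈ ball (0:ℂ) 1, F (z • u) = a + φ z • u := by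
    intro z hz
    rw [hF _ (smul_mem hu hz), smul_smul, mul_comm]
  have hφi : InjOn φ (ball 0 1) := by
    intro z hz w hw e
    have h1 : F (z • u) = F (w • u) := by rw [hφ z hz, hφ w hw, e]
    exact smul_left_injective ℂ hu0 (hinj (smul_mem hu hz) (smul_mem hu hw) h1)
  obtain ⟨ℓ, -, hℓ⟩ := exists_dual_vector ℂ u (norm_ne_zero_iff.2 hu0)
  have hℓu : ℓ u = 1 := by rw [hℓ, hu]; simp
  have hO := open_image hφd hφi subset_rfl isOpen_ball
  have h00 : (0:ℂ) ∈ ball (0:ℂ) 1 := by simp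
  have hk : DifferentiableOn ℂ (fun w : ℂ => ℓ (g₀ (a + w • u))) (φ '' ball 0 1) := by
    refine ℓ.differentiable.comp_differentiableOn (hg.comp ?_ ?_)
    · exact ((differentiable_id.smul_const u).const_add a).differentiableOn
    · rintro _ ⟨z, hz, rfl⟩
      exact ⟨z • u, smul_mem hu hz, hφ z hz⟩
  have hφ' : ∀ z ∈ ball (0:ℂ) 1, deriv φ z ≠ 0 := by
    intro z hz h0
    have d1 : HasDerivAt φ (deriv φ z) z := (hφd.differentiableAt (isOpen_ball.mem_nhds hz)).hasDerivAt
    have d2 := (hk.differentiableAt (hO.mem_nhds ⟨z, hz, rfl⟩)).hasDerivAt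
    have d3 := HasDerivAt.comp z d2 d1
    have d4 : HasDerivAt (id : ℂ → ℂ) _ z := d3.congr_of_eventuallyEq (by
      filter_upwards [isOpen_ball.mem_nhds hz] with w hw
      simp only [Function.comp, ← hφ w hw, hgF _ (smul_mem hu hw), map_smul, hℓu, id]
      simp)
    have := d4.unique (hasDerivAt_id z)
    rw [h0] at this; simp at this
  have hf0 : f 0 ≠ 0 := by
    have d1 : HasDerivAt φ (1 * f ((0:ℂ) • u) + 0 * deriv (fun z : ℂ => f (z • u)) 0) 0 :=
      (hasDerivAt_id (0:ℂ)).mul (hh.differentiableAt (isOpen_ball.mem_nhds h00)).hasDerivAt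
    have := hφ' 0 h00
    rw [d1.deriv] at this
    simpa using this
  have hne : ∀ z ∈ ball (0:ℂ) 1, f (z • u) ≠ 0 := by
    intro z hz e
    by_cases z0 : z = 0
    · subst z0; simp at e; exact hf0 e
    · exact z0 (hφi hz h00 (by simp [hφdef, e]))
  obtain ⟨q, hq, hq0, hqe⟩ := log_lemma hh hne
  refine ⟨hf0, fun z => Complex.exp (q z / 2), ?_, ?_⟩
  swap
  · intro z hz
    rw [← Complex.exp_nat_mul, hqe z hz]
    simp only [zero_smul]; congr 2; push_cast; ring
  have key : ∀ z ∈ ball (0:ℂ) 1, z * Complex.exp (q z / 2) ^ 2 = (f 0)⁻¹ * φ z := by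
    intro z hz
    have : Complex.exp (q z / 2) ^ 2 = Complex.exp (q z) := by
      rw [← Complex.exp_nat_mul]; congr 1; push_cast; ring
    simp only [hφdef]
    rw [this, hqe z hz]
    simp only [zero_smul]
    field_simp
  refine { diff := ?_, one := ?_, ne := ?_, inj := ?_, dne := ?_ }
  · exact (hq.div_const 2).cexp
  · simp [hq0]
  · intro z _; exact Complex.exp_ne_zero _
  · intro z hz w hw e
    simp only [key z hz, key w hw] at e
    exact hφi hz hw (mul_left_cancel₀ (inv_ne_zero hf0) e)
  · intro z hz
    have d1 : HasDerivAt φ (deriv φ z) z := (hφd.differentiableAt (isOpen_ball.mem_nhds hz)).hasDerivAt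
    have d2 := (d1.const_mul (f 0)⁻¹).congr_of_eventuallyEq (f₁ := fun z => z * Complex.exp (q z / 2) ^ 2) (by
      filter_upwards [isOpen_ball.mem_nhds hz] with w hw
      exact key w hw)
    rw [d2.deriv]
    exact mul_ne_zero (inv_ne_zero hf0) (hφ' z hz)

lemma image_ball {X : Type*} [NormedAddCommGroup X] [NormedSpace ℂ X]
    {a : X} {f : X → ℂ} (hf : DifferentiableOn ℂ f (ball (0 : X) 1)) {F : X → X}
    (hF : ∀ x ∈ ball (0 : X) 1, F x = a + f x • x) (hbi : IsBiholoOn F (ball (0 : X) 1)) :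
    ball a (‖f 0‖/4) ⊆ F '' ball 0 1 := by
  intro p hp
  by_cases hpa : p = a
  · refine ⟨0, by simp, ?_⟩
    rw [hF 0 (by simp)]; simp [hpa]
  have hpn : 0 < ‖p - a‖ := norm_pos_iff.2 (sub_ne_zero.2 hpa)
  set v : X := ((‖p - a‖ : ℂ))⁻¹ • (p - a) with hv
  have hv1 : ‖v‖ = 1 := by
    rw [hv, norm_smul, norm_inv, Complex.norm_real, norm_norm, inv_mul_cancel₀ hpn.ne']
  have hpv : p = a + (‖p - a‖ : ℂ) • v := by
    rw [hv, smul_smul, mul_inv_cancel₀ (by exact_mod_cast hpn.ne'), one_smul]; abel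
  obtain ⟨hf0, γ, hγ, e⟩ := slice hf hF hbi hv1
  by_contra hcon
  have := koebe hγ.toGam (w := (‖p - a‖ : ℂ) / f 0) (by
    intro z hz he
    apply hcon
    refine ⟨z • v, smul_mem hv1 hz, ?_⟩
    rw [hF _ (smul_mem hv1 hz), e z hz, hpv, smul_smul]
    congr 2
    rw [eq_div_iff hf0] at he
    rw [← he]; ring)
  rw [norm_div, Complex.norm_real, norm_norm, le_div_iff₀ (norm_pos_iff.2 hf0)] at this
  rw [mem_ball, dist_eq_norm] at hp
  linarith

lemma frontier_ne {X : Type*} [NormedAddCommGroup X] [NormedSpace ℂ X]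
    {F : X → X} (hbi : IsBiholoOn F (ball (0 : X) 1))
    {u : X} (hu : ‖u‖ = 1) : (frontier (F '' ball (0 : X) 1)).Nonempty := by
  obtain ⟨-, hinj, g₀, hg, hgF⟩ := hbi
  by_contra hcon
  rw [not_nonempty_iff_eq_empty, ← isClopen_iff_frontier_eq_empty] at hcon
  have huniv : F '' ball (0 : X) 1 = univ := hcon.eq_univ ⟨F 0, 0, by simp, rfl⟩
  rw [huniv] at hg
  have hgd : Differentiable ℂ g₀ := differentiableOn_univ.1 hg
  have hb : Bornology.IsBounded (range g₀) := by
    refine isBounded_ball.subset (?_ : range g₀ ⊆ ball (0:X) 1)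
    rintro _ ⟨y, rfl⟩
    obtain ⟨x, hx, rfl⟩ : y ∈ F '' ball (0 : X) 1 := by rw [huniv]; trivial
    rwa [hgF x hx]
  have h1 := hgd.apply_eq_apply_of_bounded hb (F 0) (F ((1/2:ℂ) • u))
  rw [hgF _ (by simp), hgF _ (smul_mem hu (by norm_num))] at h1
  have : ‖(1/2:ℂ) • u‖ = 0 := by rw [← h1]; simp
  rw [norm_smul, hu] at this
  norm_num at this

lemma le_dist {X : Type*} [NormedAddCommGroup X] [NormedSpace ℂ X]
    {a : X} {f : X → ℂ} (hf : DifferentiableOn ℂ f (ball (0 : X) 1)) {F : X → X}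
    (hF : ∀ x ∈ ball (0 : X) 1, F x = a + f x • x) (hbi : IsBiholoOn F (ball (0 : X) 1))
    {u : X} (hu : ‖u‖ = 1) : ‖f 0‖/4 ≤ infDist (F 0) (frontier (F '' ball (0 : X) 1)) := by
  rw [le_infDist (frontier_ne hbi hu)]
  intro p hp
  have hFa : F 0 = a := by rw [hF 0 (by simp)]; simp
  rw [hFa]
  by_contra! hlt
  have : p ∈ interior (F '' ball (0 : X) 1) :=
    mem_interior.2 ⟨_, image_ball hf hF hbi, isOpen_ball, by rwa [mem_ball, dist_comm]⟩
  exact hp.2 this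

lemma coef {X : Type*} [NormedAddCommGroup X] [NormedSpace ℂ X] [CompleteSpace X]
    {a : X} {g : X → ℂ} (hg : DifferentiableOn ℂ g (ball (0 : X) 1)) {G : X → X}
    (hG : ∀ x ∈ ball (0 : X) 1, G x = a + g x • x)
    {u : X} (hu : ‖u‖ = 1) {ρ : ℝ} (hρ : 0 < ρ) (hρ1 : ρ < 1) (n : ℕ) :
    ‖(((n+1).factorial : ℂ))⁻¹ • iteratedFDeriv ℂ (n+1) G 0 (fun _ => (ρ:ℂ) • u)‖
      = ‖tc (fun z => z * g (z • u)) (n+1)‖ * ρ ^ (n+1) := by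
  have hGd : DifferentiableOn ℂ G (ball 0 1) := by
    refine DifferentiableOn.congr (f := fun x => a + g x • x) ?_ hG
    exact (hg.smul differentiableOn_id).const_add a
  rw [iter_line hGd]
  set ψ : ℂ → ℂ := fun z => z * g (z • u) with hψ
  have hψd : DifferentiableOn ℂ ψ (ball 0 1) := differentiableOn_id.mul (slice_diff hu hg)
  set χ : ℂ → ℂ := fun z => ψ (z * ρ) with hχ
  have hm : ∀ z ∈ ball (0:ℂ) 1, z * ρ ∈ ball (0:ℂ) 1 := by
    intro z hz
    simp only [mem_ball_zero_iff, norm_mul, Complex.norm_real, Real.norm_of_nonneg hρ.le] at hz ⊢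
    nlinarith [norm_nonneg z]
  have hχd : DifferentiableOn ℂ χ (ball 0 1) :=
    hψd.comp ((differentiable_id.mul_const (ρ:ℂ)).differentiableOn) hm
  have hχtc : tc χ (n+1) = tc ψ (n+1) * (ρ:ℂ)^(n+1) := by
    refine tc_unique (c := fun n => tc ψ n * (ρ:ℂ)^n) one_pos ?_ (n+1)
    intro z hz
    refine (tc_hasSum hψd (hm z hz)).congr_fun ?_
    intro k; rw [mul_pow]; ring
  have hev : (fun z : ℂ => G (z • (ρ:ℂ) • u)) =ᶠ[nhds 0] fun z => a + χ z • u := by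
    filter_upwards [ball_mem_nhds (0:ℂ) one_pos] with z hz
    rw [smul_smul, hG _ (smul_mem hu (hm z hz)), smul_smul, mul_comm (g _)]
  rw [hev.iteratedDeriv_eq, iteratedDeriv_const_add (Nat.succ_pos n)]
  have hcd : ContDiffAt ℂ (n+1:ℕ) χ 0 := (hχd.contDiffOn isOpen_ball).contDiffAt (ball_mem_nhds 0 one_pos)
  have h2 : iteratedDeriv (n+1) (fun z => χ z • u) 0 = iteratedDeriv (n+1) χ 0 • u := by
    have := (ContinuousLinearMap.toSpanSingleton ℂ u).iteratedFDeriv_comp_left hcd le_rfl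
    rw [iteratedDeriv_eq_iteratedFDeriv, iteratedDeriv_eq_iteratedFDeriv]
    have e : (fun z => χ z • u) = (ContinuousLinearMap.toSpanSingleton ℂ u) ∘ χ := by ext z; simp
    rw [e, this]; simp
  rw [h2, smul_smul]
  have : ((n+1).factorial : ℂ)⁻¹ * iteratedDeriv (n+1) χ 0 = tc χ (n+1) := rfl
  rw [this, hχtc, norm_smul, hu, mul_one, norm_mul, norm_pow, Complex.norm_real, Real.norm_of_nonneg hρ.le]

theorem main_red {X : Type*} [NormedAddCommGroup X] [NormedSpace ℂ X] [CompleteSpace X]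
    (a : X) (f g : X → ℂ)
    (hf : DifferentiableOn ℂ f (ball (0 : X) 1))
    (hg : DifferentiableOn ℂ g (ball (0 : X) 1))
    (F G : X → X)
    (hF : ∀ x ∈ ball (0 : X) 1, F x = a + f x • x)
    (hG : ∀ x ∈ ball (0 : X) 1, G x = a + g x • x)
    (hbi : IsBiholoOn F (ball (0 : X) 1))
    (hsub : Subordinate G F)
    (r : ℝ) (hr : r ≤ 3 - 2 * Real.sqrt 2)
    (x : X) (hx : ‖x‖ = r) :
    Summable (fun s : ℕ =>
        ‖(((1 + s).factorial : ℂ))⁻¹ • iteratedFDeriv ℂ (1 + s) G 0 (fun _ => x)‖) ∧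
    (∑' s : ℕ, ‖(((1 + s).factorial : ℂ))⁻¹ • iteratedFDeriv ℂ (1 + s) G 0 (fun _ => x)‖)
      ≤ infDist (F 0) (frontier (F '' ball (0 : X) 1)) := by
  by_cases hx0 : x = 0
  · subst hx0
    have : ∀ s : ℕ, iteratedFDeriv ℂ (1 + s) G 0 (fun _ => (0:X)) = 0 := by
      intro s
      exact ContinuousMultilinearMap.map_coord_zero _ (⟨0, by omega⟩ : Fin (1+s)) rfl
    simp only [this, smul_zero, norm_zero, tsum_zero]
    exact ⟨summable_zero, infDist_nonneg⟩
  have hρ : 0 < r := by rw [← hx]; exact norm_pos_iff.2 hx0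
  have hs2 : Real.sqrt 2 ^ 2 = 2 := Real.sq_sqrt (by norm_num)
  have hs0 := Real.sqrt_nonneg 2
  have hr1 : 0.1715 < 3 - 2 * Real.sqrt 2 := by
    have : Real.sqrt 2 < 1.41425 := by rw [Real.sqrt_lt' (by norm_num)]; norm_num
    norm_num at this ⊢; linarith
  have hr2 : 3 - 2 * Real.sqrt 2 < 0.1716 := by
    have : 1.4142 < Real.sqrt 2 := by rw [Real.lt_sqrt (by norm_num)]; norm_num
    norm_num at this ⊢; linarith
  have hr3 : (3 - 2 * Real.sqrt 2)^2 = 6 * (3 - 2 * Real.sqrt 2) - 1 := by nlinarith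
  have hρ1 : r < 1 := by norm_num at hr2; linarith
  set u : X := ((r:ℂ))⁻¹ • x with hu
  have hu1 : ‖u‖ = 1 := by
    rw [hu, norm_smul, norm_inv, Complex.norm_real, Real.norm_of_nonneg hρ.le, hx, inv_mul_cancel₀ hρ.ne']
  have hxu : x = (r:ℂ) • u := by
    rw [hu, smul_smul, mul_inv_cancel₀ (by exact_mod_cast hρ.ne'), one_smul]
  clear_value u
  have hu0 : u ≠ 0 := by rintro rfl; simp at hu1
  obtain ⟨hf0, γ, hγ, e⟩ := slice hf hF hbi hu1
  obtain ⟨W, hW, hWm, hW0, hWe⟩ := hsub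
  obtain ⟨ℓ, hℓn, hℓ⟩ := exists_dual_vector ℂ u (norm_ne_zero_iff.2 hu0)
  have hℓu : ℓ u = 1 := by rw [hℓ, hu1]; simp
  set ψ : ℂ → ℂ := fun z => z * g (z • u) with hψ
  set φ : ℂ → ℂ := fun z => z * f (z • u) with hφ
  set ω : ℂ → ℂ := fun z => ℓ (W (z • u)) with hω
  have hφd : DifferentiableOn ℂ φ (ball 0 1) := differentiableOn_id.mul (slice_diff hu1 hf)
  have hωd : DifferentiableOn ℂ ω (ball 0 1) := ℓ.differentiable.comp_differentiableOn (slice_diff hu1 hW)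
  have hfne : ∀ y ∈ ball (0:X) 1, f y ≠ 0 := by
    intro y hy h0
    by_cases hy0 : y = 0
    · rw [hy0] at h0; exact hf0 h0
    · apply hy0
      refine hbi.2.1 hy (by simp) ?_
      rw [hF y hy, hF 0 (by simp), h0]; simp
  have hWu : ∀ z ∈ ball (0:ℂ) 1, f (W (z • u)) • W (z • u) = ψ z • u ∧ W (z • u) = ω z • u := by
    intro z hz
    have hzu := smul_mem hu1 hz
    have hw := hWm hzu
    have h1 := hWe _ hzu
    rw [hG _ hzu, hF _ hw, add_right_inj, smul_smul, mul_comm] at h1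
    have h2 : W (z • u) = ((f (W (z • u)))⁻¹ * ψ z) • u := by
      rw [mul_smul, h1, smul_smul, inv_mul_cancel₀ (hfne _ hw), one_smul]
    refine ⟨h1.symm, ?_⟩
    have h3 : ω z = (f (W (z • u)))⁻¹ * ψ z := by
      have := congrArg ℓ h2
      rwa [map_smul, hℓu, smul_eq_mul, mul_one] at this
    rw [h3]; exact h2
  have hωb : ∀ z ∈ ball (0:ℂ) 1, ‖ω z‖ < 1 := by
    intro z hz
    have := hWm (smul_mem hu1 hz)
    rw [(hWu z hz).2] at this
    simpa [norm_smul, hu1] using this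
  have hψφ : ∀ z ∈ ball (0:ℂ) 1, ψ z = φ (ω z) := by
    intro z hz
    obtain ⟨h1, h2⟩ := hWu z hz
    rw [h2, smul_smul] at h1
    have := smul_left_injective ℂ hu0 h1
    rw [← this, mul_comm]
  have hω0 : ω 0 = 0 := by simp [hω, hW0]
  obtain ⟨b1, b2⟩ := bohr hφd hωd hωb hω0 hψφ hr1 hr2 hr3 hρ hr
  obtain ⟨s1, s2⟩ := star_sq hγ hr1 hr2 hr3 hρ.le hr
  have hγ2 : DifferentiableOn ℂ (fun z => γ z ^ 2) (ball 0 1) := hγ.diff.pow 2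
  have hφtc : ∀ n, ‖tc φ (n+1)‖ * r^(n+1) = ‖f 0‖ * (‖tc (fun z => γ z ^ 2) n‖ * r^(n+1)) := by
    intro n
    have : tc φ (n+1) = f 0 * tc (fun z => γ z ^ 2) n := by
      rw [tc_shift (slice_diff hu1 hf)]
      refine tc_unique (c := fun n => f 0 * tc (fun z => γ z ^ 2) n) one_pos ?_ n
      intro z hz
      rw [e z hz]
      refine ((tc_hasSum hγ2 hz).mul_left (f 0)).congr_fun ?_
      intro k; ring
    rw [this, norm_mul]; ring
  have hφs : MM r φ ≤ ‖f 0‖ / 4 := by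
    unfold MM
    rw [(tc_summable hφd hρ.le hρ1).tsum_eq_zero_add, tc_zero]
    simp only [hφtc, tsum_mul_left]
    simp only [hφ, zero_mul, norm_zero, zero_add]
    nlinarith [norm_nonneg (f 0)]
  have hterm : ∀ s : ℕ, ‖(((1 + s).factorial : ℂ))⁻¹ • iteratedFDeriv ℂ (1 + s) G 0 (fun _ => x)‖
      = ‖tc ψ (s+1)‖ * r^(s+1) := by
    intro s
    rw [add_comm 1 s, hxu]
    exact coef hg hG hu1 hρ hρ1 s
  simp only [hterm]
  refine ⟨(summable_nat_add_iff 1).2 b1, ?_⟩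
  have hψs : ∑' s, ‖tc ψ (s+1)‖ * r^(s+1) = MM r ψ := by
    unfold MM
    rw [b1.tsum_eq_zero_add, tc_zero]
    simp [hψ]
  rw [hψs]
  exact b2.trans (hφs.trans (le_dist hf hF hbi hu1))

end BohrHelpers

/-- **Bohr radius for subordination.** Let `F(x) = a + f(x)·x` be biholomorphic on the unit
ball `𝔹` of a complex Banach space and let `G(x) = a + g(x)·x` be subordinate to `F`, with
`P_s(x) = (1/s!)·DˢG(0)(x,…,x)`. Then for every `x` with `‖x‖ = r ≤ 3 − 2√2`,
`Σ_{s≥1} ‖P_s(x)‖ ≤ dist(F(0), ∂F(𝔹))`. -/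
theorem stmt12 {X : Type*} [NormedAddCommGroup X] [NormedSpace ℂ X] [CompleteSpace X]
    (a : X) (f g : X → ℂ)
    (hf : DifferentiableOn ℂ f (ball (0 : X) 1))
    (hg : DifferentiableOn ℂ g (ball (0 : X) 1))
    (F G : X → X)
    (hF : ∀ x ∈ ball (0 : X) 1, F x = a + f x • x)
    (hG : ∀ x ∈ ball (0 : X) 1, G x = a + g x • x)
    (hbi : IsBiholoOn F (ball (0 : X) 1))
    (hsub : Subordinate G F)
    (r : ℝ) (hr : r ≤ 3 - 2 * Real.sqrt 2)
    (x : X) (hx : ‖x‖ = r) :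
    Summable (fun s : ℕ =>
        ‖(((1 + s).factorial : ℂ))⁻¹ • iteratedFDeriv ℂ (1 + s) G 0 (fun _ => x)‖) ∧
    (∑' s : ℕ, ‖(((1 + s).factorial : ℂ))⁻¹ • iteratedFDeriv ℂ (1 + s) G 0 (fun _ => x)‖)
      ≤ infDist (F 0) (frontier (F '' ball (0 : X) 1)) := by
  exact main_red a f g hf hg F G hF hG hbi hsub r hr x hx
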